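/- There exist universal constants c, C > 0 and c₂ ∈ (0,1) such that the following holds. Let X be an isotropic random vector in ℝⁿ with log-concave density which is ψ_α (α ∈ [1,2]) with constant b_α, and let A be an n×n real matrix with ‖A‖_HS² = n. Set ñ := n/(‖A‖_op²·b_α²). Then P(|AX| ≤ (1−t)√n) ≤ C·exp(−c·ñ^{α/2}·max(t^{2+α}, log(c₂/(1−t)))) for all t ∈ [0,1). -/

import Mathlib

open MeasureTheory ProbabilityTheory Real
open scoped ENNReal RealInnerProductSpace Pointwise NNReal

noncomputable section

/-- A nonnegative function is log-concave if `f(λx+(1-λ)y) ≥ f(x)^λ f(y)^{1-λ}`. -/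
def IsLogConcaveFn {E : Type*} [AddCommGroup E] [Module ℝ E] (f : E → ℝ) : Prop :=
  (∀ x, 0 ≤ f x) ∧
  ∀ x y : E, ∀ l : ℝ, 0 ≤ l → l ≤ 1 →
    f x ^ l * f y ^ (1 - l) ≤ f (l • x + (1 - l) • y)

/-- Hilbert-Schmidt (Frobenius) norm of a matrix. -/
def hsNorm {n : ℕ} (A : Matrix (Fin n) (Fin n) ℝ) : ℝ :=
  Real.sqrt (∑ i, ∑ j, (A i j) ^ 2)

/-- Operator norm of a matrix acting on Euclidean space. -/
def opNorm {n : ℕ} (A : Matrix (Fin n) (Fin n) ℝ) : ℝ :=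
  ‖LinearMap.toContinuousLinearMap (Matrix.toEuclideanLin A)‖

/-- Application of a matrix to a Euclidean vector. -/
def mApp {n : ℕ} (A : Matrix (Fin n) (Fin n) ℝ) (x : EuclideanSpace ℝ (Fin n)) :
    EuclideanSpace ℝ (Fin n) := Matrix.toEuclideanLin A x

/-- The random vector `X` has density `f` with respect to Lebesgue measure. -/
def HasDensityFn {Ω : Type*} [MeasurableSpace Ω] (P : Measure Ω) {n : ℕ}
    (X : Ω → EuclideanSpace ℝ (Fin n)) (f : EuclideanSpace ℝ (Fin n) → ℝ) : Prop :=
  Measurable X ∧ Measure.map X P = volume.withDensity fun x => ENNReal.ofReal (f x)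

/-- `X` is isotropic: centered with identity covariance. -/
def Isotropic {Ω : Type*} [MeasurableSpace Ω] (P : Measure Ω) {n : ℕ}
    (X : Ω → EuclideanSpace ℝ (Fin n)) : Prop :=
  (∫ ω, X ω ∂P) = 0 ∧
  ∀ θ η : EuclideanSpace ℝ (Fin n), (∫ ω, ⟪X ω, θ⟫ * ⟪X ω, η⟫ ∂P) = ⟪θ, η⟫

/-- `X` is ψ_α with constant `b`. -/
def IsPsiAlpha {Ω : Type*} [MeasurableSpace Ω] (P : Measure Ω) {n : ℕ}
    (X : Ω → EuclideanSpace ℝ (Fin n)) (α b : ℝ) : Prop :=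
  ∀ p : ℝ, 2 ≤ p → ∀ y : EuclideanSpace ℝ (Fin n),
    (∫ ω, |⟪X ω, y⟫| ^ p ∂P) ^ (1/p) ≤ b * p ^ (1/α) * (∫ ω, ⟪X ω, y⟫ ^ 2 ∂P) ^ ((1:ℝ)/2)

/-- `G` is a standard Gaussian random vector in `ℝⁿ`. -/
def IsStdGaussian {Ω : Type*} [MeasurableSpace Ω] (P : Measure Ω) {n : ℕ}
    (G : Ω → EuclideanSpace ℝ (Fin n)) : Prop :=
  Measurable G ∧
  Measure.map G P = volume.withDensity fun x =>
    ENNReal.ofReal ((2 * π) ^ (-(n:ℝ)/2) * Real.exp (-‖x‖ ^ 2 / 2))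

/-- Surface area of the unit sphere `S^{k-1}` in `ℝᵏ`. -/
def sphereVol (k : ℕ) : ℝ := 2 * π ^ ((k : ℝ)/2) / Real.Gamma ((k : ℝ)/2)

/-- The marginal density `π_F g(x) = ∫_{F^⊥} g(x+y) dy`. -/
def marginalDensity {n : ℕ} (g : EuclideanSpace ℝ (Fin n) → ℝ)
    (F : Submodule ℝ (EuclideanSpace ℝ (Fin n))) (x : EuclideanSpace ℝ (Fin n)) : ℝ :=
  ∫ y : Fᗮ, g (x + y)

/-- `h_{k,p}(u) = vol(S^{k-1}) ∫₀^∞ t^{p+k-1} π_{u(E₀)} g(t u(θ₀)) dt`. -/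
def hkp {n : ℕ} (g : EuclideanSpace ℝ (Fin n) → ℝ)
    (E₀ : Submodule ℝ (EuclideanSpace ℝ (Fin n))) (θ₀ : EuclideanSpace ℝ (Fin n))
    (k : ℕ) (p : ℝ) (u : Matrix (Fin n) (Fin n) ℝ) : ℝ :=
  sphereVol k * ∫ t in Set.Ioi (0:ℝ), t ^ (p + (k:ℝ) - 1) *
    marginalDensity g (Submodule.map (Matrix.toEuclideanLin u) E₀) (t • mApp u θ₀)

/-- Support functional of the one-sided L_q-centroid body `Z⁺_q(w)`. -/
def suppZplus {m : ℕ} (w : EuclideanSpace ℝ (Fin m) → ℝ) (q : ℝ)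
    (y : EuclideanSpace ℝ (Fin m)) : ℝ :=
  (2 * ∫ x, (max ⟪x, y⟫ 0) ^ q * w x) ^ (1/q)

/-- Ball's body `K_q(w) = {x : q ∫₀^∞ t^{q-1} w(tx) dt ≥ 1}`. -/
def ballBody {m : ℕ} (w : EuclideanSpace ℝ (Fin m) → ℝ) (q : ℝ) :
    Set (EuclideanSpace ℝ (Fin m)) :=
  {x | 1 ≤ q * ∫ t in Set.Ioi (0:ℝ), t ^ (q-1) * w (t • x)}

/-- The one-sided L_q-centroid body `Z⁺_q(w)`, as the convex set with support
functional `suppZplus w q`. -/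
def ZplusBody {m : ℕ} (w : EuclideanSpace ℝ (Fin m) → ℝ) (q : ℝ) :
    Set (EuclideanSpace ℝ (Fin m)) :=
  {x | ∀ y, ⟪x, y⟫ ≤ suppZplus w q y}

/-- Midpoint Prékopa-Leindler property. -/
def PLProp (E : Type*) [AddCommGroup E] [Module ℝ E] [MeasureSpace E] : Prop :=
  ∀ f g h : E → ℝ≥0∞, Measurable f → Measurable g → Measurable h →
    (∀ x y, f x * g y ≤ h ((1/2:ℝ) • (x + y)) ^ 2) →
    (∫⁻ x, f x) * (∫⁻ x, g x) ≤ (∫⁻ x, h x) ^ 2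

lemma bm_vol_half (K : Set ℝ) (b : ℝ) :
    volume {y : ℝ | 2 * y - b ∈ K} = volume K / 2 := by
  have h1 : {y : ℝ | 2 * y - b ∈ K} = (fun y => 2 * y) ⁻¹' ((fun y => y + (-b)) ⁻¹' K) := by
    ext y; simp [sub_eq_add_neg]
  rw [h1, Real.volume_preimage_mul_left (by norm_num), measure_preimage_add_right]
  rw [abs_of_pos (by norm_num), ENNReal.ofReal_inv_of_pos (by norm_num)]
  rw [ENNReal.div_eq_inv_mul]; simp

lemma bm_compact (K1 K2 C : Set ℝ) (h1 : IsCompact K1) (h2 : IsCompact K2)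
    (n1 : K1.Nonempty) (n2 : K2.Nonempty) (hC : ∀ a ∈ K1, ∀ b ∈ K2, (a + b) / 2 ∈ C) :
    volume K1 + volume K2 ≤ 2 * volume C := by
  obtain ⟨a, ha, ha'⟩ := h1.exists_isGreatest n1
  obtain ⟨b, hb, hb'⟩ := h2.exists_isLeast n2
  have hm : MeasurableSet {y : ℝ | 2 * y - a ∈ K2} :=
    h2.measurableSet.preimage (by fun_prop : Measurable fun y : ℝ => 2 * y - a)
  have key := measure_union_add_inter (μ := volume) {y : ℝ | 2 * y - b ∈ K1} hm
  have hi : volume ({y : ℝ | 2 * y - b ∈ K1} ∩ {y : ℝ | 2 * y - a ∈ K2}) = 0 := by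
    refine measure_mono_null (t := {(a+b)/2}) ?_ (by simp)
    rintro y ⟨hy1, hy2⟩
    have := ha' hy1
    have := hb' hy2
    simp only [Set.mem_singleton_iff]
    linarith
  have hu : volume ({y : ℝ | 2 * y - b ∈ K1} ∪ {y : ℝ | 2 * y - a ∈ K2}) ≤ volume C := by
    apply measure_mono
    rintro y (hy | hy)
    · have := hC _ hy b hb
      simpa using this
    · have := hC a ha _ hy
      simpa using this
  rw [hi, add_zero, bm_vol_half, bm_vol_half] at key
  rw [key] at hu
  rw [← ENNReal.add_div] at hu
  rw [mul_comm]
  exact ENNReal.div_le_iff_le_mul (by simp) (by simp) |>.1 hu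

lemma bm_one (A B C : Set ℝ) (hA : MeasurableSet A) (hB : MeasurableSet B)
    (nA : A.Nonempty) (nB : B.Nonempty) (hC : ∀ a ∈ A, ∀ b ∈ B, (a + b) / 2 ∈ C) :
    volume A + volume B ≤ 2 * volume C := by
  obtain ⟨a0, ha0⟩ := nA
  obtain ⟨b0, hb0⟩ := nB
  rw [hA.measure_eq_iSup_isCompact, hB.measure_eq_iSup_isCompact]
  simp_rw [iSup_and']
  refine ENNReal.biSup_add_biSup_le' ⟨∅, by simp⟩ ⟨∅, by simp⟩ ?_
  rintro K1 ⟨s1, c1⟩ K2 ⟨s2, c2⟩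
  refine (add_le_add (measure_mono (Set.subset_insert a0 K1))
    (measure_mono (Set.subset_insert b0 K2))).trans ?_
  refine bm_compact _ _ C (c1.insert _) (c2.insert _) (by simp) (by simp) ?_
  intro a ha b hb
  refine hC a ?_ b ?_
  · rcases ha with rfl | ha
    · exact ha0
    · exact s1 ha
  · rcases hb with rfl | hb
    · exact hb0
    · exact s2 hb

lemma pl_real_norm (f g h : ℝ → ℝ) (hf : Measurable f) (hg : Measurable g) (hh : Measurable h)
    (f0 : ∀ x, 0 ≤ f x) (g0 : ∀ x, 0 ≤ g x) (h0 : ∀ x, 0 ≤ h x)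
    (f1 : ∀ x, f x ≤ 1) (g1 : ∀ x, g x ≤ 1)
    (fs : ∀ s < 1, ∃ x, s < f x) (gs : ∀ s < 1, ∃ x, s < g x)
    (H : ∀ x y, f x * g y ≤ h ((x + y) / 2) ^ 2) :
    (∫⁻ x, ENNReal.ofReal (f x)) + (∫⁻ x, ENNReal.ofReal (g x))
      ≤ 2 * ∫⁻ x, ENNReal.ofReal (h x) := by
  rw [lintegral_eq_lintegral_meas_lt _ (ae_of_all _ f0) hf.aemeasurable,
    lintegral_eq_lintegral_meas_lt _ (ae_of_all _ g0) hg.aemeasurable,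
    lintegral_eq_lintegral_meas_lt _ (ae_of_all _ h0) hh.aemeasurable]
  have mf : Measurable fun t : ℝ => volume {a | t < f a} :=
    Antitone.measurable fun s t hst => measure_mono fun a (ha : t < f a) => lt_of_le_of_lt hst ha
  have mh : Measurable fun t : ℝ => volume {a | t < h a} :=
    Antitone.measurable fun s t hst => measure_mono fun a (ha : t < h a) => lt_of_le_of_lt hst ha
  rw [← lintegral_add_left mf, ← lintegral_const_mul _ mh]
  refine setLIntegral_mono' measurableSet_Ioi fun t (ht : 0 < t) => ?_
  by_cases h1 : t < 1
  · apply bm_one _ _ _ (measurableSet_lt measurable_const hf) (measurableSet_lt measurable_const hg)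
      (fs t h1) (gs t h1)
    intro a (ha : t < f a) b (hb : t < g b)
    have := H a b
    show t < h ((a+b)/2)
    have h3 : t * t < f a * g b := mul_lt_mul'' ha hb ht.le ht.le
    refine lt_of_pow_lt_pow_left₀ 2 (h0 _) ?_
    nlinarith
  · have e1 : {a | t < f a} = ∅ := by
      ext a; simp; linarith [f1 a]
    have e2 : {a | t < g a} = ∅ := by
      ext a; simp; linarith [g1 a]
    simp [e1, e2]

lemma ennreal_amgm (a b c : ℝ≥0∞) (h : a + b ≤ 2 * c) : a * b ≤ c ^ 2 := by
  by_cases hc : c = ∞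
  · simp [hc]
  have hab : a + b ≠ ∞ := ne_top_of_le_ne_top (ENNReal.mul_ne_top (by simp) hc) h
  rw [ENNReal.add_ne_top] at hab
  lift a to ℝ≥0 using hab.1
  lift b to ℝ≥0 using hab.2
  lift c to ℝ≥0 using hc
  norm_cast at *
  have h' : (a:ℝ) + b ≤ 2 * c := by exact_mod_cast h
  have : (a:ℝ) * b ≤ c ^ 2 := by
    nlinarith [sq_nonneg ((a:ℝ) - b), a.2, b.2, c.2]
  exact_mod_cast this

lemma pl_real_bdd (f g h : ℝ → ℝ≥0∞) (hf : Measurable f) (hg : Measurable g) (hh : Measurable h)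
    (N : ℝ≥0) (f1 : ∀ x, f x ≤ N) (g1 : ∀ x, g x ≤ N)
    (H : ∀ x y, f x * g y ≤ h ((1/2:ℝ) • (x + y)) ^ 2) :
    (∫⁻ x, f x) * (∫⁻ x, g x) ≤ (∫⁻ x, h x) ^ 2 := by
  set F := ⨆ x, f x with hF
  set G := ⨆ x, g x with hG
  have Ft : F ≠ ∞ := ne_top_of_le_ne_top (by simp) (iSup_le f1)
  have Gt : G ≠ ∞ := ne_top_of_le_ne_top (by simp) (iSup_le g1)
  have fF : ∀ x, f x ≤ F := fun x => le_iSup f x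
  have gG : ∀ x, g x ≤ G := fun x => le_iSup g x
  by_cases F0 : F = 0
  · have : f = 0 := by
      ext x; simpa using (fF x).trans F0.le
    simp [this]
  by_cases G0 : G = 0
  · have : g = 0 := by
      ext x; simpa using (gG x).trans G0.le
    simp [this]
  set M : ℝ≥0∞ := (F * G) ^ (1/2 : ℝ) with hM
  have M2 : M ^ 2 = F * G := by
    rw [hM, ← ENNReal.rpow_natCast, ← ENNReal.rpow_mul]; norm_num
  have Mt : M ≠ ∞ := by
    rw [hM]; exact ENNReal.rpow_ne_top_of_nonneg (by norm_num) (ENNReal.mul_ne_top Ft Gt)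
  have M0 : M ≠ 0 := by
    intro h; rw [h] at M2; simp at M2; tauto
  have cf : ∀ x, f x / F ≤ 1 := fun x => ENNReal.div_le_of_le_mul (by simpa using fF x)
  have cg : ∀ x, g x / G ≤ 1 := fun x => ENNReal.div_le_of_le_mul (by simpa using gG x)
  have ch : ∀ x, min (h x / M) 1 ≤ 1 := fun x => min_le_right _ _
  have tf : ∀ x, f x / F ≠ ∞ := fun x => ne_top_of_le_ne_top (by simp) (cf x)
  have tg : ∀ x, g x / G ≠ ∞ := fun x => ne_top_of_le_ne_top (by simp) (cg x)
  have th : ∀ x, min (h x / M) 1 ≠ ∞ := fun x => ne_top_of_le_ne_top (by simp) (ch x)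
  have sup_aux : ∀ (f : ℝ → ℝ≥0∞) (F : ℝ≥0∞), F = ⨆ x, f x → F ≠ 0 → F ≠ ∞ →
      (∀ x, f x / F ≠ ∞) → ∀ s < (1:ℝ), ∃ x, s < (f x / F).toReal := by
    intro f F hF F0 Ft tf s hs
    by_cases s0 : s < 0
    · exact ⟨0, lt_of_lt_of_le s0 ENNReal.toReal_nonneg⟩
    push Not at s0
    have : ENNReal.ofReal s * F < F := by
      calc ENNReal.ofReal s * F < 1 * F := by
            apply ENNReal.mul_lt_mul_left F0 Ft
            exact ENNReal.ofReal_lt_one.2 hs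
        _ = F := one_mul F
    conv at this => rhs; rw [hF]
    obtain ⟨x, hx⟩ := lt_iSup_iff.1 this
    refine ⟨x, ?_⟩
    rw [← ENNReal.ofReal_lt_iff_lt_toReal s0 (tf x)]
    rwa [ENNReal.lt_div_iff_mul_lt (Or.inl F0) (Or.inl Ft)]
  have key := pl_real_norm (fun x => (f x / F).toReal) (fun x => (g x / G).toReal)
    (fun x => (min (h x / M) 1).toReal) (by fun_prop) (by fun_prop) (by fun_prop)
    (fun x => ENNReal.toReal_nonneg) (fun x => ENNReal.toReal_nonneg)
    (fun x => ENNReal.toReal_nonneg)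
    (fun x => by simpa using ENNReal.toReal_mono (by simp) (cf x))
    (fun x => by simpa using ENNReal.toReal_mono (by simp) (cg x))
    (sup_aux f F hF F0 Ft tf) (sup_aux g G hG G0 Gt tg)
    (by
      intro x y
      rw [← ENNReal.toReal_mul, ← ENNReal.toReal_pow]
      refine ENNReal.toReal_mono (ENNReal.pow_ne_top (th _)) ?_
      have e : f x / F * (g y / G) ≤ (h ((x + y) / 2) / M) ^ 2 := by
        have : f x / F * (g y / G) = f x * g y / (F * G) := by
          rw [div_eq_mul_inv, div_eq_mul_inv, div_eq_mul_inv,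
            ENNReal.mul_inv (Or.inl F0) (Or.inl Ft)]
          ring
        rw [this, div_eq_mul_inv (h _), mul_pow, ← ENNReal.inv_pow, M2, ← div_eq_mul_inv]
        apply ENNReal.div_le_div_right
        have := H x y
        rwa [show (1/2:ℝ) • (x + y) = (x + y) / 2 by rw [smul_eq_mul]; ring] at this
      have hm : (min (h ((x + y) / 2) / M) 1) ^ 2 = min ((h ((x + y) / 2) / M) ^ 2) 1 := by
        rcases le_total (h ((x + y) / 2) / M) 1 with h1 | h1
        · rw [min_eq_left h1, min_eq_left (pow_le_one₀ (by simp) h1)]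
        · rw [min_eq_right h1, min_eq_right (one_le_pow₀ h1)]; simp
      rw [hm]
      refine le_min e ?_
      calc f x / F * (g y / G) ≤ 1 * 1 := mul_le_mul' (cf x) (cg y)
        _ = 1 := by simp)
  simp_rw [fun x => ENNReal.ofReal_toReal (tf x), fun x => ENNReal.ofReal_toReal (tg x),
    fun x => ENNReal.ofReal_toReal (th x)] at key
  have key2 := ennreal_amgm _ _ _ (key.trans (mul_le_mul' le_rfl
    (lintegral_mono (fun x => min_le_left _ _))))
  simp_rw [div_eq_mul_inv] at key2
  rw [lintegral_mul_const _ hf, lintegral_mul_const _ hg, lintegral_mul_const _ hh] at key2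
  have e1 : (∫⁻ x, f x) * F⁻¹ * ((∫⁻ x, g x) * G⁻¹) * M ^ 2 = (∫⁻ x, f x) * (∫⁻ x, g x) := by
    rw [M2]
    calc _ = (∫⁻ x, f x) * (∫⁻ x, g x) * (F⁻¹ * F) * (G⁻¹ * G) := by ring
      _ = _ := by rw [ENNReal.inv_mul_cancel F0 Ft, ENNReal.inv_mul_cancel G0 Gt]; simp
  have e2 : ((∫⁻ x, h x) * M⁻¹) ^ 2 * M ^ 2 = (∫⁻ x, h x) ^ 2 := by
    rw [← mul_pow, mul_assoc, ENNReal.inv_mul_cancel M0 Mt, mul_one]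
  rw [← e1, ← e2]
  exact mul_le_mul' key2 le_rfl

lemma lintegral_min_nat_iSup {E : Type*} [MeasurableSpace E] (μ : Measure E) (f : E → ℝ≥0∞)
    (hf : Measurable f) :
    ∫⁻ x, f x ∂μ = ⨆ n : ℕ, ∫⁻ x, min (f x) n ∂μ := by
  rw [← lintegral_iSup (fun n => hf.min measurable_const)]
  · congr 1; ext x
    rw [← inf_iSup_eq, ENNReal.iSup_natCast]; simp
  · intro m n hmn x
    exact min_le_min le_rfl (by exact_mod_cast hmn)

theorem pl_real : PLProp ℝ := by
  intro f g h hf hg hh H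
  rw [lintegral_min_nat_iSup _ f hf, lintegral_min_nat_iSup _ g hg, ENNReal.iSup_mul]
  refine iSup_le fun m => ?_
  rw [ENNReal.mul_iSup]
  refine iSup_le fun n => ?_
  refine pl_real_bdd _ _ h (hf.min measurable_const) (hg.min measurable_const) hh (max m n)
    (fun x => (min_le_right _ _).trans (by simp)) (fun x => (min_le_right _ _).trans (by simp)) ?_
  intro x y
  exact (mul_le_mul' (min_le_left _ _) (min_le_left _ _)).trans (H x y)

theorem pl_prod {E F : Type*} [AddCommGroup E] [Module ℝ E] [MeasureSpace E]
    [AddCommGroup F] [Module ℝ F] [MeasureSpace F] [SFinite (volume : Measure E)]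
    [SFinite (volume : Measure F)] (hE : PLProp E) (hF : PLProp F) : PLProp (E × F) := by
  intro f g h hf hg hh H
  rw [Measure.volume_eq_prod, lintegral_prod _ hf.aemeasurable, lintegral_prod _ hg.aemeasurable,
    lintegral_prod _ hh.aemeasurable]
  refine hE _ _ _ hf.lintegral_prod_right' hg.lintegral_prod_right' hh.lintegral_prod_right' ?_
  intro x y
  refine hF (fun z => f (x, z)) (fun z => g (y, z)) _ (by fun_prop) (by fun_prop) (by fun_prop) ?_
  intro z w
  exact H (x, z) (y, w)

theorem pl_equiv {E F : Type*} [AddCommGroup E] [Module ℝ E] [MeasureSpace E]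
    [AddCommGroup F] [Module ℝ F] [MeasureSpace F] (e : E →ₗ[ℝ] F)
    (hm : MeasurePreserving e volume volume) (hE : PLProp E) : PLProp F := by
  intro f g h hf hg hh H
  rw [← hm.lintegral_comp hf, ← hm.lintegral_comp hg, ← hm.lintegral_comp hh]
  refine hE _ _ _ (hf.comp hm.measurable) (hg.comp hm.measurable) (hh.comp hm.measurable) ?_
  intro x y
  simpa using H (e x) (e y)

theorem pl_pi (n : ℕ) : PLProp (Fin n → ℝ) := by
  induction n with
  | zero =>
    intro f g h hf hg hh H
    have : (volume : Measure (Fin 0 → ℝ)) = Measure.dirac 0 := by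
      rw [volume_pi, Measure.pi_of_empty (x := 0)]
    rw [this]
    simp only [lintegral_dirac]
    simpa using H 0 0
  | succ n ih =>
    let e : (ℝ × (Fin n → ℝ)) →ₗ[ℝ] (Fin (n+1) → ℝ) :=
      { toFun := fun p => Fin.cons p.1 p.2
        map_add' := by intro p q; ext i; refine Fin.cases ?_ ?_ i <;> simp
        map_smul' := by intro p q; ext i; refine Fin.cases ?_ ?_ i <;> simp }
    refine pl_equiv e ?_ (pl_prod pl_real ih)
    have := (volume_preserving_piFinSuccAbove (fun _ : Fin (n+1) => ℝ) 0).symm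
    have h2 : ⇑e = ⇑(MeasurableEquiv.piFinSuccAbove (fun _ : Fin (n+1) => ℝ) 0).symm := by
      funext p
      simp [e, MeasurableEquiv.piFinSuccAbove]
      rfl
    rw [h2]
    exact this

theorem pl_euclid (n : ℕ) : PLProp (EuclideanSpace ℝ (Fin n)) := by
  refine pl_equiv (WithLp.linearEquiv 2 ℝ (Fin n → ℝ)).symm.toLinearMap
    ?_ (pl_pi n)
  exact PiLp.volume_preserving_toLp (Fin n)

lemma logconcave_min {E : Type*} [AddCommGroup E] [Module ℝ E] {f : E → ℝ}
    (hf : IsLogConcaveFn f) (x y : E) (l : ℝ) (l0 : 0 ≤ l) (l1 : l ≤ 1) (q : ℝ) (q0 : 0 ≤ q)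
    (hx : q < f x) (hy : q < f y) : q < f (l • x + (1 - l) • y) := by
  refine lt_of_lt_of_le ?_ (hf.2 x y l l0 l1)
  set m := min (f x) (f y) with hm
  have mq : q < m := lt_min hx hy
  have m0 : 0 < m := lt_of_le_of_lt q0 mq
  calc q < m := mq
    _ = m ^ l * m ^ (1 - l) := by rw [← Real.rpow_add m0]; simp
    _ ≤ f x ^ l * f y ^ (1 - l) := by
      have h1 : m ≤ f x := min_le_left _ _
      have h2 : m ≤ f y := min_le_right _ _
      have : 0 ≤ 1 - l := by linarith
      have := Real.rpow_nonneg (hf.1 x) l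
      gcongr

lemma logconcave_convex {E : Type*} [AddCommGroup E] [Module ℝ E] {f : E → ℝ}
    (hf : IsLogConcaveFn f) (q : ℝ) : Convex ℝ {x | q < f x} := by
  by_cases q0 : 0 ≤ q
  · intro x hx y hy a b ha hb hab
    have : b = 1 - a := by linarith
    subst this
    exact logconcave_min hf x y a ha (by linarith) q q0 hx hy
  · have : {x | q < f x} = Set.univ := by
      ext x; simp; linarith [hf.1 x]
    rw [this]; exact convex_univ

/-- The lower-semicontinuous regularisation of a function, as an extended nonnegative function. -/
def lscReg {n : ℕ} (f : EuclideanSpace ℝ (Fin n) → ℝ) (x : EuclideanSpace ℝ (Fin n)) : ℝ≥0∞ :=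
  ⨆ q : ℚ, (interior {y | (q:ℝ) < f y}).indicator (fun _ => ENNReal.ofReal q) x

lemma lscReg_measurable {n : ℕ} (f : EuclideanSpace ℝ (Fin n) → ℝ) : Measurable (lscReg f) := by
  unfold lscReg
  exact Measurable.iSup fun q => measurable_const.indicator isOpen_interior.measurableSet

lemma lscReg_ae {n : ℕ} {f : EuclideanSpace ℝ (Fin n) → ℝ} (hf : IsLogConcaveFn f) :
    lscReg f =ᵐ[volume] fun x => ENNReal.ofReal (f x) := by
  have : ∀ᵐ x : EuclideanSpace ℝ (Fin n), ∀ q : ℚ, x ∉ frontier {y | (q:ℝ) < f y} := by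
    rw [ae_all_iff]
    intro q
    have := (logconcave_convex hf q).addHaar_frontier volume
    exact measure_eq_zero_iff_ae_notMem.1 this
  filter_upwards [this] with x hx
  unfold lscReg
  apply le_antisymm
  · refine iSup_le fun q => ?_
    by_cases h : x ∈ interior {y | (q:ℝ) < f y}
    · rw [Set.indicator_of_mem h]
      have h' : (q:ℝ) < f x := by simpa using interior_subset h
      exact ENNReal.ofReal_le_ofReal h'.le
    · rw [Set.indicator_of_notMem h]; simp
  · refine le_of_forall_lt fun c hc => ?_
    have ct : c ≠ ∞ := hc.ne_top
    have hc' : c.toReal < f x := by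
      rw [← ENNReal.lt_ofReal_iff_toReal_lt ct]; exact hc
    obtain ⟨q, hq1, hq2⟩ := exists_rat_btwn hc'
    refine lt_of_lt_of_le ?_ (le_iSup _ q)
    have h : x ∈ interior {y | (q:ℝ) < f y} := by
      by_contra h
      exact hx q ⟨subset_closure hq2, h⟩
    rw [Set.indicator_of_mem h]
    rwa [ENNReal.lt_ofReal_iff_toReal_lt ct]

lemma lscReg_mid {n : ℕ} {f : EuclideanSpace ℝ (Fin n) → ℝ} (hf : IsLogConcaveFn f)
    (x y : EuclideanSpace ℝ (Fin n)) :
    lscReg f x * lscReg f y ≤ lscReg f ((1/2:ℝ) • (x + y)) ^ 2 := by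
  set m := (1/2:ℝ) • (x + y) with hm
  have key : ∀ p q q' : ℚ, 0 ≤ p → 0 < q → 0 < q' → (p:ℝ)^2 < q * q' →
      x ∈ interior {y | (q:ℝ) < f y} → y ∈ interior {y | (q':ℝ) < f y} →
      ENNReal.ofReal p ≤ lscReg f m := by
    intro p q q' p0 q0 q0' hp hx hy
    have : m ∈ interior {y | (p:ℝ) < f y} := by
      rw [mem_interior]
      refine ⟨(fun z => (1/2:ℝ) • (z + y)) '' (interior {y | (q:ℝ) < f y}), ?_, ?_, ?_⟩
      · rintro _ ⟨z, hz, rfl⟩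
        have h1 : (q:ℝ) < f z := by simpa using interior_subset hz
        have h2 : (q':ℝ) < f y := by simpa using interior_subset hy
        have h3 := hf.2 z y (1/2) (by norm_num) (by norm_num)
        have e : (1/2:ℝ) • z + (1 - 1/2:ℝ) • y = (1/2:ℝ) • (z + y) := by
          rw [smul_add]; norm_num
        rw [e, show (1 - 1/2:ℝ) = 1/2 by norm_num, ← Real.sqrt_eq_rpow, ← Real.sqrt_eq_rpow] at h3
        show (p:ℝ) < _
        refine lt_of_lt_of_le ?_ h3
        rw [← Real.sqrt_mul (hf.1 z)]
        apply Real.lt_sqrt_of_sq_lt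
        have q0r : (0:ℝ) < q := by exact_mod_cast q0
        have q0r' : (0:ℝ) < q' := by exact_mod_cast q0'
        refine hp.trans ?_
        exact mul_lt_mul'' h1 h2 q0r.le q0r'.le
      · have : IsOpenMap (fun z : EuclideanSpace ℝ (Fin n) => (1/2:ℝ) • (z + y)) := by
          exact ((Homeomorph.smulOfNeZero (1/2:ℝ) (by norm_num)).isOpenMap).comp
            (Homeomorph.addRight y).isOpenMap
        exact this _ isOpen_interior
      · exact ⟨x, hx, rfl⟩
    calc ENNReal.ofReal p = (interior {y | (p:ℝ) < f y}).indicator (fun _ => ENNReal.ofReal p) m := by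
          rw [Set.indicator_of_mem this]
      _ ≤ _ := le_iSup (fun p : ℚ => (interior {y | (p:ℝ) < f y}).indicator
          (fun _ => ENNReal.ofReal p) m) p
  conv_lhs => unfold lscReg
  rw [ENNReal.iSup_mul]
  refine iSup_le fun q => ?_
  rw [ENNReal.mul_iSup]
  refine iSup_le fun q' => ?_
  by_cases hx : x ∈ interior {y | (q:ℝ) < f y}
  swap
  · rw [Set.indicator_of_notMem hx]; simp
  by_cases hy : y ∈ interior {y | (q':ℝ) < f y}
  swap
  · rw [Set.indicator_of_notMem hy]; simp
  rw [Set.indicator_of_mem hx, Set.indicator_of_mem hy]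
  by_cases q0 : 0 < q
  swap
  · rw [ENNReal.ofReal_of_nonpos (by exact_mod_cast not_lt.1 q0)]; simp
  by_cases q0' : 0 < q'
  swap
  · rw [ENNReal.ofReal_of_nonpos (p := (q':ℝ)) (by exact_mod_cast not_lt.1 q0')]; simp
  by_contra hcon
  push Not at hcon
  have q0r : (0:ℝ) < q := by exact_mod_cast q0
  have q0r' : (0:ℝ) < q' := by exact_mod_cast q0'
  rw [← ENNReal.ofReal_mul q0r.le] at hcon
  have ct : lscReg f m ≠ ∞ := by
    intro h; rw [h] at hcon; simp at hcon
  rw [← ENNReal.ofReal_toReal ct, ← ENNReal.ofReal_pow ENNReal.toReal_nonneg,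
    ENNReal.ofReal_lt_ofReal_iff (by positivity)] at hcon
  obtain ⟨p, hp1, hp2⟩ := exists_rat_btwn (Real.lt_sqrt_of_sq_lt hcon)
  have p0 : (0:ℝ) < p := lt_of_le_of_lt ENNReal.toReal_nonneg hp1
  have := key p q q' (by exact_mod_cast p0.le) q0 q0' ((Real.lt_sqrt p0.le).1 hp2) hx hy
  rw [ENNReal.ofReal_le_iff_le_toReal ct] at this
  linarith

/-- Measurable midpoint log-concave probability density. -/
structure LCD {n : ℕ} (F : EuclideanSpace ℝ (Fin n) → ℝ≥0∞) : Prop where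
  meas : Measurable F
  mid : ∀ x y, F x * F y ≤ F ((1/2:ℝ) • (x + y)) ^ 2
  one : ∫⁻ x, F x = 1

lemma LCD.isProb {n : ℕ} {F : EuclideanSpace ℝ (Fin n) → ℝ≥0∞} (h : LCD F) :
    IsProbabilityMeasure (volume.withDensity F) := by
  constructor
  rw [withDensity_apply _ MeasurableSet.univ]
  simpa using h.one

/-- Prékopa-Leindler for expectations. -/
lemma LCD.pl {n : ℕ} {F : EuclideanSpace ℝ (Fin n) → ℝ≥0∞} (hF : LCD F)
    (f g h : EuclideanSpace ℝ (Fin n) → ℝ≥0∞) (hf : Measurable f) (hg : Measurable g)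
    (hh : Measurable h) (H : ∀ x y, f x * g y ≤ h ((1/2:ℝ) • (x + y)) ^ 2) :
    (∫⁻ x, f x ∂(volume.withDensity F)) * (∫⁻ x, g x ∂(volume.withDensity F)) ≤
      (∫⁻ x, h x ∂(volume.withDensity F)) ^ 2 := by
  rw [lintegral_withDensity_eq_lintegral_mul _ hF.meas hf,
    lintegral_withDensity_eq_lintegral_mul _ hF.meas hg,
    lintegral_withDensity_eq_lintegral_mul _ hF.meas hh]
  refine pl_euclid n _ _ _ (hF.meas.mul hf) (hF.meas.mul hg) (hF.meas.mul hh) ?_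
  intro x y
  simp only [Pi.mul_apply]
  calc F x * f x * (F y * g y) = (F x * F y) * (f x * g y) := by ring
    _ ≤ F ((1/2:ℝ) • (x + y)) ^ 2 * h ((1/2:ℝ) • (x + y)) ^ 2 := mul_le_mul' (hF.mid x y) (H x y)
    _ = _ := by ring

/-- Gaussian integral of an exponential of a quadratic. -/
lemma gauss_quad (P Q R : ℝ) (hP : 0 < P) :
    ∫⁻ x, ENNReal.ofReal (exp (-(P - 1) * x ^ 2 / 2 + Q * x - R / 2)) ∂(gaussianReal 0 1)
      = ENNReal.ofReal ((√P)⁻¹ * exp (-(R - Q ^ 2 / P) / 2)) := by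
  rw [gaussianReal_of_var_ne_zero 0 (by simp),
    lintegral_withDensity_eq_lintegral_mul _ (by fun_prop) (by fun_prop)]
  have h1 := lintegral_gaussianPDFReal_eq_one (Q / P) (v := (P⁻¹).toNNReal)
    (by simpa using hP)
  have hv : ((P⁻¹).toNNReal : ℝ) = P⁻¹ := Real.coe_toNNReal _ (by positivity)
  have e : ∀ x : ℝ, (gaussianPDF 0 1 * fun x => ENNReal.ofReal
      (exp (-(P - 1) * x ^ 2 / 2 + Q * x - R / 2))) x
      = ENNReal.ofReal ((√P)⁻¹ * exp (-(R - Q ^ 2 / P) / 2)) *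
        ENNReal.ofReal (gaussianPDFReal (Q / P) (P⁻¹).toNNReal x) := by
    intro x
    simp only [Pi.mul_apply, gaussianPDF]
    rw [← ENNReal.ofReal_mul (gaussianPDFReal_nonneg _ _ _), ← ENNReal.ofReal_mul (by positivity)]
    congr 1
    simp only [gaussianPDFReal, hv]
    have s1 : √(2 * π * P⁻¹) = √(2 * π) * (√P)⁻¹ := by
      rw [Real.sqrt_mul (by positivity), Real.sqrt_inv]
    have sp : 0 < √P := Real.sqrt_pos.2 hP
    rw [s1]
    have e2 : exp (-(x - 0) ^ 2 / (2 * ((1:ℝ≥0):ℝ))) * exp (-(P - 1) * x ^ 2 / 2 + Q * x - R / 2)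
      = exp (-(R - Q ^ 2 / P) / 2) * exp (-(x - Q / P) ^ 2 / (2 * P⁻¹)) := by
      rw [← exp_add, ← exp_add]; congr 1
      simp only [NNReal.coe_one]
      field_simp
      ring
    have sp2 : √(2 * π) ≠ 0 := by positivity
    simp only [NNReal.coe_one, mul_one, mul_inv, inv_inv] at e2 ⊢
    field_simp at e2 ⊢
    linarith [e2]
  simp_rw [e]
  rw [lintegral_const_mul _ (by fun_prop), h1, mul_one]

lemma charFunDual_gauss (L : StrongDual ℝ ℝ) :
    charFunDual (gaussianReal 0 1) L = Complex.exp (-((L 1 ^ 2 : ℝ) : ℂ) / 2) := by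
  rw [← charFun_toDual_symm_eq_charFunDual]
  rw [charFun_gaussianReal]
  have : ((InnerProductSpace.toDual ℝ ℝ).symm L : ℝ) = L 1 := by
    have := InnerProductSpace.toDual_symm_apply (𝕜 := ℝ) (E := ℝ) (x := 1) (y := L)
    simpa using this
  rw [this]
  push_cast
  congr 1
  ring_nf

lemma gauss_pair {n : ℕ} (v v' : EuclideanSpace ℝ (Fin n)) (p β γ : ℝ)
    (h1 : ‖v‖ ^ 2 = p ^ 2) (h2 : ‖v'‖ ^ 2 = β ^ 2 + γ ^ 2) (h3 : ⟪v, v'⟫ = p * β) :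
    (stdGaussian (EuclideanSpace ℝ (Fin n))).map (fun g => ((⟪v, g⟫ : ℝ), (⟪v', g⟫ : ℝ)))
      = ((gaussianReal 0 1).prod (gaussianReal 0 1)).map
        (fun x : ℝ × ℝ => (p * x.1, β * x.1 + γ * x.2)) := by
  let L1 : EuclideanSpace ℝ (Fin n) →L[ℝ] ℝ × ℝ := (innerSL ℝ v).prod (innerSL ℝ v')
  let L2 : ℝ × ℝ →L[ℝ] ℝ × ℝ := (p • ContinuousLinearMap.fst ℝ ℝ ℝ).prod
    (β • ContinuousLinearMap.fst ℝ ℝ ℝ + γ • ContinuousLinearMap.snd ℝ ℝ ℝ)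
  have e1 : (fun g => ((⟪v, g⟫ : ℝ), (⟪v', g⟫ : ℝ))) = L1 := by
    ext g <;> simp [L1]
  have e2 : (fun x : ℝ × ℝ => (p * x.1, β * x.1 + γ * x.2)) = L2 := by
    ext g <;> simp [L2]
  rw [e1, e2]
  have i1 : IsFiniteMeasure ((stdGaussian (EuclideanSpace ℝ (Fin n))).map L1) := inferInstance
  refine Measure.ext_of_charFunDual ?_
  ext L
  rw [charFunDual_map, charFunDual_map, charFunDual_prod, charFunDual_gauss, charFunDual_gauss,
    charFunDual_stdGaussian, ← Complex.exp_add]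
  congr 1
  set s := L (1, 0) with hs
  set t := L (0, 1) with ht
  have hL : ∀ x y : ℝ, L (x, y) = x * s + y * t := by
    intro x y
    have : ((x, y) : ℝ × ℝ) = x • (1, 0) + y • (0, 1) := by ext <;> simp
    rw [this, map_add, map_smul, map_smul]; simp [hs, ht]
  have hc : L.comp L1 = innerSL ℝ (s • v + t • v') := by
    ext g
    simp [L1, hL, inner_add_left, inner_smul_left]
    ring
  rw [hc, innerSL_apply_norm]
  have hn : ‖s • v + t • v'‖ ^ 2 = (s * p + t * β) ^ 2 + (t * γ) ^ 2 := by
    rw [norm_add_sq_real, norm_smul, norm_smul, inner_smul_left, inner_smul_right, mul_pow, mul_pow,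
      h1, h2, h3]
    simp
    ring
  have : (-(‖s • v + t • v'‖:ℂ) ^ 2) = ((-((s * p + t * β) ^ 2 + (t * γ) ^ 2) : ℝ) : ℂ) := by
    rw [← hn]; push_cast; ring
  rw [this]
  simp [L2, hL]
  ring

/-- the Gaussian bump -/
def gb (t : ℝ) : ℝ≥0∞ := ENNReal.ofReal (exp (-t ^ 2 / 2))

@[fun_prop]
lemma gb_meas : Measurable gb := by unfold gb; fun_prop

lemma gb_mid (a b : ℝ) : gb a * gb b ≤ gb ((a + b) / 2) ^ 2 := by
  unfold gb
  rw [← ENNReal.ofReal_mul (by positivity), ← ENNReal.ofReal_pow (by positivity), ← exp_add,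
    ← exp_nat_mul]
  apply ENNReal.ofReal_le_ofReal
  apply exp_le_exp.2
  push_cast
  nlinarith [sq_nonneg (a - b)]

/-- kernel determinant -/
def kD {n : ℕ} (v v' : EuclideanSpace ℝ (Fin n)) : ℝ :=
  (1 + ‖v‖ ^ 2) * (1 + ‖v'‖ ^ 2) - ⟪v, v'⟫ ^ 2

/-- the kernel -/
def kk {n : ℕ} (v v' : EuclideanSpace ℝ (Fin n)) (l1 l2 : ℝ) : ℝ :=
  (√(kD v v'))⁻¹ * exp (-((l1 ^ 2 * (1 + ‖v'‖ ^ 2) + l2 ^ 2 * (1 + ‖v‖ ^ 2)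
    - 2 * ⟪v, v'⟫ * l1 * l2) / kD v v') / 2)

lemma kk_eq {n : ℕ} (v v' : EuclideanSpace ℝ (Fin n)) (l1 l2 : ℝ) :
    ∫⁻ g, gb (l1 - ⟪v, g⟫) * gb (l2 - ⟪v', g⟫) ∂(stdGaussian (EuclideanSpace ℝ (Fin n)))
      = ENNReal.ofReal (kk v v' l1 l2) := by
  set p := ‖v‖ with hp
  set c : ℝ := ⟪v, v'⟫ with hc
  have cs : c ^ 2 ≤ p ^ 2 * ‖v'‖ ^ 2 := by
    have := abs_real_inner_le_norm v v'
    rw [← mul_pow]; exact sq_le_sq' (abs_le.1 this).1 (abs_le.1 this).2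
  obtain ⟨β, hβ, hβ2⟩ : ∃ β : ℝ, c = p * β ∧ β ^ 2 ≤ ‖v'‖ ^ 2 := by
    by_cases h0 : p = 0
    · refine ⟨0, ?_, by simp⟩
      rw [h0] at cs ⊢
      nlinarith
    · have pp : 0 < p := lt_of_le_of_ne (norm_nonneg _) (Ne.symm h0)
      refine ⟨c / p, by field_simp, ?_⟩
      rw [div_pow, div_le_iff₀ (by positivity)]
      linarith
  set γ := √(‖v'‖ ^ 2 - β ^ 2) with hγ
  have hγ2 : γ ^ 2 = ‖v'‖ ^ 2 - β ^ 2 := Real.sq_sqrt (by linarith)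
  have hn : ‖v'‖ ^ 2 = β ^ 2 + γ ^ 2 := by linarith
  have hpair := gauss_pair v v' p β γ rfl hn hβ
  have e1 : ∫⁻ g, gb (l1 - ⟪v, g⟫) * gb (l2 - ⟪v', g⟫) ∂(stdGaussian (EuclideanSpace ℝ (Fin n)))
      = ∫⁻ x : ℝ × ℝ, gb (l1 - x.1) * gb (l2 - x.2) ∂((stdGaussian (EuclideanSpace ℝ (Fin n))).map
        (fun g => ((⟪v, g⟫ : ℝ), (⟪v', g⟫ : ℝ)))) := by
    rw [lintegral_map (by fun_prop) (by fun_prop)]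
  rw [e1, hpair, lintegral_map (by fun_prop) (by fun_prop), lintegral_prod _ (by fun_prop)]
  simp only
  have e2 : ∀ x : ℝ, ∫⁻ y, gb (l1 - p * x) * gb (l2 - (β * x + γ * y)) ∂(gaussianReal 0 1)
      = gb (l1 - p * x) * ENNReal.ofReal ((√(1 + γ ^ 2))⁻¹ *
        exp (-((l2 - β * x) ^ 2 - (γ * (l2 - β * x)) ^ 2 / (1 + γ ^ 2)) / 2)) := by
    intro x
    rw [lintegral_const_mul _ (by fun_prop),
      ← gauss_quad (1 + γ ^ 2) (γ * (l2 - β * x)) ((l2 - β * x) ^ 2) (by positivity)]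
    congr 1
    refine lintegral_congr fun y => ?_
    unfold gb
    congr 2
    ring
  simp_rw [e2]
  set w := 1 + γ ^ 2 with hw
  have w0 : 0 < w := by positivity
  have e3 : ∀ x : ℝ, gb (l1 - p * x) * ENNReal.ofReal ((√w)⁻¹ *
        exp (-((l2 - β * x) ^ 2 - (γ * (l2 - β * x)) ^ 2 / w) / 2)) =
      ENNReal.ofReal ((√w)⁻¹) * ENNReal.ofReal (exp (-((1 + p ^ 2 + β ^ 2 / w) - 1) * x ^ 2 / 2
        + (l1 * p + l2 * β / w) * x - (l1 ^ 2 + l2 ^ 2 / w) / 2)) := by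
    intro x
    unfold gb
    rw [← ENNReal.ofReal_mul (by positivity), ← ENNReal.ofReal_mul (by positivity)]
    congr 1
    rw [mul_left_comm, ← exp_add]
    congr 2
    have : γ ^ 2 = w - 1 := by rw [hw]; ring
    rw [mul_pow, this]
    field_simp
    ring
  simp_rw [e3]
  rw [lintegral_const_mul _ (by fun_prop), gauss_quad _ _ _ (by positivity),
    ← ENNReal.ofReal_mul (by positivity)]
  congr 1
  unfold kk
  have hD : kD v v' = w * (1 + p ^ 2 + β ^ 2 / w) := by
    unfold kD
    rw [← hc, ← hp, hβ, hn, hw]; field_simp; ring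
  rw [hD, Real.sqrt_mul w0.le, mul_inv, mul_assoc]
  have hP : 0 < w + w * p ^ 2 + β ^ 2 := by positivity
  congr 3
  rw [← hc, ← hp, hβ, hn]
  have hg : γ ^ 2 = w - 1 := by rw [hw]; ring
  rw [hg]
  field_simp
  ring

/-- the one-point function -/
def uu {n : ℕ} (T : EuclideanSpace ℝ (Fin n) →L[ℝ] EuclideanSpace ℝ (Fin n)) (M : ℝ) {k : ℕ}
    (l : ℝ) (g : Fin k → EuclideanSpace ℝ (Fin n)) (z : EuclideanSpace ℝ (Fin n)) : ℝ≥0∞ :=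
  {z | ‖T z‖ ≤ M}.indicator (fun z => ∏ i, gb (l - ⟪T z, g i⟫)) z

lemma uu_meas {n : ℕ} (T : EuclideanSpace ℝ (Fin n) →L[ℝ] EuclideanSpace ℝ (Fin n)) (M : ℝ) {k : ℕ}
    (l : ℝ) : Measurable (fun q : (Fin k → EuclideanSpace ℝ (Fin n)) × EuclideanSpace ℝ (Fin n)
      => uu T M l q.1 q.2) := by
  have mS : MeasurableSet {z | ‖T z‖ ≤ M} := measurableSet_le (by fun_prop) (by fun_prop)
  have : (fun q : (Fin k → EuclideanSpace ℝ (Fin n)) × EuclideanSpace ℝ (Fin n) => uu T M l q.1 q.2)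
      = (Prod.snd ⁻¹' {z | ‖T z‖ ≤ M}).indicator
        (fun q : (Fin k → EuclideanSpace ℝ (Fin n)) × EuclideanSpace ℝ (Fin n) =>
          ∏ i, gb (l - ⟪T q.2, q.1 i⟫)) := by
    ext q; simp only [uu, Set.indicator]; rfl
  rw [this]
  refine Measurable.indicator ?_ (measurable_snd mS)
  refine Finset.measurable_prod _ fun i _ => ?_
  have h1 : Measurable fun q : (Fin k → EuclideanSpace ℝ (Fin n)) × EuclideanSpace ℝ (Fin n) =>
    T q.2 := by fun_prop
  have h2 : Measurable fun q : (Fin k → EuclideanSpace ℝ (Fin n)) × EuclideanSpace ℝ (Fin n) =>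
    q.1 i := by fun_prop
  exact gb_meas.comp (measurable_const.sub (h1.inner h2))

lemma uu_measr {n : ℕ} (T : EuclideanSpace ℝ (Fin n) →L[ℝ] EuclideanSpace ℝ (Fin n)) (M : ℝ) {k : ℕ}
    (l : ℝ) (g : Fin k → EuclideanSpace ℝ (Fin n)) : Measurable (uu T M l g) := by
  have h1 := uu_meas T M (k := k) l
  have h2 : Measurable fun z : EuclideanSpace ℝ (Fin n) => (g, z) := measurable_prodMk_left
  have h3 : uu T M l g = (fun q : (Fin k → EuclideanSpace ℝ (Fin n)) × EuclideanSpace ℝ (Fin n)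
      => uu T M l q.1 q.2) ∘ (fun z : EuclideanSpace ℝ (Fin n) => (g, z)) := by
    funext z; rfl
  rw [h3]
  exact Measurable.comp h1 h2

lemma uu_gauss {n : ℕ} (T : EuclideanSpace ℝ (Fin n) →L[ℝ] EuclideanSpace ℝ (Fin n)) (M : ℝ) (k : ℕ)
    (l1 l2 : ℝ) (z z' : EuclideanSpace ℝ (Fin n)) (hz : ‖T z‖ ≤ M) (hz' : ‖T z'‖ ≤ M) :
    ∫⁻ g : Fin k → EuclideanSpace ℝ (Fin n), uu T M l1 g z * uu T M l2 g z'
      ∂(Measure.pi fun _ => stdGaussian (EuclideanSpace ℝ (Fin n)))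
    = ENNReal.ofReal (kk (T z) (T z') l1 l2) ^ k := by
  have hz1 : z ∈ {z | ‖T z‖ ≤ M} := hz
  have hz2 : z' ∈ {z | ‖T z‖ ≤ M} := hz'
  simp only [uu, Set.indicator_of_mem hz1, Set.indicator_of_mem hz2]
  simp_rw [← Finset.prod_mul_distrib]
  have mm : Measurable fun g : EuclideanSpace ℝ (Fin n) =>
    gb (l1 - ⟪T z, g⟫) * gb (l2 - ⟪T z', g⟫) := by fun_prop
  have := lintegral_prod_eq_prod_lintegral_of_indepFun
    (μ := Measure.pi fun _ => stdGaussian (EuclideanSpace ℝ (Fin n))) Finset.univ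
    (fun (i : Fin k) (g : Fin k → EuclideanSpace ℝ (Fin n)) =>
      gb (l1 - ⟪T z, g i⟫) * gb (l2 - ⟪T z', g i⟫))
    (iIndepFun_pi (X := fun (i : Fin k) (g : EuclideanSpace ℝ (Fin n)) =>
      gb (l1 - ⟪T z, g⟫) * gb (l2 - ⟪T z', g⟫)) (fun i => mm.aemeasurable))
    (fun i => mm.comp (measurable_pi_apply i))
  rw [this]
  have e3 : ∀ i : Fin k, ∫⁻ g : Fin k → EuclideanSpace ℝ (Fin n),
      gb (l1 - ⟪T z, g i⟫) * gb (l2 - ⟪T z', g i⟫)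
      ∂(Measure.pi fun _ => stdGaussian (EuclideanSpace ℝ (Fin n)))
    = ENNReal.ofReal (kk (T z) (T z') l1 l2) := by
    intro i
    rw [← kk_eq]
    exact (measurePreserving_eval
      (fun _ : Fin k => stdGaussian (EuclideanSpace ℝ (Fin n))) i).lintegral_comp mm
  simp [e3]

lemma uu_key {n : ℕ} (T : EuclideanSpace ℝ (Fin n) →L[ℝ] EuclideanSpace ℝ (Fin n))
    (μ : Measure (EuclideanSpace ℝ (Fin n))) [IsProbabilityMeasure μ] (M : ℝ) (k : ℕ) (l1 l2 : ℝ) :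
    ∫⁻ z in {z | ‖T z.1‖ ≤ M ∧ ‖T z.2‖ ≤ M},
      ENNReal.ofReal (kk (T z.1) (T z.2) l1 l2) ^ k ∂(μ.prod μ)
      = ∫⁻ g : Fin k → EuclideanSpace ℝ (Fin n),
        (∫⁻ z, uu T M l1 g z ∂μ) * (∫⁻ z, uu T M l2 g z ∂μ)
        ∂(Measure.pi fun _ => stdGaussian (EuclideanSpace ℝ (Fin n))) := by
  have mS : MeasurableSet {z | ‖T z‖ ≤ M} := measurableSet_le (by fun_prop) (by fun_prop)
  have hset : {z : EuclideanSpace ℝ (Fin n) × EuclideanSpace ℝ (Fin n) |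
    ‖T z.1‖ ≤ M ∧ ‖T z.2‖ ≤ M} = {z | ‖T z‖ ≤ M} ×ˢ {z | ‖T z‖ ≤ M} := by ext z; simp
  rw [hset, ← lintegral_indicator (mS.prod mS)]
  have e1 : ∀ g : Fin k → EuclideanSpace ℝ (Fin n),
    (∫⁻ z, uu T M l1 g z ∂μ) * (∫⁻ z, uu T M l2 g z ∂μ)
    = ∫⁻ z, uu T M l1 g z.1 * uu T M l2 g z.2 ∂(μ.prod μ) := fun g =>
      (lintegral_prod_mul (uu_measr T M l1 g).aemeasurable (uu_measr T M l2 g).aemeasurable).symm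
  simp_rw [e1]
  rw [lintegral_lintegral_swap]
  · refine lintegral_congr fun z => ?_
    by_cases hz : z ∈ {z | ‖T z‖ ≤ M} ×ˢ {z | ‖T z‖ ≤ M}
    · rw [Set.indicator_of_mem hz]
      exact (uu_gauss T M k l1 l2 z.1 z.2 hz.1 hz.2).symm
    · rw [Set.indicator_of_notMem hz]
      symm
      have : ∀ g : Fin k → EuclideanSpace ℝ (Fin n), uu T M l1 g z.1 * uu T M l2 g z.2 = 0 := by
        intro g
        by_cases hz1 : z.1 ∈ {z | ‖T z‖ ≤ M}
        · have hz2 : z.2 ∉ {z | ‖T z‖ ≤ M} := fun h => hz ⟨hz1, h⟩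
          simp only [uu, Set.indicator_of_notMem hz2, mul_zero]
        · simp only [uu, Set.indicator_of_notMem hz1, zero_mul]
      simp only [this, lintegral_zero]
  · refine Measurable.aemeasurable ?_
    have h1 := uu_meas T M (k := k) l1
    have h2 := uu_meas T M (k := k) l2
    have h3 : Measurable fun q : (Fin k → EuclideanSpace ℝ (Fin n)) ×
        (EuclideanSpace ℝ (Fin n) × EuclideanSpace ℝ (Fin n)) => (q.1, q.2.1) := by fun_prop
    have h4 : Measurable fun q : (Fin k → EuclideanSpace ℝ (Fin n)) ×
        (EuclideanSpace ℝ (Fin n) × EuclideanSpace ℝ (Fin n)) => (q.1, q.2.2) := by fun_prop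
    have e5 : (Function.uncurry fun (x : Fin k → EuclideanSpace ℝ (Fin n))
        (y : EuclideanSpace ℝ (Fin n) × EuclideanSpace ℝ (Fin n)) =>
        uu T M l1 x y.1 * uu T M l2 x y.2) = fun q => ((fun q : (Fin k → EuclideanSpace ℝ (Fin n)) ×
        EuclideanSpace ℝ (Fin n) => uu T M l1 q.1 q.2) ∘ (fun q : (Fin k → EuclideanSpace ℝ (Fin n)) ×
        (EuclideanSpace ℝ (Fin n) × EuclideanSpace ℝ (Fin n)) => (q.1, q.2.1))) q *
        ((fun q : (Fin k → EuclideanSpace ℝ (Fin n)) ×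
        EuclideanSpace ℝ (Fin n) => uu T M l2 q.1 q.2) ∘ (fun q : (Fin k → EuclideanSpace ℝ (Fin n)) ×
        (EuclideanSpace ℝ (Fin n) × EuclideanSpace ℝ (Fin n)) => (q.1, q.2.2))) q := by
      funext z; rfl
    rw [e5]
    exact Measurable.mul (Measurable.comp h1 h3) (Measurable.comp h2 h4)

/-- The truncated kernel inequality. -/
lemma kk_star {n : ℕ} {F : EuclideanSpace ℝ (Fin n) → ℝ≥0∞} (hF : LCD F)
    (T : EuclideanSpace ℝ (Fin n) →L[ℝ] EuclideanSpace ℝ (Fin n))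
    (M : ℝ) (k : ℕ) (l1 l2 : ℝ) :
    ∫⁻ z in {z | ‖T z.1‖ ≤ M ∧ ‖T z.2‖ ≤ M}, ENNReal.ofReal (kk (T z.1) (T z.2) l1 l2) ^ k
        ∂((volume.withDensity F).prod (volume.withDensity F))
      ≤ ∫⁻ z in {z | ‖T z.1‖ ≤ M ∧ ‖T z.2‖ ≤ M},
        ENNReal.ofReal (kk (T z.1) (T z.2) ((l1 + l2) / 2) ((l1 + l2) / 2)) ^ k
        ∂((volume.withDensity F).prod (volume.withDensity F)) := by
  have := hF.isProb
  rw [uu_key, uu_key]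
  refine lintegral_mono fun g => ?_
  rw [← sq]
  refine hF.pl _ _ _ (uu_measr _ _ _ _) (uu_measr _ _ _ _) (uu_measr _ _ _ _) ?_
  intro x y
  by_cases hx : x ∈ {z | ‖T z‖ ≤ M}
  swap
  · simp only [uu, Set.indicator_of_notMem hx, zero_mul, zero_le]
  by_cases hy : y ∈ {z | ‖T z‖ ≤ M}
  swap
  · simp only [uu, Set.indicator_of_notMem hy, mul_zero, zero_le]
  have hxy : (1/2:ℝ) • (x + y) ∈ {z | ‖T z‖ ≤ M} := by
    simp only [Set.mem_ofPred_eq] at hx hy ⊢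
    rw [map_smul, map_add, norm_smul]
    have := norm_add_le (T x) (T y)
    norm_num
    linarith
  simp only [uu, Set.indicator_of_mem hx, Set.indicator_of_mem hy, Set.indicator_of_mem hxy]
  rw [← Finset.prod_mul_distrib, ← Finset.prod_pow]
  refine Finset.prod_le_prod' fun i _ => ?_
  refine (gb_mid _ _).trans (le_of_eq ?_)
  congr 2
  rw [map_smul, map_add, inner_smul_left, inner_add_left]
  simp
  ring

lemma ker_upper_real (R R' ϱ l : ℝ) (hR : 0 < R) (hR' : 0 < R') (hϱ : |ϱ| ≤ 49/50) (hl : 0 < l) :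
    (√(R ^ 2 * R' ^ 2 * (1 - ϱ ^ 2)))⁻¹ * exp (-((l ^ 2 * R' ^ 2 + l ^ 2 * R ^ 2
      - 2 * (ϱ * R * R') * l * l) / (R ^ 2 * R' ^ 2 * (1 - ϱ ^ 2))) / 2)
      ≤ (exp 1 * (l * l))⁻¹ * exp (50 * |ϱ|) := by
  obtain ⟨h1, h2⟩ := abs_le.1 hϱ
  have hr2 : ϱ ^ 2 = |ϱ| ^ 2 := (sq_abs ϱ).symm
  have a0 := abs_nonneg ϱ
  have hq : 0 < 1 - ϱ ^ 2 := by nlinarith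
  have hp : 0 < 1 + ϱ := by linarith
  set u := l ^ 2 / (R * R' * (1 + ϱ)) with hu
  have u0 : 0 < u := by positivity
  have e1 : -((l ^ 2 * R' ^ 2 + l ^ 2 * R ^ 2
      - 2 * (ϱ * R * R') * l * l) / (R ^ 2 * R' ^ 2 * (1 - ϱ ^ 2))) / 2 ≤ -u := by
    have : u = l ^ 2 * (2 * R * R' * (1 - ϱ)) / (R ^ 2 * R' ^ 2 * (1 - ϱ ^ 2)) / 2 := by
      rw [hu]
      have : 1 - ϱ ^ 2 = (1 - ϱ) * (1 + ϱ) := by ring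
      rw [this]
      have : 1 - ϱ ≠ 0 := by linarith
      field_simp
    rw [this, neg_div, neg_le_neg_iff]
    apply div_le_div_of_nonneg_right _ (by norm_num)
    apply div_le_div_of_nonneg_right _ (by positivity)
    nlinarith [mul_nonneg (sq_nonneg l) (sq_nonneg (R - R'))]
  have e2 : exp (-u) ≤ exp (-1) / u := by
    rw [le_div_iff₀ u0]
    have := Real.add_one_le_exp (u - 1)
    have h3 : exp (-1) = exp (-u) * exp (u - 1) := by rw [← exp_add]; ring_nf
    rw [h3]
    apply mul_le_mul_of_nonneg_left _ (exp_pos _).le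
    linarith
  have e3 : √(R ^ 2 * R' ^ 2 * (1 - ϱ ^ 2)) = R * R' * √(1 - ϱ ^ 2) := by
    rw [← mul_pow, Real.sqrt_mul (by positivity), Real.sqrt_sq (by positivity)]
  have e4 : 1 - ϱ ^ 2 ≤ √(1 - ϱ ^ 2) := by
    apply Real.le_sqrt_of_sq_le
    nlinarith [sq_nonneg ϱ]
  have e5 : (1 - ϱ ^ 2)⁻¹ ≤ exp (49 * |ϱ|) := by
    have : (1 - ϱ ^ 2)⁻¹ ≤ 49 * |ϱ| + 1 := by
      rw [inv_le_iff_one_le_mul₀ hq, hr2]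
      nlinarith [mul_nonneg a0 (sub_nonneg.2 hϱ), mul_nonneg (mul_nonneg a0 a0) (sub_nonneg.2 hϱ)]
    exact this.trans (Real.add_one_le_exp _)
  have e6 : 1 + ϱ ≤ exp |ϱ| := by
    have := Real.add_one_le_exp |ϱ|
    linarith [le_abs_self ϱ]
  rw [e3]
  calc (R * R' * √(1 - ϱ ^ 2))⁻¹ * exp _ ≤ (R * R' * (1 - ϱ ^ 2))⁻¹ * (exp (-1) / u) := by
        apply mul_le_mul _ ((exp_le_exp.2 e1).trans e2) (exp_pos _).le (by positivity)
        apply inv_anti₀ (by positivity)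
        exact mul_le_mul_of_nonneg_left e4 (by positivity)
    _ = (exp 1 * (l * l))⁻¹ * ((1 + ϱ) * (1 - ϱ ^ 2)⁻¹) := by
        rw [hu, exp_neg]; field_simp
    _ ≤ (exp 1 * (l * l))⁻¹ * (exp |ϱ| * exp (49 * |ϱ|)) := by
        gcongr
    _ = _ := by rw [← exp_add]; ring_nf

lemma log_aux (d : ℝ) (h1 : -(1/2) ≤ d) : exp (d - d ^ 2) ≤ 1 + d := by
  have hp : 0 < 1 + d := by linarith
  have : (1 + d)⁻¹ ≤ exp (d ^ 2 - d) := by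
    rcases le_or_gt 0 d with h | h
    · refine le_trans ?_ (Real.add_one_le_exp _)
      rw [inv_le_iff_one_le_mul₀ hp]
      nlinarith [pow_nonneg h 3]
    · have h2 : 0 ≤ d ^ 2 - d := by nlinarith
      refine le_trans ?_ (Real.quadratic_le_exp_of_nonneg h2)
      rw [inv_le_iff_one_le_mul₀ hp]
      nlinarith [sq_nonneg d, mul_nonneg (sq_nonneg d) hp.le, mul_nonneg (sq_nonneg (d^2)) hp.le]
  have h3 : exp (d - d ^ 2) = (exp (d ^ 2 - d))⁻¹ := by rw [← exp_neg]; ring_nf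
  rw [h3]
  exact inv_le_of_inv_le₀ hp this

lemma ker_lower_real (R R' ϱ l1 l2 τ : ℝ) (hR : 0 < R) (hR' : 0 < R') (hϱ : |ϱ| ≤ 1/2)
    (hτ : τ ≤ 1/2) (h1 : |l1 / R - 1| ≤ τ) (h2 : |l2 / R' - 1| ≤ τ) :
    (exp 1 * (l1 * l2))⁻¹ * exp (-3 * τ ^ 2 - 5 * |ϱ|) ≤
    (√(R ^ 2 * R' ^ 2 * (1 - ϱ ^ 2)))⁻¹ * exp (-((l1 ^ 2 * R' ^ 2 + l2 ^ 2 * R ^ 2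
      - 2 * (ϱ * R * R') * l1 * l2) / (R ^ 2 * R' ^ 2 * (1 - ϱ ^ 2))) / 2) := by
  set x := l1 / R with hx
  set y := l2 / R' with hy
  have el1 : l1 = x * R := by rw [hx]; field_simp
  have el2 : l2 = y * R' := by rw [hy]; field_simp
  have a0 := abs_nonneg ϱ
  obtain ⟨x1, x2⟩ := abs_le.1 h1
  obtain ⟨y1, y2⟩ := abs_le.1 h2
  have hr2 : ϱ ^ 2 = |ϱ| ^ 2 := (sq_abs ϱ).symm
  have hq : 3/4 ≤ 1 - ϱ ^ 2 := by nlinarith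
  have hq0 : 0 < 1 - ϱ ^ 2 := by linarith
  have xp : 0 < x := by linarith
  have yp : 0 < y := by linarith
  have e0 : (l1 ^ 2 * R' ^ 2 + l2 ^ 2 * R ^ 2
      - 2 * (ϱ * R * R') * l1 * l2) / (R ^ 2 * R' ^ 2 * (1 - ϱ ^ 2))
      = (x ^ 2 + y ^ 2 - 2 * ϱ * (x * y)) / (1 - ϱ ^ 2) := by
    rw [el1, el2]; field_simp
  have e1 : (x ^ 2 + y ^ 2 - 2 * ϱ * (x * y)) / (1 - ϱ ^ 2) ≤ x ^ 2 + y ^ 2 + 10 * |ϱ| := by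
    rw [div_le_iff₀ hq0]
    have b1 : x ^ 2 ≤ 9/4 := by nlinarith
    have b2 : y ^ 2 ≤ 9/4 := by nlinarith
    have b3 : x * y ≤ 9/4 := by nlinarith [sq_nonneg (x - y)]
    have b4 : -(ϱ * (x * y)) ≤ |ϱ| * (9/4) := by
      calc -(ϱ * (x * y)) ≤ |ϱ * (x * y)| := neg_le_abs _
        _ = |ϱ| * (x * y) := by rw [abs_mul, abs_of_pos (by positivity : 0 < x * y)]
        _ ≤ _ := by gcongr
    have b5 : ϱ ^ 2 * (x ^ 2 + y ^ 2) ≤ |ϱ| * (9/4) := by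
      rw [hr2]; nlinarith [mul_nonneg a0 (sub_nonneg.2 hϱ), mul_nonneg a0 a0]
    nlinarith [mul_nonneg a0 (sub_nonneg.2 hq)]
  have aux : ∀ z : ℝ, 0 < z → |z - 1| ≤ τ → exp (-1/2 - 3/2 * τ ^ 2) ≤ z * exp (-z ^ 2 / 2) := by
    intro z hz hzt
    obtain ⟨z1, z2⟩ := abs_le.1 hzt
    have := log_aux (z - 1) (by linarith)
    calc exp (-1/2 - 3/2 * τ ^ 2) ≤ exp ((z - 1) - (z - 1) ^ 2 + (-z ^ 2 / 2)) := by
          apply exp_le_exp.2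
          nlinarith [sq_le_sq' z1 z2]
      _ = exp ((z - 1) - (z - 1) ^ 2) * exp (-z ^ 2 / 2) := exp_add _ _
      _ ≤ (1 + (z - 1)) * exp (-z ^ 2 / 2) := by gcongr
      _ = _ := by ring
  have e3 : √(R ^ 2 * R' ^ 2 * (1 - ϱ ^ 2)) ≤ R * R' := by
    rw [← mul_pow]
    apply Real.sqrt_le_iff.2
    refine ⟨by positivity, ?_⟩
    nlinarith [mul_nonneg (sq_nonneg (R * R')) (sq_nonneg ϱ)]
  have sp : 0 < √(R ^ 2 * R' ^ 2 * (1 - ϱ ^ 2)) := Real.sqrt_pos.2 (by positivity)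
  rw [e0]
  have l1p : 0 < l1 := by rw [el1]; positivity
  have l2p : 0 < l2 := by rw [el2]; positivity
  calc (exp 1 * (l1 * l2))⁻¹ * exp (-3 * τ ^ 2 - 5 * |ϱ|)
      = (l1 * l2)⁻¹ * (exp (-1/2 - 3/2 * τ ^ 2) * exp (-1/2 - 3/2 * τ ^ 2)) * exp (- 5 * |ϱ|) := by
        rw [mul_inv, ← exp_neg, ← exp_add, mul_comm (exp (-1)), mul_assoc, mul_assoc, ← exp_add,
          ← exp_add]
        ring_nf
    _ ≤ (l1 * l2)⁻¹ * ((x * exp (-x ^ 2 / 2)) * (y * exp (-y ^ 2 / 2))) * exp (- 5 * |ϱ|) := by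
        have := aux x xp h1
        have := aux y yp h2
        gcongr
    _ = (R * R')⁻¹ * exp (-(x ^ 2 + y ^ 2 + 10 * |ϱ|) / 2) := by
        rw [show -(x ^ 2 + y ^ 2 + 10 * |ϱ|) / 2 = -x ^ 2 / 2 + -y ^ 2 / 2 + - 5 * |ϱ| by ring,
          exp_add, exp_add, el1, el2]
        field_simp
    _ ≤ _ := by
        apply mul_le_mul (inv_anti₀ sp e3) _ (exp_pos _).le (by positivity)
        apply exp_le_exp.2
        linarith

/-- `R v = sqrt(1+|v|^2)` -/
def Rr {n : ℕ} (v : EuclideanSpace ℝ (Fin n)) : ℝ := √(1 + ‖v‖ ^ 2)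

/-- correlation -/
def rho {n : ℕ} (v v' : EuclideanSpace ℝ (Fin n)) : ℝ := |⟪v, v'⟫| / (Rr v * Rr v')

lemma Rr_sq {n : ℕ} (v : EuclideanSpace ℝ (Fin n)) : Rr v ^ 2 = 1 + ‖v‖ ^ 2 :=
  Real.sq_sqrt (by positivity)

lemma Rr_one {n : ℕ} (v : EuclideanSpace ℝ (Fin n)) : 1 ≤ Rr v := by
  apply Real.one_le_sqrt.2; nlinarith [sq_nonneg ‖v‖]

lemma Rr_pos {n : ℕ} (v : EuclideanSpace ℝ (Fin n)) : 0 < Rr v := by linarith [Rr_one v]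

@[fun_prop]
lemma Rr_cont {n : ℕ} : Continuous (Rr : EuclideanSpace ℝ (Fin n) → ℝ) := by unfold Rr; fun_prop

lemma kk_rho {n : ℕ} (v v' : EuclideanSpace ℝ (Fin n)) (l1 l2 : ℝ) :
    ∃ ϱ : ℝ, |ϱ| = rho v v' ∧ kk v v' l1 l2 = (√(Rr v ^ 2 * Rr v' ^ 2 * (1 - ϱ ^ 2)))⁻¹ *
      exp (-((l1 ^ 2 * Rr v' ^ 2 + l2 ^ 2 * Rr v ^ 2
      - 2 * (ϱ * Rr v * Rr v') * l1 * l2) / (Rr v ^ 2 * Rr v' ^ 2 * (1 - ϱ ^ 2))) / 2) := by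
  have h1 := Rr_pos v
  have h2 := Rr_pos v'
  refine ⟨⟪v, v'⟫ / (Rr v * Rr v'), ?_, ?_⟩
  · rw [abs_div, abs_of_pos (by positivity : 0 < Rr v * Rr v')]; rfl
  · have e1 : Rr v ^ 2 * Rr v' ^ 2 * (1 - (⟪v, v'⟫ / (Rr v * Rr v')) ^ 2) = kD v v' := by
      unfold kD; rw [← Rr_sq, ← Rr_sq]; field_simp
    rw [e1]
    unfold kk
    rw [← Rr_sq, ← Rr_sq]
    congr 5
    field_simp

lemma rho_nonneg {n : ℕ} (v v' : EuclideanSpace ℝ (Fin n)) : 0 ≤ rho v v' := by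
  unfold rho
  have h1 := Rr_pos v
  have h2 := Rr_pos v'
  positivity

lemma rho_symm {n : ℕ} (v v' : EuclideanSpace ℝ (Fin n)) : rho v v' = rho v' v := by
  unfold rho; rw [real_inner_comm, mul_comm]

lemma rho_le_inner {n : ℕ} (v v' : EuclideanSpace ℝ (Fin n)) :
    rho v v' ≤ |⟪v, (Rr v')⁻¹ • v'⟫| := by
  have h1 := Rr_one v
  have h2 := Rr_pos v'
  unfold rho
  rw [inner_smul_right, abs_mul, abs_of_pos (inv_pos.2 h2)]
  have h3 : (Rr v)⁻¹ ≤ 1 := inv_le_one_of_one_le₀ h1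
  have h4 : 0 ≤ |⟪v, v'⟫| := abs_nonneg _
  calc |⟪v, v'⟫| / (Rr v * Rr v') = |⟪v, v'⟫| * ((Rr v)⁻¹ * (Rr v')⁻¹) := by
        rw [div_eq_mul_inv, mul_inv]
    _ ≤ |⟪v, v'⟫| * (1 * (Rr v')⁻¹) := by gcongr
    _ = _ := by ring

lemma norm_le_Rr {n : ℕ} (v : EuclideanSpace ℝ (Fin n)) : ‖v‖ ≤ Rr v := by
  apply Real.le_sqrt_of_sq_le; linarith

lemma norm_unit {n : ℕ} (v : EuclideanSpace ℝ (Fin n)) : ‖(Rr v)⁻¹ • v‖ ≤ 1 := by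
  have h1 := Rr_pos v
  rw [norm_smul, norm_inv, Real.norm_of_nonneg h1.le, inv_mul_le_iff₀ h1, mul_one]
  exact norm_le_Rr v

lemma rho_trunc {n : ℕ} (v v' : EuclideanSpace ℝ (Fin n)) (h : ‖v‖ ≤ 7) (h' : ‖v'‖ ≤ 7) :
    rho v v' ≤ 49 / 50 := by
  have h1 := Rr_pos v
  have h2 := Rr_pos v'
  unfold rho
  rw [div_le_iff₀ (by positivity)]
  refine (abs_real_inner_le_norm v v').trans ?_
  have n1 := norm_nonneg v
  have n2 := norm_nonneg v'
  have aux : ∀ w : EuclideanSpace ℝ (Fin n), ‖w‖ ≤ 7 → ‖w‖ ^ 2 ≤ 49 / 50 * Rr w ^ 2 := by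
    intro w hw
    rw [Rr_sq]; nlinarith [norm_nonneg w]
  have a1 := aux v h
  have a2 := aux v' h'
  apply (sq_le_sq₀ (by positivity) (by positivity)).1
  calc (‖v‖ * ‖v'‖) ^ 2 = ‖v‖ ^ 2 * ‖v'‖ ^ 2 := by ring
    _ ≤ (49 / 50 * Rr v ^ 2) * (49 / 50 * Rr v' ^ 2) := by gcongr
    _ = _ := by ring

lemma kk_upper {n : ℕ} (v v' : EuclideanSpace ℝ (Fin n)) (h : ‖v‖ ≤ 7) (h' : ‖v'‖ ≤ 7)
    (l : ℝ) (hl : 0 < l) : kk v v' l l ≤ (exp 1 * (l * l))⁻¹ * exp (50 * rho v v') := by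
  obtain ⟨ϱ, h1, h2⟩ := kk_rho v v' l l
  rw [h2, ← h1]
  exact ker_upper_real _ _ _ _ (Rr_pos v) (Rr_pos v') (h1.trans_le (rho_trunc v v' h h')) hl

lemma kk_lower {n : ℕ} (v v' : EuclideanSpace ℝ (Fin n)) (l1 l2 τ : ℝ) (hr : rho v v' ≤ 1/2)
    (hτ : τ ≤ 1/2) (h1 : |l1 / Rr v - 1| ≤ τ) (h2 : |l2 / Rr v' - 1| ≤ τ) :
    (exp 1 * (l1 * l2))⁻¹ * exp (-3 * τ ^ 2 - 5 * rho v v') ≤ kk v v' l1 l2 := by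
  obtain ⟨ϱ, h3, h4⟩ := kk_rho v v' l1 l2
  rw [h4, ← h3]
  exact ker_lower_real _ _ _ _ _ _ (Rr_pos v) (Rr_pos v') (h3.trans_le hr) hτ h1 h2

/-- Abstract setup: a log-concave density together with a linear map. -/
structure SU {n : ℕ} (F : EuclideanSpace ℝ (Fin n) → ℝ≥0∞)
    (T : EuclideanSpace ℝ (Fin n) →L[ℝ] EuclideanSpace ℝ (Fin n)) (K α : ℝ) : Prop where
  lcd : LCD F
  second : ∫⁻ z, ENNReal.ofReal (‖T z‖ ^ 2) ∂(volume.withDensity F) = 1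
  mom : ∀ j : ℕ, 1 ≤ j → ∀ y : EuclideanSpace ℝ (Fin n), ‖y‖ ≤ 1 →
    ∫⁻ z, ENNReal.ofReal (⟪T z, y⟫ ^ (2 * j)) ∂(volume.withDensity F) ≤
      ENNReal.ofReal ((((2 * j : ℕ) : ℝ) / K) ^ (1 / α)) ^ (2 * j)
  hα1 : 1 ≤ α
  hα2 : α ≤ 2
  hK : 0 < K

lemma theta_term (K α g k : ℝ) (hK : 0 < K) (hα1 : 1 ≤ α) (hα2 : α ≤ 2) (hg : 0 < g) (hg1 : g ≤ 1)
    (hk : 1 ≤ k) (hkK : k ≤ 0.00000001 * K * g ^ α) (j : ℕ) (hj : 1 ≤ j) :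
    (50 * k) ^ (2 * j) / (Nat.factorial (2 * j)) * ((((2 * j : ℕ) : ℝ) / K) ^ (1 / α)) ^ (2 * j) ≤
      (0.015 ^ 2) ^ j + (0.015 ^ 2 * g ^ 2 * k / 2) ^ j / (Nat.factorial j) := by
  have hα : 0 < α := by linarith
  have hjr : (1:ℝ) ≤ j := by exact_mod_cast hj
  set q : ℝ := ((2 * j : ℕ) : ℝ) with hq
  have hq2 : q = 2 * j := by rw [hq]; push_cast; ring
  have hqpos : 0 < q := by rw [hq2]; linarith
  have hkpos : 0 < k := by linarith
  -- bound for the root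
  have hx : 150 * k * (q / K) ^ (1 / α) / q ≤ 0.015 * g * max 1 (√(k / q)) := by
    have h1 : q / K ≤ 0.00000001 * g ^ α * (q / k) := by
      rw [div_le_iff₀ hK]
      calc q = (q / k) * k := by field_simp
        _ ≤ (q / k) * (0.00000001 * K * g ^ α) := by gcongr
        _ = _ := by ring
    have h2 : (q / K) ^ (1 / α) ≤ 0.0001 * g * (q / k) ^ (1 / α) := by
      calc (q / K) ^ (1 / α) ≤ (0.00000001 * g ^ α * (q / k)) ^ (1 / α) := by gcongr
        _ = (0.00000001 : ℝ) ^ (1 / α) * (g ^ α) ^ (1 / α) * (q / k) ^ (1 / α) := by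
            rw [Real.mul_rpow (by positivity) (by positivity), Real.mul_rpow (by positivity) (by positivity)]
        _ = (0.00000001 : ℝ) ^ (1 / α) * g * (q / k) ^ (1 / α) := by
            rw [← Real.rpow_mul hg.le, mul_one_div_cancel hα.ne', Real.rpow_one]
        _ ≤ 0.0001 * g * (q / k) ^ (1 / α) := by
            have : (0.00000001 : ℝ) ^ (1 / α) ≤ 0.0001 := by
              calc (0.00000001 : ℝ) ^ (1 / α) ≤ (0.00000001 : ℝ) ^ (1 / 2 : ℝ) := by
                    apply Real.rpow_le_rpow_of_exponent_ge (by norm_num) (by norm_num)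
                    exact one_div_le_one_div_of_le hα hα2
                _ = √ 0.00000001 := by rw [Real.sqrt_eq_rpow]
                _ = 0.0001 := by
                    rw [show (0.00000001 : ℝ) = (0.0001) ^ 2 by norm_num, Real.sqrt_sq (by norm_num)]
            gcongr
    have h3 : (k / q) * (q / k) ^ (1 / α) ≤ max 1 (√(k / q)) := by
      have e : (k / q) * (q / k) ^ (1 / α) = (k / q) ^ (1 - 1 / α) := by
        rw [← inv_div k q, Real.inv_rpow (by positivity), Real.rpow_sub (by positivity), Real.rpow_one]
        rfl
      rw [e]
      have a1 : 1 / α ≤ 1 := by rw [div_le_one hα]; exact hα1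
      have a2 : 1 / 2 ≤ 1 / α := one_div_le_one_div_of_le hα hα2
      rcases le_total (k / q) 1 with h | h
      · apply le_max_of_le_left
        exact Real.rpow_le_one (by positivity) h (by linarith)
      · apply le_max_of_le_right
        rw [Real.sqrt_eq_rpow]
        exact Real.rpow_le_rpow_of_exponent_le h (by linarith)
    calc 150 * k * (q / K) ^ (1 / α) / q ≤ 150 * k * (0.0001 * g * (q / k) ^ (1 / α)) / q := by gcongr
      _ = 0.015 * g * ((k / q) * (q / k) ^ (1 / α)) := by ring
      _ ≤ _ := by gcongr
  have hfac : (1:ℝ) / (Nat.factorial (2 * j)) ≤ (3 / q) ^ (2 * j) := by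
    have := Real.pow_div_factorial_le_exp q hqpos.le (2 * j)
    have e3 : exp q ≤ 3 ^ (2 * j) := by
      rw [← Real.exp_one_rpow, hq, Real.rpow_natCast]
      gcongr
      exact Real.exp_one_lt_three.le
    rw [div_pow, le_div_iff₀ (by positivity)]
    calc _ = q ^ (2 * j) / (Nat.factorial (2 * j)) := by ring
      _ ≤ _ := this.trans e3
  calc (50 * k) ^ (2 * j) / (Nat.factorial (2 * j)) * ((q / K) ^ (1 / α)) ^ (2 * j)
      = (50 * k) ^ (2 * j) * (1 / (Nat.factorial (2 * j))) * ((q / K) ^ (1 / α)) ^ (2 * j) := by ring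
    _ ≤ (50 * k) ^ (2 * j) * (3 / q) ^ (2 * j) * ((q / K) ^ (1 / α)) ^ (2 * j) := by gcongr
    _ = (150 * k * (q / K) ^ (1 / α) / q) ^ (2 * j) := by
        rw [← mul_pow, ← mul_pow]; congr 1; ring
    _ ≤ (0.015 * g * max 1 (√(k / q))) ^ (2 * j) := by gcongr
    _ = (0.015 ^ 2 * g ^ 2 * max 1 (√(k / q)) ^ 2) ^ j := by rw [pow_mul, mul_pow _ (max _ _), mul_pow (0.015:ℝ)]
    _ ≤ _ := by
        rcases le_total (√(k / q)) 1 with h | h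
        · rw [max_eq_left h]
          have : 0 ≤ (0.015 ^ 2 * g ^ 2 * k / 2) ^ j / (Nat.factorial j) := by positivity
          have h2 : (0.015 ^ 2 * g ^ 2 * 1 ^ 2) ^ j ≤ (0.015 ^ 2 : ℝ) ^ j := by
            gcongr
            nlinarith
          linarith
        · rw [max_eq_right h, Real.sq_sqrt (by positivity)]
          have : (0:ℝ) ≤ (0.015 ^ 2) ^ j := by positivity
          have h2 : (0.015 ^ 2 * g ^ 2 * (k / q)) ^ j ≤ (0.015 ^ 2 * g ^ 2 * k / 2) ^ j / (Nat.factorial j) := by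
            have : (0.015 ^ 2 * g ^ 2 * (k / q)) = (0.015 ^ 2 * g ^ 2 * k / 2) / j := by
              rw [hq2]; field_simp
            rw [this, div_pow]
            gcongr
            exact_mod_cast Nat.factorial_le_pow j
          linarith

lemma theta {n : ℕ} {F : EuclideanSpace ℝ (Fin n) → ℝ≥0∞}
    {T : EuclideanSpace ℝ (Fin n) →L[ℝ] EuclideanSpace ℝ (Fin n)} {K α : ℝ} (S : SU F T K α)
    (g k : ℝ) (hg : 0 < g) (hg1 : g ≤ 1)
    (hk : 1 ≤ k) (hkK : k ≤ 0.00000001 * K * g ^ α) (y : EuclideanSpace ℝ (Fin n)) (hy : ‖y‖ ≤ 1) :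
    ∫⁻ z, ENNReal.ofReal (exp (50 * k * |⟪T z, y⟫|)) ∂(volume.withDensity F) ≤
      ENNReal.ofReal (6 * exp (k * g ^ 2 / 1000)) := by
  have hprob := S.lcd.isProb
  set μ := (volume.withDensity F)
  have hk0 : 0 < k := by linarith
  set y2 : ℝ := 0.015 ^ 2 * g ^ 2 * k / 2 with hy2
  have hy2n : 0 ≤ y2 := by positivity
  have hpt : ∀ z, ENNReal.ofReal (exp (50 * k * |⟪T z, y⟫|)) ≤
      2 * ∑' j : ℕ, ENNReal.ofReal ((50 * k) ^ (2 * j) / (Nat.factorial (2 * j))) *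
        ENNReal.ofReal (⟪T z, y⟫ ^ (2 * j)) := by
    intro z
    have hs := Real.hasSum_cosh (50 * k * ⟪T z, y⟫)
    have e : ∀ j : ℕ, ENNReal.ofReal ((50 * k) ^ (2 * j) / (Nat.factorial (2 * j))) *
        ENNReal.ofReal (⟪T z, y⟫ ^ (2 * j)) =
        ENNReal.ofReal ((50 * k * ⟪T z, y⟫) ^ (2 * j) / (Nat.factorial (2 * j))) := by
      intro j
      rw [← ENNReal.ofReal_mul (by positivity), mul_pow]; congr 1; ring
    simp_rw [e]
    rw [← ENNReal.ofReal_tsum_of_nonneg _ hs.summable, hs.tsum_eq]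
    · have e2 : ∀ c : ℝ, 2 * ENNReal.ofReal c = ENNReal.ofReal (2 * c) := by
        intro c; rw [ENNReal.ofReal_mul (by norm_num)]; simp
      rw [e2]
      apply ENNReal.ofReal_le_ofReal
      rw [← Real.cosh_abs, abs_mul, abs_of_pos (by positivity : 0 < 50 * k), Real.cosh_eq]
      have := exp_pos (-(50 * k * |⟪T z, y⟫|))
      linarith
    · intro j
      have : 0 ≤ (50 * k * ⟪T z, y⟫) ^ (2 * j) := by rw [pow_mul]; positivity
      positivity
  have hterm : ∀ j : ℕ, ENNReal.ofReal ((50 * k) ^ (2 * j) / (Nat.factorial (2 * j))) *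
        ∫⁻ z, ENNReal.ofReal (⟪T z, y⟫ ^ (2 * j)) ∂μ ≤
        ENNReal.ofReal ((0.015 ^ 2) ^ j + y2 ^ j / (Nat.factorial j)) := by
    intro j
    rcases Nat.eq_zero_or_pos j with rfl | hj
    · simp
    · calc _ ≤ ENNReal.ofReal ((50 * k) ^ (2 * j) / (Nat.factorial (2 * j))) *
            ENNReal.ofReal ((((2 * j : ℕ) : ℝ) / K) ^ (1 / α)) ^ (2 * j) := by
              gcongr; exact S.mom j hj y hy
        _ = ENNReal.ofReal ((50 * k) ^ (2 * j) / (Nat.factorial (2 * j)) *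
              ((((2 * j : ℕ) : ℝ) / K) ^ (1 / α)) ^ (2 * j)) := by
              have := S.hK
              rw [ENNReal.ofReal_mul (by positivity), ← ENNReal.ofReal_pow (by positivity)]
        _ ≤ _ := ENNReal.ofReal_le_ofReal
              (theta_term K α g k S.hK S.hα1 S.hα2 hg hg1 hk hkK j hj)
  calc ∫⁻ z, ENNReal.ofReal (exp (50 * k * |⟪T z, y⟫|)) ∂μ
      ≤ ∫⁻ z, 2 * ∑' j : ℕ, ENNReal.ofReal ((50 * k) ^ (2 * j) / (Nat.factorial (2 * j))) *
        ENNReal.ofReal (⟪T z, y⟫ ^ (2 * j)) ∂μ := lintegral_mono hpt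
    _ = 2 * ∑' j : ℕ, ENNReal.ofReal ((50 * k) ^ (2 * j) / (Nat.factorial (2 * j))) *
        ∫⁻ z, ENNReal.ofReal (⟪T z, y⟫ ^ (2 * j)) ∂μ := by
        rw [lintegral_const_mul' _ _ (by simp), lintegral_tsum]
        · congr 2; funext j
          rw [lintegral_const_mul' _ _ (by simp)]
        · intro j
          fun_prop
    _ ≤ 2 * ∑' j : ℕ, ENNReal.ofReal ((0.015 ^ 2) ^ j + y2 ^ j / (Nat.factorial j)) := by
        gcongr with j; exact hterm j
    _ = 2 * ENNReal.ofReal ((1 - 0.015 ^ 2)⁻¹ + exp y2) := by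
        have s1 : HasSum (fun j : ℕ => ((0.015:ℝ) ^ 2) ^ j) (1 - 0.015 ^ 2)⁻¹ :=
          hasSum_geometric_of_lt_one (by norm_num) (by norm_num)
        have s2 : HasSum (fun j : ℕ => y2 ^ j / (Nat.factorial j)) (exp y2) := by
          rw [Real.exp_eq_exp_ℝ]; exact NormedSpace.expSeries_div_hasSum_exp y2
        rw [← ENNReal.ofReal_tsum_of_nonneg (fun j => by positivity) (s1.add s2).summable, (s1.add s2).tsum_eq]
    _ ≤ _ := by
        rw [show (2:ℝ≥0∞) = ENNReal.ofReal 2 by simp, ← ENNReal.ofReal_mul (by norm_num)]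
        apply ENNReal.ofReal_le_ofReal
        have h1 : exp y2 ≤ exp (k * g ^ 2 / 1000) := by
          apply Real.exp_le_exp.2
          rw [hy2]; nlinarith [mul_pos hk0 (pow_pos hg 2)]
        have h2 : 1 ≤ exp (k * g ^ 2 / 1000) := Real.one_le_exp (by positivity)
        have h3 : ((1:ℝ) - 0.015 ^ 2)⁻¹ ≤ 2 := by norm_num
        linarith

lemma rho_cont {n : ℕ} : Continuous fun z : EuclideanSpace ℝ (Fin n) × EuclideanSpace ℝ (Fin n) =>
    rho z.1 z.2 := by
  unfold rho
  apply Continuous.div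
  · fun_prop
  · fun_prop
  · intro z; exact (mul_pos (Rr_pos _) (Rr_pos _)).ne'

lemma diag_bound {n : ℕ} {F : EuclideanSpace ℝ (Fin n) → ℝ≥0∞}
    {T : EuclideanSpace ℝ (Fin n) →L[ℝ] EuclideanSpace ℝ (Fin n)} {K α : ℝ} (S : SU F T K α)
    (g : ℝ) (k : ℕ) (hg : 0 < g) (hg1 : g ≤ 1)
    (hk : 1 ≤ k) (hkK : (k:ℝ) ≤ 0.00000001 * K * g ^ α) (l : ℝ) (hl : 0 < l) :
    ∫⁻ z in {z | ‖T z.1‖ ≤ 7 ∧ ‖T z.2‖ ≤ 7}, ENNReal.ofReal (kk (T z.1) (T z.2) l l) ^ k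
      ∂((volume.withDensity F).prod (volume.withDensity F)) ≤
    ENNReal.ofReal (((exp 1 * (l * l))⁻¹) ^ k * (6 * exp (k * g ^ 2 / 1000))) := by
  have hprob := S.lcd.isProb
  set μ := (volume.withDensity F)
  have hms : MeasurableSet {z : EuclideanSpace ℝ (Fin n) × EuclideanSpace ℝ (Fin n) |
      ‖T z.1‖ ≤ 7 ∧ ‖T z.2‖ ≤ 7} := by
    apply IsClosed.measurableSet
    refine (isClosed_le ?_ ?_).and (isClosed_le ?_ ?_) <;> fun_prop
  have hc : Measurable (fun z : EuclideanSpace ℝ (Fin n) × EuclideanSpace ℝ (Fin n) =>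
      ENNReal.ofReal (exp (50 * (k:ℝ) * |⟪T z.1, (Rr (T z.2))⁻¹ • T z.2⟫|))) := by
    apply Measurable.ennreal_ofReal
    apply Continuous.measurable
    have : Continuous fun z : EuclideanSpace ℝ (Fin n) × EuclideanSpace ℝ (Fin n) =>
      (Rr (T z.2))⁻¹ := Continuous.inv₀ (by fun_prop) (fun z => (Rr_pos _).ne')
    fun_prop
  calc _ ≤ ∫⁻ z in {z | ‖T z.1‖ ≤ 7 ∧ ‖T z.2‖ ≤ 7}, ENNReal.ofReal (((exp 1 * (l * l))⁻¹) ^ k) *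
        ENNReal.ofReal (exp (50 * (k:ℝ) * |⟪T z.1, (Rr (T z.2))⁻¹ • T z.2⟫|)) ∂(μ.prod μ) := by
        apply setLIntegral_mono' hms
        rintro ⟨x, y⟩ ⟨h1, h2⟩
        rw [← ENNReal.ofReal_mul (by positivity)]
        have h3 := kk_upper (T x) (T y) h1 h2 l hl
        have h4 := rho_le_inner (T x) (T y)
        have h5 : 0 ≤ kk (T x) (T y) l l := by unfold kk; positivity
        rw [← ENNReal.ofReal_pow h5]
        apply ENNReal.ofReal_le_ofReal
        calc kk (T x) (T y) l l ^ k ≤ ((exp 1 * (l * l))⁻¹ * exp (50 * rho (T x) (T y))) ^ k := by gcongr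
          _ ≤ ((exp 1 * (l * l))⁻¹ * exp (50 * |⟪T x, (Rr (T y))⁻¹ • T y⟫|)) ^ k := by gcongr
          _ = _ := by rw [mul_pow, ← Real.exp_nat_mul]; congr 2; ring
    _ ≤ ∫⁻ z, ENNReal.ofReal (((exp 1 * (l * l))⁻¹) ^ k) *
        ENNReal.ofReal (exp (50 * (k:ℝ) * |⟪T z.1, (Rr (T z.2))⁻¹ • T z.2⟫|)) ∂(μ.prod μ) :=
        setLIntegral_le_lintegral _ _
    _ = ENNReal.ofReal (((exp 1 * (l * l))⁻¹) ^ k) * ∫⁻ z,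
        ENNReal.ofReal (exp (50 * (k:ℝ) * |⟪T z.1, (Rr (T z.2))⁻¹ • T z.2⟫|)) ∂(μ.prod μ) :=
        lintegral_const_mul' _ _ (by simp)
    _ = ENNReal.ofReal (((exp 1 * (l * l))⁻¹) ^ k) * ∫⁻ y, ∫⁻ x,
        ENNReal.ofReal (exp (50 * (k:ℝ) * |⟪T x, (Rr (T y))⁻¹ • T y⟫|)) ∂μ ∂μ := by
        rw [lintegral_prod_symm _ hc.aemeasurable]
    _ ≤ ENNReal.ofReal (((exp 1 * (l * l))⁻¹) ^ k) * ∫⁻ y, 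
        ENNReal.ofReal (6 * exp (k * g ^ 2 / 1000)) ∂μ := by
        gcongr with y
        exact theta S g k hg hg1 (by exact_mod_cast hk) hkK _ (norm_unit _)
    _ = _ := by
        rw [lintegral_const, measure_univ, mul_one, ← ENNReal.ofReal_mul (by positivity)]

lemma cell_bound {n : ℕ} {F : EuclideanSpace ℝ (Fin n) → ℝ≥0∞}
    {T : EuclideanSpace ℝ (Fin n) →L[ℝ] EuclideanSpace ℝ (Fin n)} {K α : ℝ} (S : SU F T K α)
    (g : ℝ) (k : ℕ) (hg : 0 < g) (hg1 : g ≤ 1)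
    (hk : 1 ≤ k) (hkK : (k:ℝ) ≤ 0.00000001 * K * g ^ α) (l1 l2 : ℝ) (hG : g ≤ l2 - l1)
    (D : Set (EuclideanSpace ℝ (Fin n) × EuclideanSpace ℝ (Fin n))) (hD : MeasurableSet D)
    (h7 : ∀ z ∈ D, ‖T z.1‖ ≤ 7 ∧ ‖T z.2‖ ≤ 7)
    (hrho : ∀ z ∈ D, rho (T z.1) (T z.2) ≤ g ^ 2 / 8000)
    (hd1 : ∀ z ∈ D, Rr (T z.1) ≤ l1 ∧ l1 ≤ Rr (T z.1) + g / 100)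
    (hd2 : ∀ z ∈ D, l2 ≤ Rr (T z.2) ∧ Rr (T z.2) ≤ l2 + g / 100) :
    ((volume.withDensity F).prod (volume.withDensity F)) D ≤
      ENNReal.ofReal (6 * exp (-(k * (l2 - l1) ^ 2 / 400))) := by
  have hprob := S.lcd.isProb
  set μ := (volume.withDensity F)
  rcases D.eq_empty_or_nonempty with rfl | ⟨z0, hz0⟩
  · simp
  have hl1 : 1 ≤ l1 := (Rr_one _).trans (hd1 z0 hz0).1
  have hl2 : l2 ≤ √50 := by
    refine (hd2 z0 hz0).1.trans ?_
    unfold Rr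
    apply Real.sqrt_le_sqrt
    have := (h7 z0 hz0).2
    nlinarith [norm_nonneg (T z0.2)]
  have hl2' : l1 < l2 := by linarith
  set m := (l1 + l2) / 2 with hm
  have hmpos : 0 < m := by rw [hm]; linarith
  have hm50 : m ^ 2 ≤ 50 := by
    have : m ≤ √50 := by rw [hm]; linarith
    calc m ^ 2 ≤ √50 ^ 2 := by gcongr
      _ = 50 := Real.sq_sqrt (by norm_num)
  set low : ℝ := ((exp 1 * (l1 * l2))⁻¹ * exp (-3 * (g / 100) ^ 2 - 5 * (g ^ 2 / 8000))) ^ k with hlow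
  have hl2p : 0 < l2 := by linarith
  have hl1p : 0 < l1 := by linarith
  have hlowpos : 0 < low := by positivity
  have hsub : D ⊆ {z | ‖T z.1‖ ≤ 7 ∧ ‖T z.2‖ ≤ 7} := h7
  have key : ENNReal.ofReal low * (μ.prod μ) D ≤
      ENNReal.ofReal (((exp 1 * (m * m))⁻¹) ^ k * (6 * exp (k * g ^ 2 / 1000))) := by
    calc ENNReal.ofReal low * (μ.prod μ) D = ∫⁻ z in D, ENNReal.ofReal low ∂(μ.prod μ) := by
          rw [setLIntegral_const]
      _ ≤ ∫⁻ z in D, ENNReal.ofReal (kk (T z.1) (T z.2) l1 l2) ^ k ∂(μ.prod μ) := by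
          apply setLIntegral_mono' hD
          intro z hz
          rw [hlow, ENNReal.ofReal_pow (by positivity)]
          gcongr
          have hr := hrho z hz
          have R1 := Rr_one (T z.1)
          have R2 := Rr_one (T z.2)
          refine le_trans ?_ (kk_lower (T z.1) (T z.2) l1 l2 (g / 100) ?_ ?_ ?_ ?_)
          · gcongr
          · nlinarith
          · linarith
          · have := hd1 z hz
            rw [abs_le]; constructor
            · have : 1 ≤ l1 / Rr (T z.1) := by rw [one_le_div (by linarith)]; exact this.1
              linarith
            · rw [sub_le_iff_le_add, div_le_iff₀ (by linarith)]
              nlinarith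
          · have := hd2 z hz
            rw [abs_le]; constructor
            · rw [le_sub_iff_add_le, le_div_iff₀ (by linarith)]
              nlinarith
            · have : l2 / Rr (T z.2) ≤ 1 := by rw [div_le_one (by linarith)]; exact this.1
              linarith
      _ ≤ ∫⁻ z in {z | ‖T z.1‖ ≤ 7 ∧ ‖T z.2‖ ≤ 7}, ENNReal.ofReal (kk (T z.1) (T z.2) l1 l2) ^ k ∂(μ.prod μ) :=
          lintegral_mono_set hsub
      _ ≤ _ := kk_star S.lcd T 7 k l1 l2
      _ ≤ _ := diag_bound S g k hg hg1 hk hkK m hmpos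
  have h2 : (μ.prod μ) D ≤ ENNReal.ofReal (((exp 1 * (m * m))⁻¹) ^ k * (6 * exp (k * g ^ 2 / 1000)) / low) := by
    rw [ENNReal.ofReal_div_of_pos hlowpos, ENNReal.le_div_iff_mul_le (by simp [hlowpos]) (by simp), mul_comm]
    exact key
  refine h2.trans (ENNReal.ofReal_le_ofReal ?_)
  rw [div_le_iff₀ hlowpos, hlow]
  have e1 : (exp 1 * (m * m))⁻¹ ≤ exp (-((l2 - l1) ^ 2 / 200)) * (exp 1 * (l1 * l2))⁻¹ := by
    have h3 : l1 * l2 ≤ exp (-((l2 - l1) ^ 2 / 200)) * (m * m) := by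
      have h4 := Real.add_one_le_exp (-((l2 - l1) ^ 2 / 200))
      have h5 : l1 * l2 = m * m - (l2 - l1) ^ 2 / 4 := by rw [hm]; ring
      have h6 : (-((l2 - l1) ^ 2 / 200) + 1) * (m * m) ≤ exp (-((l2 - l1) ^ 2 / 200)) * (m * m) := by gcongr
      have h7 : 0 ≤ (l2 - l1) ^ 2 := sq_nonneg _
      nlinarith
    rw [mul_inv, mul_inv (exp 1) (l1 * l2)]
    have h8 : (m * m)⁻¹ ≤ exp (-((l2 - l1) ^ 2 / 200)) * (l1 * l2)⁻¹ := by
      rw [← div_eq_mul_inv, le_div_iff₀ (by positivity), inv_mul_le_iff₀ (by positivity)]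
      linarith
    calc (exp 1)⁻¹ * (m * m)⁻¹ ≤ (exp 1)⁻¹ * (exp (-((l2 - l1) ^ 2 / 200)) * (l1 * l2)⁻¹) := by gcongr
      _ = _ := by ring
  calc ((exp 1 * (m * m))⁻¹) ^ k * (6 * exp (k * g ^ 2 / 1000))
      ≤ (exp (-((l2 - l1) ^ 2 / 200)) * (exp 1 * (l1 * l2))⁻¹) ^ k * (6 * exp (k * g ^ 2 / 1000)) := by
        gcongr
    _ = 6 * (((exp 1 * (l1 * l2))⁻¹) ^ k * exp (k * (-((l2 - l1) ^ 2 / 200)) + k * g ^ 2 / 1000)) := by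
        rw [mul_pow, ← Real.exp_nat_mul, Real.exp_add]; ring
    _ ≤ 6 * (((exp 1 * (l1 * l2))⁻¹) ^ k * exp (-(k * (l2 - l1) ^ 2 / 400) + k * (-3 * (g / 100) ^ 2 - 5 * (g ^ 2 / 8000)))) := by
        refine mul_le_mul_of_nonneg_left (mul_le_mul_of_nonneg_left (Real.exp_le_exp.2 ?_) (by positivity)) (by norm_num)
        have h9 : g ^ 2 ≤ (l2 - l1) ^ 2 := by gcongr
        have h10 : (k:ℝ) * g ^ 2 ≤ k * (l2 - l1) ^ 2 := by gcongr
        have h11 : (0:ℝ) ≤ k * g ^ 2 := by positivity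
        nlinarith
    _ = _ := by
        rw [mul_pow, ← Real.exp_nat_mul, Real.exp_add]; ring

lemma lemA {n : ℕ} {F : EuclideanSpace ℝ (Fin n) → ℝ≥0∞}
    {T : EuclideanSpace ℝ (Fin n) →L[ℝ] EuclideanSpace ℝ (Fin n)} {K α : ℝ} (S : SU F T K α)
    (g : ℝ) (k : ℕ) (hg : 0 < g) (hg1 : g ≤ 1)
    (hk : 1 ≤ k) (hkK : (k:ℝ) ≤ 0.00000001 * K * g ^ α) (hkg : 20000 ≤ (k:ℝ) * g ^ 2) (r : ℝ) :
    ((volume.withDensity F).prod (volume.withDensity F))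
      {z | Rr (T z.1) ≤ r ∧ r + g ≤ Rr (T z.2) ∧ ‖T z.2‖ ≤ 7 ∧ rho (T z.1) (T z.2) ≤ g ^ 2 / 8000} ≤
      ENNReal.ofReal (24 * exp (-(k * g ^ 2 / 400))) := by
  have hprob := S.lcd.isProb
  set μ := (volume.withDensity F)
  set D : ℕ × ℕ → Set (EuclideanSpace ℝ (Fin n) × EuclideanSpace ℝ (Fin n)) := fun p =>
    {z | (Rr (T z.1) ≤ r - p.1 * (g / 100) ∧ r - p.1 * (g / 100) ≤ Rr (T z.1) + g / 100) ∧
      (r + g + p.2 * (g / 100) ≤ Rr (T z.2) ∧ Rr (T z.2) ≤ r + g + p.2 * (g / 100) + g / 100) ∧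
      ‖T z.2‖ ≤ 7 ∧ rho (T z.1) (T z.2) ≤ g ^ 2 / 8000} with hD
  have hDm : ∀ p, MeasurableSet (D p) := by
    intro p
    have hrc : Continuous fun z : EuclideanSpace ℝ (Fin n) × EuclideanSpace ℝ (Fin n) =>
        rho (T z.1) (T z.2) := rho_cont.comp (by fun_prop : Continuous fun
          z : EuclideanSpace ℝ (Fin n) × EuclideanSpace ℝ (Fin n) => (T z.1, T z.2))
    apply IsClosed.measurableSet
    simp only [hD]
    refine ((isClosed_le ?_ ?_).and (isClosed_le ?_ ?_)).and
      (((isClosed_le ?_ ?_).and (isClosed_le ?_ ?_)).and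
      ((isClosed_le ?_ ?_).and (isClosed_le hrc ?_))) <;> fun_prop
  have hcov : {z : EuclideanSpace ℝ (Fin n) × EuclideanSpace ℝ (Fin n) | Rr (T z.1) ≤ r ∧
      r + g ≤ Rr (T z.2) ∧ ‖T z.2‖ ≤ 7 ∧ rho (T z.1) (T z.2) ≤ g ^ 2 / 8000} ⊆ ⋃ p, D p := by
    rintro z ⟨h1, h2, h3, h4⟩
    rw [Set.mem_iUnion]
    have hw : 0 < g / 100 := by positivity
    refine ⟨(⌊(r - Rr (T z.1)) / (g / 100)⌋₊, ⌊(Rr (T z.2) - r - g) / (g / 100)⌋₊), ⟨?_, ?_⟩, ⟨?_, ?_⟩, h3, h4⟩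
    · have := Nat.floor_le (a := (r - Rr (T z.1)) / (g / 100)) (div_nonneg (by linarith) hw.le)
      rw [le_div_iff₀ hw] at this
      dsimp only; linarith
    · have := (Nat.lt_floor_add_one ((r - Rr (T z.1)) / (g / 100))).le
      rw [div_le_iff₀ hw] at this
      dsimp only; linarith
    · have := Nat.floor_le (a := (Rr (T z.2) - r - g) / (g / 100)) (div_nonneg (by linarith) hw.le)
      rw [le_div_iff₀ hw] at this
      dsimp only; linarith
    · have := (Nat.lt_floor_add_one ((Rr (T z.2) - r - g) / (g / 100))).le
      rw [div_le_iff₀ hw] at this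
      dsimp only; linarith
  have hone : ∀ p : ℕ × ℕ, (μ.prod μ) (D p) ≤
      ENNReal.ofReal (24 / 4 * exp (-(k * g ^ 2 / 400))) * (ENNReal.ofReal ((1/2) ^ p.1) * ENNReal.ofReal ((1/2) ^ p.2)) := by
    rintro ⟨a, b⟩
    have hG : g + ((a:ℝ) + b) * (g / 100) = (r + g + b * (g / 100)) - (r - a * (g / 100)) := by ring
    have hpos : (0:ℝ) ≤ ((a:ℝ) + b) * (g / 100) := by positivity
    refine (cell_bound S g k hg hg1 hk hkK (r - a * (g / 100)) (r + g + b * (g / 100)) ?_ (D (a, b)) (hDm _)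
      ?_ ?_ ?_ ?_).trans ?_
    · rw [← hG]; linarith
    · rintro z ⟨⟨h1, -⟩, ⟨h2, -⟩, h3, -⟩
      refine ⟨?_, h3⟩
      have h4 : Rr (T z.1) ≤ Rr (T z.2) := by
        dsimp only at h1 h2
        linarith
      have h5 : Rr (T z.1) ^ 2 ≤ Rr (T z.2) ^ 2 := by
        have := Rr_pos (T z.1)
        gcongr
      rw [Rr_sq, Rr_sq] at h5
      have h6 : ‖T z.1‖ ≤ ‖T z.2‖ := (sq_le_sq₀ (by positivity) (by positivity)).1 (by linarith)
      linarith
    · exact fun z hz => hz.2.2.2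
    · exact fun z hz => hz.1
    · exact fun z hz => hz.2.1
    · rw [← hG, ← ENNReal.ofReal_mul (by positivity), ← ENNReal.ofReal_mul (by positivity)]
      apply ENNReal.ofReal_le_ofReal
      have e1 : (1/2 : ℝ) ^ a * (1/2) ^ b = ((1/2) ^ (a + b)) := by rw [pow_add]
      have e2 : exp (-1) ≤ 1 / 2 := by
        rw [Real.exp_neg, inv_le_comm₀ (by positivity) (by norm_num)]
        have := Real.exp_one_gt_d9
        norm_num; linarith
      have e3 : exp (-((a:ℝ) + b)) ≤ (1/2) ^ (a + b) := by
        calc exp (-((a:ℝ) + b)) = exp (-1) ^ (a + b) := by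
              rw [← Real.exp_nat_mul]; congr 1; push_cast; ring
          _ ≤ _ := by gcongr
      rw [e1]
      calc 6 * exp (-(k * (g + ((a:ℝ) + b) * (g / 100)) ^ 2 / 400))
          ≤ 6 * exp (-(k * g ^ 2 / 400) + -((a:ℝ) + b)) := by
            gcongr
            have : ((a:ℝ) + b) * 20000 ≤ ((a:ℝ) + b) * (k * g ^ 2) := by gcongr
            have h2 : 0 ≤ (k:ℝ) * (((a:ℝ) + b) * (g / 100)) ^ 2 := by positivity
            nlinarith
        _ = 24 / 4 * exp (-(k * g ^ 2 / 400)) * exp (-((a:ℝ) + b)) := by rw [Real.exp_add]; ring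
        _ ≤ _ := by gcongr
  have hgeo : ∑' a : ℕ, ENNReal.ofReal ((1/2) ^ a) = 2 := by
    rw [← ENNReal.ofReal_tsum_of_nonneg (fun j => by positivity) summable_geometric_two, tsum_geometric_two]
    simp
  calc _ ≤ (μ.prod μ) (⋃ p, D p) := measure_mono hcov
    _ ≤ ∑' p, (μ.prod μ) (D p) := measure_iUnion_le _
    _ ≤ ∑' p : ℕ × ℕ, ENNReal.ofReal (24 / 4 * exp (-(k * g ^ 2 / 400))) * (ENNReal.ofReal ((1/2) ^ p.1) * ENNReal.ofReal ((1/2) ^ p.2)) :=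
        ENNReal.tsum_le_tsum hone
    _ = ENNReal.ofReal (24 / 4 * exp (-(k * g ^ 2 / 400))) * 4 := by
        rw [ENNReal.tsum_mul_left, ENNReal.tsum_prod (f := fun a b : ℕ => ENNReal.ofReal ((1/2) ^ a) * ENNReal.ofReal ((1/2) ^ b))]
        simp_rw [ENNReal.tsum_mul_left, ENNReal.tsum_mul_right, hgeo]
        norm_num
    _ = _ := by
        rw [show (4:ℝ≥0∞) = ENNReal.ofReal 4 by simp, ← ENNReal.ofReal_mul (by positivity)]
        congr 1; ring

lemma cheb_num (K α g : ℝ) (hK : 0 < K) (hα1 : 1 ≤ α) (hα2 : α ≤ 2) (hg : 0 < g) (hg1 : g ≤ 1)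
    (hC : 4000000000000 ≤ K * g ^ (2 + α)) : (((2:ℝ) / K) ^ (1 / α)) ^ 2 ≤ 1 / 8 * (g ^ 2 / 8000) ^ 2 := by
  have hα : 0 < α := by linarith
  have hgp : 0 < g ^ (2 + α) := by positivity
  have h1 : 2 / K ≤ 0.0000000000005 * g ^ (2 + α) := by
    rw [div_le_iff₀ hK]; nlinarith
  have h2 : (((2:ℝ) / K) ^ (1 / α)) ^ 2 = (2 / K) ^ (2 / α) := by
    rw [← Real.rpow_natCast, ← Real.rpow_mul (by positivity)]; congr 1; push_cast; ring
  rw [h2]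
  have a1 : 1 ≤ 2 / α := by rw [le_div_iff₀ hα]; linarith
  calc (2 / K) ^ (2 / α) ≤ (0.0000000000005 * g ^ (2 + α)) ^ (2 / α) := by gcongr
    _ = (0.0000000000005 : ℝ) ^ (2 / α) * g ^ ((2 + α) * (2 / α)) := by
        rw [Real.mul_rpow (by positivity) (by positivity), ← Real.rpow_mul hg.le]
    _ ≤ 0.0000000000005 * g ^ (4:ℝ) := by
        gcongr ?_ * ?_
        · calc (0.0000000000005 : ℝ) ^ (2 / α) ≤ (0.0000000000005 : ℝ) ^ (1:ℝ) :=
              Real.rpow_le_rpow_of_exponent_ge (by norm_num) (by norm_num) a1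
            _ = _ := Real.rpow_one _
        · apply Real.rpow_le_rpow_of_exponent_ge hg hg1
          have : (2 + α) * (2 / α) = 2 * (2 / α) + 2 := by field_simp
          rw [this]; linarith
    _ = 0.0000000000005 * g ^ 4 := by rw [show (4:ℝ) = ((4:ℕ):ℝ) by norm_num, Real.rpow_natCast]
    _ ≤ _ := by
        have : 0 < g ^ 4 := by positivity
        ring_nf; ring_nf at this; linarith

lemma cheb {n : ℕ} {F : EuclideanSpace ℝ (Fin n) → ℝ≥0∞}
    {T : EuclideanSpace ℝ (Fin n) →L[ℝ] EuclideanSpace ℝ (Fin n)} {K α : ℝ} (S : SU F T K α)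
    (g : ℝ) (hg : 0 < g) (hg1 : g ≤ 1) (hC : 4000000000000 ≤ K * g ^ (2 + α)) (w : EuclideanSpace ℝ (Fin n)) :
    (volume.withDensity F) {z | g ^ 2 / 8000 < rho (T z) w} ≤ 1 / 8 := by
  have hprob := S.lcd.isProb
  set μ := (volume.withDensity F)
  have h1 : μ {z | ENNReal.ofReal ((g ^ 2 / 8000) ^ 2) ≤ ENNReal.ofReal (⟪T z, (Rr w)⁻¹ • w⟫ ^ (2 * 1))} ≤
      (∫⁻ z, ENNReal.ofReal (⟪T z, (Rr w)⁻¹ • w⟫ ^ (2 * 1)) ∂μ) / ENNReal.ofReal ((g ^ 2 / 8000) ^ 2) :=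
    meas_ge_le_lintegral_div (by fun_prop) (by simp [hg.ne']) (by simp)
  have h2 := S.mom 1 le_rfl ((Rr w)⁻¹ • w) (norm_unit w)
  refine (measure_mono ?_).trans (h1.trans ?_)
  · intro z hz
    simp only [Set.mem_ofPred_eq] at hz ⊢
    apply ENNReal.ofReal_le_ofReal
    rw [mul_one, ← sq_abs (⟪T z, (Rr w)⁻¹ • w⟫)]
    have := rho_le_inner (T z) w
    gcongr
    linarith
  · apply ENNReal.div_le_of_le_mul
    refine h2.trans ?_
    have hK := S.hK
    rw [← ENNReal.ofReal_pow (by positivity)]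
    have e : (1 / 8 : ℝ≥0∞) = ENNReal.ofReal (1 / 8) := by
      rw [ENNReal.ofReal_div_of_pos (by norm_num)]; simp
    rw [e, ← ENNReal.ofReal_mul (by norm_num)]
    apply ENNReal.ofReal_le_ofReal
    have := cheb_num K α g hK S.hα1 S.hα2 hg hg1 hC
    simpa using this

lemma k_exists (K α g : ℝ) (hK : 0 < K) (hα1 : 1 ≤ α) (hα2 : α ≤ 2) (hg : 0 < g) (hg1 : g ≤ 1)
    (hC : 4000000000000 ≤ K * g ^ (2 + α)) : ∃ k : ℕ, 1 ≤ k ∧ (k:ℝ) ≤ 0.00000001 * K * g ^ α ∧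
      20000 ≤ (k:ℝ) * g ^ 2 ∧ 0.0000000000125 * (K * g ^ (2 + α)) ≤ k * g ^ 2 / 400 := by
  have e : g ^ (2 + α) = g ^ 2 * g ^ α := by
    rw [Real.rpow_add hg]; norm_cast
  have hga : 0 < g ^ α := by positivity
  have hg2 : 0 < g ^ 2 := by positivity
  have hx : 40000 ≤ 0.00000001 * K * g ^ α := by
    have h1 : g ^ 2 ≤ 1 := by nlinarith
    have : K * g ^ (2 + α) ≤ K * g ^ α := by
      rw [e]
      have : g ^ 2 * g ^ α ≤ 1 * g ^ α := by gcongr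
      rw [one_mul] at this
      gcongr
    nlinarith
  set x := 0.00000001 * K * g ^ α with hxd
  have hf := Nat.lt_floor_add_one x
  have hf2 := Nat.floor_le (a := x) (by linarith)
  have hh : x / 2 ≤ ⌊x⌋₊ := by linarith
  have hkg : 0.00000001 / 2 * (K * g ^ (2 + α)) ≤ (⌊x⌋₊ : ℝ) * g ^ 2 := by
    calc 0.00000001 / 2 * (K * g ^ (2 + α)) = x / 2 * g ^ 2 := by rw [hxd, e]; ring
      _ ≤ _ := by gcongr
  refine ⟨⌊x⌋₊, ?_, hf2, ?_, ?_⟩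
  · have : (1:ℝ) ≤ ⌊x⌋₊ := by linarith
    exact_mod_cast this
  · linarith
  · linarith

lemma section_bound {V : Type*} [MeasurableSpace V] (μ : Measure V) [IsProbabilityMeasure μ]
    (P : Set V) (Q : Set V) (Bad : Set (V × V)) (hP : MeasurableSet P) (hQ : MeasurableSet Q)
    (hB : MeasurableSet Bad)
    (hbad : ∀ y, μ {x | (x, y) ∈ Bad} ≤ 1 / 8) (h4 : 1 / 4 ≤ μ P) :
    μ Q ≤ 8 * (μ.prod μ) {z | z.1 ∈ P ∧ z.2 ∈ Q ∧ z ∉ Bad} := by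
  have hm : MeasurableSet {z : V × V | z.1 ∈ P ∧ z.2 ∈ Q ∧ z ∉ Bad} :=
    (measurable_fst hP).inter ((measurable_snd hQ).inter hB.compl)
  rw [Measure.prod_apply_symm hm]
  have h1 : ∀ y, Q.indicator (fun _ => (1/8 : ℝ≥0∞)) y ≤
      μ ((fun x => (x, y)) ⁻¹' {z : V × V | z.1 ∈ P ∧ z.2 ∈ Q ∧ z ∉ Bad}) := by
    intro y
    by_cases hy : y ∈ Q
    · rw [Set.indicator_of_mem hy]
      have hsub : P ⊆ ((fun x => (x, y)) ⁻¹' {z : V × V | z.1 ∈ P ∧ z.2 ∈ Q ∧ z ∉ Bad}) ∪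
          {x | (x, y) ∈ Bad} := by
        intro x hx
        by_cases hb : (x, y) ∈ Bad
        · exact Or.inr hb
        · exact Or.inl ⟨hx, hy, hb⟩
      have h2 := h4.trans ((measure_mono hsub).trans (measure_union_le _ _))
      have h3 := h2.trans (add_le_add_right (hbad y) _)
      have e4 : (1 / 4 : ℝ≥0∞) = 1 / 8 + 1 / 8 := by
        rw [ENNReal.div_add_div_same, ENNReal.div_eq_div_iff] <;> norm_num
      rw [e4] at h3
      exact (ENNReal.add_le_add_iff_right (by simp)).1 h3
    · rw [Set.indicator_of_notMem hy]; simp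
  have h2 := lintegral_mono h1 (μ := μ)
  rw [lintegral_indicator_const hQ] at h2
  calc μ Q = 8 * (1 / 8 * μ Q) := by
        rw [← mul_assoc, ENNReal.mul_div_cancel (by norm_num) (by norm_num), one_mul]
    _ ≤ _ := by gcongr

lemma lemB_two {n : ℕ} {F : EuclideanSpace ℝ (Fin n) → ℝ≥0∞}
    {T : EuclideanSpace ℝ (Fin n) →L[ℝ] EuclideanSpace ℝ (Fin n)} {K α : ℝ} (S : SU F T K α)
    (g : ℝ) (hg : 0 < g) (hg1 : g ≤ 1) (hC : 4000000000000 ≤ K * g ^ (2 + α)) (r : ℝ)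
    (h4 : 1 / 4 ≤ (volume.withDensity F) {z | Rr (T z) ≤ r}) :
    (volume.withDensity F) {z | r + g ≤ Rr (T z) ∧ ‖T z‖ ≤ 7} ≤
      ENNReal.ofReal (192 * exp (-(0.0000000000125 * (K * g ^ (2 + α))))) := by
  have hprob := S.lcd.isProb
  obtain ⟨k, hk, hkK, hkg, hke⟩ := k_exists K α g S.hK S.hα1 S.hα2 hg hg1 hC
  have hA := lemA S g k hg hg1 hk hkK hkg r
  set μ := (volume.withDensity F)
  have hrc : Continuous fun z : EuclideanSpace ℝ (Fin n) × EuclideanSpace ℝ (Fin n) =>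
        rho (T z.1) (T z.2) := rho_cont.comp (by fun_prop : Continuous fun
          z : EuclideanSpace ℝ (Fin n) × EuclideanSpace ℝ (Fin n) => (T z.1, T z.2))
  have hb := section_bound μ {z | Rr (T z) ≤ r} {z | r + g ≤ Rr (T z) ∧ ‖T z‖ ≤ 7}
    {z | g ^ 2 / 8000 < rho (T z.1) (T z.2)}
    (isClosed_le (by fun_prop) (by fun_prop)).measurableSet
    (IsClosed.measurableSet (by refine (isClosed_le ?_ ?_).and (isClosed_le ?_ ?_) <;> fun_prop))
    (isOpen_lt continuous_const hrc).measurableSet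
    (fun y => cheb S g hg hg1 hC (T y)) h4
  refine hb.trans ?_
  have e8 : ENNReal.ofReal (192 * exp (-(0.0000000000125 * (K * g ^ (2 + α))))) =
      8 * ENNReal.ofReal (24 * exp (-(0.0000000000125 * (K * g ^ (2 + α))))) := by
    rw [show (192:ℝ) = 8 * 24 by norm_num, mul_assoc, ENNReal.ofReal_mul (by norm_num)]; simp
  rw [e8]
  gcongr
  refine (measure_mono ?_).trans (hA.trans ?_)
  · rintro z ⟨h1, ⟨h2, h3⟩, h5⟩
    exact ⟨h1, h2, h3, not_lt.1 h5⟩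
  · gcongr

lemma lemB_one {n : ℕ} {F : EuclideanSpace ℝ (Fin n) → ℝ≥0∞}
    {T : EuclideanSpace ℝ (Fin n) →L[ℝ] EuclideanSpace ℝ (Fin n)} {K α : ℝ} (S : SU F T K α)
    (g : ℝ) (hg : 0 < g) (hg1 : g ≤ 1) (hC : 4000000000000 ≤ K * g ^ (2 + α)) (r : ℝ)
    (h4 : 1 / 4 ≤ (volume.withDensity F) {z | r + g ≤ Rr (T z) ∧ ‖T z‖ ≤ 7}) :
    (volume.withDensity F) {z | Rr (T z) ≤ r} ≤
      ENNReal.ofReal (192 * exp (-(0.0000000000125 * (K * g ^ (2 + α))))) := by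
  have hprob := S.lcd.isProb
  obtain ⟨k, hk, hkK, hkg, hke⟩ := k_exists K α g S.hK S.hα1 S.hα2 hg hg1 hC
  have hA := lemA S g k hg hg1 hk hkK hkg r
  set μ := (volume.withDensity F)
  have hrc : Continuous fun z : EuclideanSpace ℝ (Fin n) × EuclideanSpace ℝ (Fin n) =>
        rho (T z.1) (T z.2) := rho_cont.comp (by fun_prop : Continuous fun
          z : EuclideanSpace ℝ (Fin n) × EuclideanSpace ℝ (Fin n) => (T z.1, T z.2))
  have hb := section_bound μ {z | r + g ≤ Rr (T z) ∧ ‖T z‖ ≤ 7} {z | Rr (T z) ≤ r} 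
    {z | g ^ 2 / 8000 < rho (T z.1) (T z.2)}
    (IsClosed.measurableSet (by refine (isClosed_le ?_ ?_).and (isClosed_le ?_ ?_) <;> fun_prop))
    (isClosed_le (by fun_prop) (by fun_prop)).measurableSet
    (isOpen_lt continuous_const hrc).measurableSet
    (fun y => cheb S g hg hg1 hC (T y)) h4
  refine hb.trans ?_
  have e8 : ENNReal.ofReal (192 * exp (-(0.0000000000125 * (K * g ^ (2 + α))))) =
      8 * ENNReal.ofReal (24 * exp (-(0.0000000000125 * (K * g ^ (2 + α))))) := by
    rw [show (192:ℝ) = 8 * 24 by norm_num, mul_assoc, ENNReal.ofReal_mul (by norm_num)]; simp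
  rw [e8]
  gcongr
  set W := {z : EuclideanSpace ℝ (Fin n) × EuclideanSpace ℝ (Fin n) | Rr (T z.1) ≤ r ∧
      r + g ≤ Rr (T z.2) ∧ ‖T z.2‖ ≤ 7 ∧ rho (T z.1) (T z.2) ≤ g ^ 2 / 8000} with hW
  have hWm : MeasurableSet W := by
    apply IsClosed.measurableSet
    refine (isClosed_le ?_ ?_).and ((isClosed_le ?_ ?_).and ((isClosed_le ?_ ?_).and
      (isClosed_le hrc ?_))) <;> fun_prop
  have hswap : (μ.prod μ) (Prod.swap ⁻¹' W) = (μ.prod μ) W :=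
    (Measure.measurePreserving_swap (μ := μ) (ν := μ)).measure_preimage hWm.nullMeasurableSet
  refine (measure_mono (t := Prod.swap ⁻¹' W) ?_).trans ?_
  · rintro z ⟨⟨h2, h3⟩, h1, h5⟩
    refine ⟨h1, h2, h3, ?_⟩
    rw [rho_symm]
    exact not_lt.1 h5
  · rw [hswap]
    refine hA.trans ?_
    gcongr

lemma meas_norm_gt {n : ℕ} {F : EuclideanSpace ℝ (Fin n) → ℝ≥0∞}
    {T : EuclideanSpace ℝ (Fin n) →L[ℝ] EuclideanSpace ℝ (Fin n)} 
    (h2 : ∫⁻ z, ENNReal.ofReal (‖T z‖ ^ 2) ∂(volume.withDensity F) = 1) (a : ℝ) (ha : 0 < a) :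
    (volume.withDensity F) {z | a < ‖T z‖} ≤ ENNReal.ofReal (1 / a ^ 2) := by
  set μ := (volume.withDensity F)
  have h1 : μ {z | ENNReal.ofReal (a ^ 2) ≤ ENNReal.ofReal (‖T z‖ ^ 2)} ≤
      (∫⁻ z, ENNReal.ofReal (‖T z‖ ^ 2) ∂μ) / ENNReal.ofReal (a ^ 2) :=
    meas_ge_le_lintegral_div (by fun_prop) (by simp [ha.ne']) (by simp)
  refine (measure_mono ?_).trans (h1.trans ?_)
  · intro z hz
    simp only [Set.mem_ofPred_eq] at hz ⊢
    gcongr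
  · rw [h2, ENNReal.ofReal_div_of_pos (by positivity)]; simp

lemma half_mass {n : ℕ} {F : EuclideanSpace ℝ (Fin n) → ℝ≥0∞} (hF : LCD F)
    {T : EuclideanSpace ℝ (Fin n) →L[ℝ] EuclideanSpace ℝ (Fin n)} 
    (h2 : ∫⁻ z, ENNReal.ofReal (‖T z‖ ^ 2) ∂(volume.withDensity F) = 1) :
    ENNReal.ofReal (1 / 2) ≤ (volume.withDensity F) {z | ‖T z‖ ≤ 3 / 2} := by
  have hprob := hF.isProb
  have h1 := meas_norm_gt h2 (3/2) (by norm_num)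
  set μ := (volume.withDensity F)
  have hm : MeasurableSet {z | 3 / 2 < ‖T z‖} := (isOpen_lt (by fun_prop) (by fun_prop)).measurableSet
  have e : {z | ‖T z‖ ≤ 3 / 2} = {z | 3 / 2 < ‖T z‖}ᶜ := by ext z; simp
  rw [e, prob_compl_eq_one_sub hm]
  calc ENNReal.ofReal (1 / 2) ≤ ENNReal.ofReal (1 - 1 / (3/2) ^ 2) := by
        apply ENNReal.ofReal_le_ofReal; norm_num
    _ = 1 - ENNReal.ofReal (1 / (3/2) ^ 2) := by
        rw [ENNReal.ofReal_sub _ (by positivity), ENNReal.ofReal_one]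
    _ ≤ _ := by gcongr

lemma tailQ {n : ℕ} {F : EuclideanSpace ℝ (Fin n) → ℝ≥0∞} (hF : LCD F)
    {T : EuclideanSpace ℝ (Fin n) →L[ℝ] EuclideanSpace ℝ (Fin n)} 
    (h2 : ∫⁻ z, ENNReal.ofReal (‖T z‖ ^ 2) ∂(volume.withDensity F) = 1) (e : ℝ) (he : 0 ≤ e)
    (hee : (volume.withDensity F) {z | 11 / 4 ≤ ‖T z‖ ∧ ‖T z‖ ≤ 7} ≤ ENNReal.ofReal e) :
    ∫⁻ z in {z | 7 < ‖T z‖}, ENNReal.ofReal (‖T z‖ ^ 2) ∂(volume.withDensity F) ≤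
      ENNReal.ofReal (2800 * e ^ 2) := by
  have hprob := hF.isProb
  have hhalf := half_mass hF h2
  have hpl := hF.pl ({z | ‖T z‖ ≤ 3 / 2}.indicator (fun _ => 1))
    ({z | 7 < ‖T z‖}.indicator (fun z => ENNReal.ofReal (‖T z‖ ^ 2)))
    ({z | 11 / 4 ≤ ‖T z‖}.indicator (fun z => ENNReal.ofReal (2 * ‖T z‖ + 3 / 2)))
  set μ := (volume.withDensity F)
  have m1 : MeasurableSet {z | ‖T z‖ ≤ 3 / 2} := (isClosed_le (by fun_prop) (by fun_prop)).measurableSet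
  have m2 : MeasurableSet {z | 7 < ‖T z‖} := (isOpen_lt (by fun_prop) (by fun_prop)).measurableSet
  have m3 : MeasurableSet {z | 11 / 4 ≤ ‖T z‖} := (isClosed_le (by fun_prop) (by fun_prop)).measurableSet
  have m4 : MeasurableSet {z | 11 / 4 ≤ ‖T z‖ ∧ ‖T z‖ ≤ 7} := by
    apply IsClosed.measurableSet
    refine (isClosed_le ?_ ?_).and (isClosed_le ?_ ?_) <;> fun_prop
  have hpl2 := hpl (Measurable.indicator (by fun_prop) m1) (Measurable.indicator (by fun_prop) m2)
    (Measurable.indicator (by fun_prop) m3) ?_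
  swap
  · intro x y
    by_cases hx : x ∈ {z | ‖T z‖ ≤ 3 / 2}
    swap
    · rw [Set.indicator_of_notMem hx]; simp
    by_cases hy : y ∈ {z | 7 < ‖T z‖}
    swap
    · rw [Set.indicator_of_notMem hy]; simp
    have hmid : ‖T y‖ ≤ 2 * ‖T ((1/2:ℝ) • (x + y))‖ + ‖T x‖ := by
      have e1 : T y = (2:ℝ) • T ((1/2:ℝ) • (x + y)) - T x := by
        rw [map_smul, map_add, smul_smul]; norm_num
      calc ‖T y‖ = ‖(2:ℝ) • T ((1/2:ℝ) • (x + y)) - T x‖ := by rw [← e1]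
        _ ≤ ‖(2:ℝ) • T ((1/2:ℝ) • (x + y))‖ + ‖T x‖ := norm_sub_le _ _
        _ = _ := by rw [norm_smul]; norm_num
    simp only [Set.mem_ofPred_eq] at hx hy
    have hz : (1/2:ℝ) • (x + y) ∈ {z | 11 / 4 ≤ ‖T z‖} := by
      simp only [Set.mem_ofPred_eq]; linarith
    rw [Set.indicator_of_mem (show x ∈ {z | ‖T z‖ ≤ 3 / 2} from hx),
      Set.indicator_of_mem (show y ∈ {z | 7 < ‖T z‖} from hy), Set.indicator_of_mem hz, one_mul,
      ← ENNReal.ofReal_pow (by positivity)]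
    apply ENNReal.ofReal_le_ofReal
    gcongr
    linarith
  rw [lintegral_indicator_const m1, one_mul, lintegral_indicator m2] at hpl2
  set Q := ∫⁻ z in {z | 7 < ‖T z‖}, ENNReal.ofReal (‖T z‖ ^ 2) ∂μ with hQ
  have hQ1 : Q ≤ 1 := by
    rw [← h2]; exact setLIntegral_le_lintegral _ _
  have hQt : Q ≠ ∞ := (hQ1.trans_lt (by simp)).ne
  have hh : ∫⁻ z, {z | 11 / 4 ≤ ‖T z‖}.indicator (fun z => ENNReal.ofReal (2 * ‖T z‖ + 3 / 2)) z ∂μ ≤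
      ENNReal.ofReal 2.55 * (ENNReal.ofReal 7 * ENNReal.ofReal e + ENNReal.ofReal (1/7) * Q) := by
    calc _ ≤ ∫⁻ z, ENNReal.ofReal 2.55 * ({z | 11 / 4 ≤ ‖T z‖ ∧ ‖T z‖ ≤ 7}.indicator (fun z => ENNReal.ofReal 7) z +
          {z | 7 < ‖T z‖}.indicator (fun z => ENNReal.ofReal (1/7) * ENNReal.ofReal (‖T z‖ ^ 2)) z) ∂μ := by
          apply lintegral_mono
          intro z
          by_cases hz : 11 / 4 ≤ ‖T z‖
          swap
          · rw [Set.indicator_of_notMem (by exact hz)]; simp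
          rw [Set.indicator_of_mem (by exact hz)]
          beta_reduce
          by_cases hz7 : ‖T z‖ ≤ 7
          · rw [Set.indicator_of_mem (show z ∈ {z | 11 / 4 ≤ ‖T z‖ ∧ ‖T z‖ ≤ 7} from ⟨hz, hz7⟩),
              Set.indicator_of_notMem (show z ∉ {z | 7 < ‖T z‖} from not_lt.2 hz7), add_zero,
              ← ENNReal.ofReal_mul (by norm_num)]
            apply ENNReal.ofReal_le_ofReal; linarith
          · rw [Set.indicator_of_notMem (show z ∉ {z | 11 / 4 ≤ ‖T z‖ ∧ ‖T z‖ ≤ 7} from fun h => hz7 h.2),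
              Set.indicator_of_mem (show z ∈ {z | 7 < ‖T z‖} from not_le.1 hz7), zero_add,
              ← ENNReal.ofReal_mul (by norm_num), ← ENNReal.ofReal_mul (by norm_num)]
            apply ENNReal.ofReal_le_ofReal
            have := not_le.1 hz7
            nlinarith
      _ = ENNReal.ofReal 2.55 * (ENNReal.ofReal 7 * μ {z | 11 / 4 ≤ ‖T z‖ ∧ ‖T z‖ ≤ 7} + ENNReal.ofReal (1/7) * Q) := by
          rw [lintegral_const_mul' _ _ (by simp), lintegral_add_left (Measurable.indicator (by fun_prop) m4),
            lintegral_indicator_const m4, lintegral_indicator m2, lintegral_const_mul' _ _ (by simp)]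
      _ ≤ _ := by gcongr
  have hfin : ENNReal.ofReal (1/2) * Q ≤
      (ENNReal.ofReal 2.55 * (ENNReal.ofReal 7 * ENNReal.ofReal e + ENNReal.ofReal (1/7) * Q)) ^ 2 :=
    calc _ ≤ μ {z | ‖T z‖ ≤ 3 / 2} * Q := by gcongr
      _ ≤ _ := hpl2
      _ ≤ _ := by gcongr
  obtain ⟨q, hq, hqQ⟩ : ∃ q : ℝ, 0 ≤ q ∧ Q = ENNReal.ofReal q :=
    ⟨Q.toReal, by positivity, (ENNReal.ofReal_toReal hQt).symm⟩
  rw [hqQ] at hfin hQ1 ⊢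
  rw [← ENNReal.ofReal_mul (by norm_num), ← ENNReal.ofReal_mul (by norm_num), ← ENNReal.ofReal_mul (by norm_num),
    ← ENNReal.ofReal_add (by positivity) (by positivity), ← ENNReal.ofReal_mul (by norm_num),
    ← ENNReal.ofReal_pow (by positivity), ENNReal.ofReal_le_ofReal_iff (by positivity)] at hfin
  rw [ENNReal.ofReal_le_one] at hQ1
  apply ENNReal.ofReal_le_ofReal
  nlinarith [sq_nonneg (7 * e - 1/7 * q)]

lemma Rr_lt_eight {n : ℕ} (v : EuclideanSpace ℝ (Fin n)) (h : ‖v‖ ≤ 7) : Rr v < 7.1 := by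
  unfold Rr
  rw [Real.sqrt_lt' (by norm_num)]
  nlinarith [norm_nonneg v]

lemma pg_small {n : ℕ} {F : EuclideanSpace ℝ (Fin n) → ℝ≥0∞}
    {T : EuclideanSpace ℝ (Fin n) →L[ℝ] EuclideanSpace ℝ (Fin n)} {K α : ℝ} (S : SU F T K α)
    (g0 : ℝ) (hg0 : 0 < g0) (hC : 4000000000000 ≤ K * g0 ^ (2 + α)) (r : ℝ)
    (h4 : 1 / 4 ≤ (volume.withDensity F) {z | Rr (T z) ≤ r}) (g : ℝ) (hg : g0 ≤ g) (hg1 : g ≤ 1) :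
    (volume.withDensity F) {z | r + g ≤ Rr (T z) ∧ ‖T z‖ ≤ 7} ≤ ENNReal.ofReal (4 * (g0 / g) ^ 2) := by
  have hK := S.hK
  have hgp : 0 < g := by linarith
  have hα1 := S.hα1
  have hC2 : 4000000000000 * (g / g0) ^ 2 ≤ K * g ^ (2 + α) := by
    have e : g ^ (2 + α) = g0 ^ (2 + α) * (g / g0) ^ (2 + α) := by
      rw [← Real.mul_rpow (by positivity) (by positivity)]; congr 1; field_simp
    have h1 : (g / g0) ^ 2 ≤ (g / g0) ^ (2 + α) := by
      rw [← Real.rpow_natCast]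
      apply Real.rpow_le_rpow_of_exponent_le
      · rw [one_le_div hg0]; exact hg
      · push_cast; linarith
    calc 4000000000000 * (g / g0) ^ 2 ≤ (K * g0 ^ (2 + α)) * (g / g0) ^ (2 + α) := by gcongr
      _ = _ := by rw [e]; ring
  have hq : 1 ≤ g / g0 := by rw [one_le_div hg0]; exact hg
  have hB := lemB_two S g hgp hg1 (by nlinarith) r h4
  refine hB.trans (ENNReal.ofReal_le_ofReal ?_)
  have h50 : 50 * (g / g0) ^ 2 ≤ 0.0000000000125 * (K * g ^ (2 + α)) := by nlinarith
  have hpos : 0 < 50 * (g / g0) ^ 2 := by positivity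
  calc 192 * exp (-(0.0000000000125 * (K * g ^ (2 + α)))) ≤ 192 * (50 * (g / g0) ^ 2)⁻¹ := by
        gcongr
        rw [Real.exp_neg]
        apply inv_anti₀ hpos
        have := Real.add_one_le_exp (0.0000000000125 * (K * g ^ (2 + α)))
        linarith
    _ ≤ 4 * (g0 / g) ^ 2 := by
        have : (g0 / g) ^ 2 = ((g / g0) ^ 2)⁻¹ := by rw [← inv_pow, inv_div]
        rw [this, mul_inv]
        have : 0 < ((g / g0) ^ 2)⁻¹ := by positivity
        nlinarith

lemma pg_all {n : ℕ} {F : EuclideanSpace ℝ (Fin n) → ℝ≥0∞}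
    {T : EuclideanSpace ℝ (Fin n) →L[ℝ] EuclideanSpace ℝ (Fin n)} {K α : ℝ} (S : SU F T K α)
    (g0 : ℝ) (hg0 : 0 < g0) (hg01 : g0 ≤ 1) (hC : 4000000000000 ≤ K * g0 ^ (2 + α)) (r : ℝ) (hr : 0 ≤ r)
    (h4 : 1 / 4 ≤ (volume.withDensity F) {z | Rr (T z) ≤ r}) (g : ℝ) (hg : g0 ≤ g) :
    (volume.withDensity F) {z | r + g ≤ Rr (T z) ∧ ‖T z‖ ≤ 7} ≤ ENNReal.ofReal (256 * (g0 / g) ^ 2) := by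
  have hgp : 0 < g := by linarith
  rcases le_or_gt g 1 with h1 | h1
  · refine (pg_small S g0 hg0 hC r h4 g hg h1).trans (ENNReal.ofReal_le_ofReal ?_)
    have : 0 ≤ (g0 / g) ^ 2 := by positivity
    linarith
  rcases le_or_gt g 8 with h8 | h8
  · refine (measure_mono ?_).trans ((pg_small S g0 hg0 hC r h4 1 hg01 le_rfl).trans
      (ENNReal.ofReal_le_ofReal ?_))
    · rintro z ⟨h2, h3⟩; exact ⟨by linarith, h3⟩
    · rw [div_one, div_pow, ← mul_div_assoc, le_div_iff₀ (by positivity)]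
      have : g ^ 2 ≤ 64 := by nlinarith
      have : 0 < g0 ^ 2 := by positivity
      nlinarith
  · have : {z | r + g ≤ Rr (T z) ∧ ‖T z‖ ≤ 7} = ∅ := by
      ext z
      simp only [Set.mem_ofPred_eq, Set.mem_empty_iff_false, iff_false, not_and, not_le]
      intro h2
      by_contra h3
      have := Rr_lt_eight (T z) (not_lt.1 h3)
      linarith
    rw [this]; simp

lemma dyadic_pt (x g0 : ℝ) (hg0 : 0 < g0) : ENNReal.ofReal x ≤ ENNReal.ofReal g0 +
    ∑' i : ℕ, if 2 ^ i * g0 ≤ x then ENNReal.ofReal (2 ^ i * g0) else 0 := by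
  rcases le_or_gt x g0 with h | h
  · exact (ENNReal.ofReal_le_ofReal h).trans le_self_add
  obtain ⟨m, hm1, hm2⟩ := exists_nat_pow_near (x := x / g0) (y := 2)
    ((one_le_div hg0).2 h.le) (by norm_num)
  rw [le_div_iff₀ hg0] at hm1
  rw [div_lt_iff₀ hg0] at hm2
  calc ENNReal.ofReal x ≤ ENNReal.ofReal (g0 + ∑ i ∈ Finset.range (m + 1), 2 ^ i * g0) := by
        apply ENNReal.ofReal_le_ofReal
        rw [← Finset.sum_mul, geom_sum_eq (by norm_num)]
        norm_num; linarith
    _ = ENNReal.ofReal g0 + ∑ i ∈ Finset.range (m + 1), ENNReal.ofReal (2 ^ i * g0) := by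
        rw [ENNReal.ofReal_add hg0.le (Finset.sum_nonneg fun i _ => by positivity),
          ENNReal.ofReal_sum_of_nonneg (fun i _ => by positivity)]
    _ ≤ _ := by
        gcongr
        refine le_trans (Finset.sum_le_sum fun i hi => ?_) (ENNReal.sum_le_tsum (Finset.range (m + 1)))
        rw [if_pos]
        refine le_trans ?_ hm1
        gcongr
        · norm_num
        · exact Nat.lt_succ_iff.1 (Finset.mem_range.1 hi)

lemma pos_part {n : ℕ} {F : EuclideanSpace ℝ (Fin n) → ℝ≥0∞}
    {T : EuclideanSpace ℝ (Fin n) →L[ℝ] EuclideanSpace ℝ (Fin n)} {K α : ℝ} (S : SU F T K α)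
    (g0 : ℝ) (hg0 : 0 < g0) (hg01 : g0 ≤ 1) (hC : 4000000000000 ≤ K * g0 ^ (2 + α)) (r : ℝ) (hr : 0 ≤ r)
    (h4 : 1 / 4 ≤ (volume.withDensity F) {z | Rr (T z) ≤ r}) :
    ∫⁻ z in {z | ‖T z‖ ≤ 7}, ENNReal.ofReal (Rr (T z) - r) ∂(volume.withDensity F) ≤
      ENNReal.ofReal (513 * g0) := by
  have hprob := S.lcd.isProb
  have hp := pg_all S g0 hg0 hg01 hC r hr h4
  set μ := (volume.withDensity F)
  have m1 : MeasurableSet {z | ‖T z‖ ≤ 7} := (isClosed_le (by fun_prop) (by fun_prop)).measurableSet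
  have mi : ∀ i : ℕ, MeasurableSet {z | 2 ^ i * g0 ≤ Rr (T z) - r} := fun i =>
    (isClosed_le (by fun_prop) (by fun_prop)).measurableSet
  calc _ ≤ ∫⁻ z in {z | ‖T z‖ ≤ 7}, (ENNReal.ofReal g0 + ∑' i : ℕ,
        {z | 2 ^ i * g0 ≤ Rr (T z) - r}.indicator (fun _ => ENNReal.ofReal (2 ^ i * g0)) z) ∂μ := by
        apply lintegral_mono
        intro z
        exact dyadic_pt _ g0 hg0
    _ = ENNReal.ofReal g0 * μ {z | ‖T z‖ ≤ 7} + ∑' i : ℕ, ENNReal.ofReal (2 ^ i * g0) *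
        μ ({z | 2 ^ i * g0 ≤ Rr (T z) - r} ∩ {z | ‖T z‖ ≤ 7}) := by
        rw [lintegral_add_left (by fun_prop), setLIntegral_const, lintegral_tsum]
        · congr 2
          funext i
          rw [lintegral_indicator_const (mi i), Measure.restrict_apply (mi i)]
        · intro i
          exact (Measurable.indicator (by fun_prop) (mi i)).aemeasurable
    _ ≤ ENNReal.ofReal g0 * 1 + ∑' i : ℕ, ENNReal.ofReal (256 * g0) * ENNReal.ofReal ((1/2) ^ i) := by
        refine add_le_add (by gcongr; exact prob_le_one) (ENNReal.tsum_le_tsum fun i => ?_)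
        · have h1 : (1:ℝ) ≤ 2 ^ i := one_le_pow₀ (by norm_num)
          have := hp (2 ^ i * g0) (by nlinarith)
          calc _ ≤ ENNReal.ofReal (2 ^ i * g0) * ENNReal.ofReal (256 * (g0 / (2 ^ i * g0)) ^ 2) := by
                gcongr
                refine le_trans (measure_mono ?_) this
                rintro z ⟨h2, h3⟩
                simp only [Set.mem_ofPred_eq] at h2 h3
                exact ⟨by linarith, h3⟩
            _ = _ := by
                rw [← ENNReal.ofReal_mul (by positivity), ← ENNReal.ofReal_mul (by positivity)]
                congr 1
                rw [one_div, inv_pow]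
                field_simp
    _ = _ := by
        have hgeo : ∑' a : ℕ, ENNReal.ofReal ((1/2) ^ a) = 2 := by
          rw [← ENNReal.ofReal_tsum_of_nonneg (fun j => by positivity) summable_geometric_two,
            tsum_geometric_two]
          simp
        have e2 : ∀ c : ℝ, 0 ≤ c → ENNReal.ofReal c * 2 = ENNReal.ofReal (c * 2) := by
          intro c hc; rw [ENNReal.ofReal_mul hc]; simp
        rw [ENNReal.tsum_mul_left, hgeo, mul_one, e2 _ (by positivity),
          ← ENNReal.ofReal_add (by positivity) (by positivity)]
        congr 1; ring

lemma median_claim {n : ℕ} {F : EuclideanSpace ℝ (Fin n) → ℝ≥0∞}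
    {T : EuclideanSpace ℝ (Fin n) →L[ℝ] EuclideanSpace ℝ (Fin n)} {K α : ℝ} (S : SU F T K α)
    (s : ℝ) (hs : 0 < s) (hs1 : s ≤ 1 / 6) (hC : 4000000000000 ≤ K * (s / 200000) ^ (2 + α)) :
    (volume.withDensity F) {z | Rr (T z) ≤ √2 - s} ≤ 1 / 4 := by
  have hprob := S.lcd.isProb
  by_contra hcon
  have h4 := (not_le.1 hcon).le
  set g0 := s / 200000 with hg0d
  have hg0 : 0 < g0 := by positivity
  have hg01 : g0 ≤ 1 := by rw [hg0d]; linarith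
  have hsq : √2 ^ 2 = (2:ℝ) := Real.sq_sqrt (by norm_num)
  have hsq1 : 1.41 ≤ √2 := Real.le_sqrt_of_sq_le (by norm_num)
  have hsq2 : √2 ≤ 1.42 := Real.sqrt_le_iff.2 (by norm_num)
  set r := √2 - s with hrd
  have hr : 0 ≤ r := by rw [hrd]; linarith
  have hpp := pos_part S g0 hg0 hg01 hC r hr h4
  have hp1 := pg_all S g0 hg0 hg01 hC r hr h4 1 hg01
  have hQ := tailQ S.lcd S.second (256 * g0 ^ 2) (by positivity) (by
    refine (measure_mono ?_).trans (hp1.trans (le_of_eq (by rw [div_one])))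
    rintro z ⟨h2, h3⟩
    refine ⟨?_, h3⟩
    apply Real.le_sqrt_of_sq_le
    have : r + 1 ≤ 2.42 := by rw [hrd]; linarith
    nlinarith)
  have hsec := S.second
  set μ := (volume.withDensity F)
  have m1 : MeasurableSet {z | ‖T z‖ ≤ 7} := (isClosed_le (by fun_prop) (by fun_prop)).measurableSet
  have ec : {z | ‖T z‖ ≤ 7}ᶜ = {z | 7 < ‖T z‖} := by ext z; simp
  have h2 : ∫⁻ z, ENNReal.ofReal (Rr (T z) ^ 2) ∂μ = ENNReal.ofReal 2 := by
    calc ∫⁻ z, ENNReal.ofReal (Rr (T z) ^ 2) ∂μ = ∫⁻ z, (1 + ENNReal.ofReal (‖T z‖ ^ 2)) ∂μ := by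
          congr 1; funext z
          rw [Rr_sq, ENNReal.ofReal_add (by norm_num) (by positivity), ENNReal.ofReal_one]
      _ = _ := by
          rw [lintegral_add_left (by fun_prop), hsec]
          simp; norm_num
  have h3 : ∫⁻ z in {z | ‖T z‖ ≤ 7}, ENNReal.ofReal (Rr (T z) ^ 2) ∂μ ≤
      ENNReal.ofReal (r ^ 2) + ENNReal.ofReal 15 * ENNReal.ofReal (513 * g0) := by
    calc _ ≤ ∫⁻ z in {z | ‖T z‖ ≤ 7}, (ENNReal.ofReal (r ^ 2) + ENNReal.ofReal 15 * ENNReal.ofReal (Rr (T z) - r)) ∂μ := by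
          apply setLIntegral_mono' m1
          intro z hz
          have h8 := Rr_lt_eight (T z) hz
          have h1 := Rr_one (T z)
          rcases le_total r (Rr (T z)) with h | h
          · rw [← ENNReal.ofReal_mul (by norm_num), ← ENNReal.ofReal_add (by positivity) (by nlinarith)]
            apply ENNReal.ofReal_le_ofReal
            nlinarith
          · refine le_trans ?_ le_self_add
            gcongr
      _ = ENNReal.ofReal (r ^ 2) * μ {z | ‖T z‖ ≤ 7} + ENNReal.ofReal 15 * ∫⁻ z in {z | ‖T z‖ ≤ 7}, ENNReal.ofReal (Rr (T z) - r) ∂μ := by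
          rw [lintegral_add_left (by fun_prop), setLIntegral_const, lintegral_const_mul' _ _ (by simp)]
      _ ≤ ENNReal.ofReal (r ^ 2) * 1 + ENNReal.ofReal 15 * ENNReal.ofReal (513 * g0) := by
          gcongr
          exact prob_le_one
      _ = _ := by rw [mul_one]
  have h5 : ∫⁻ z in {z | 7 < ‖T z‖}, ENNReal.ofReal (Rr (T z) ^ 2) ∂μ ≤
      ENNReal.ofReal 2 * ENNReal.ofReal (2800 * (256 * g0 ^ 2) ^ 2) := by
    calc _ ≤ ∫⁻ z in {z | 7 < ‖T z‖}, ENNReal.ofReal 2 * ENNReal.ofReal (‖T z‖ ^ 2) ∂μ := by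
          apply setLIntegral_mono' (isOpen_lt (by fun_prop) (by fun_prop)).measurableSet
          intro z hz
          simp only [Set.mem_ofPred_eq] at hz
          rw [← ENNReal.ofReal_mul (by norm_num)]
          apply ENNReal.ofReal_le_ofReal
          rw [Rr_sq]; nlinarith
      _ = ENNReal.ofReal 2 * ∫⁻ z in {z | 7 < ‖T z‖}, ENNReal.ofReal (‖T z‖ ^ 2) ∂μ := 
          lintegral_const_mul' _ _ (by simp)
      _ ≤ _ := by gcongr
  rw [← lintegral_add_compl _ m1, ec] at h2
  have h6 := h2.symm.le.trans (add_le_add h3 h5)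
  rw [← ENNReal.ofReal_mul (by norm_num), ← ENNReal.ofReal_mul (by norm_num),
    ← ENNReal.ofReal_add (by positivity) (by positivity), ← ENNReal.ofReal_add (by positivity) (by positivity),
    ENNReal.ofReal_le_ofReal_iff (by positivity)] at h6
  have h7 : r ^ 2 ≤ 2 - 2.6 * s := by rw [hrd]; nlinarith
  have h8 : s = 200000 * g0 := by rw [hg0d]; ring
  have h9 : g0 ≤ 0.000001 := by rw [hg0d]; linarith
  have h10 : g0 ^ 4 ≤ 0.000000000000000001 * g0 := by
    have : g0 ^ 3 ≤ 0.000001 ^ 3 := by gcongr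
    calc g0 ^ 4 = g0 ^ 3 * g0 := by ring
      _ ≤ 0.000001 ^ 3 * g0 := by gcongr
      _ = _ := by norm_num
  nlinarith

theorem deviation {n : ℕ} {F : EuclideanSpace ℝ (Fin n) → ℝ≥0∞}
    {T : EuclideanSpace ℝ (Fin n) →L[ℝ] EuclideanSpace ℝ (Fin n)} {K α : ℝ} (S : SU F T K α)
    (t : ℝ) (ht : 0 ≤ t) (ht1 : t ≤ 1) :
    (volume.withDensity F) {z | ‖T z‖ ≤ 1 - t} ≤
      ENNReal.ofReal (192 * exp (-(0.0000000000000000000000000000000000001 * (K * t ^ (2 + α))))) := by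
  have hprob := S.lcd.isProb
  have hK := S.hK
  have hα1 := S.hα1
  have hα2 := S.hα2
  rcases le_or_gt (K * t ^ (2 + α)) 10000000000000000000000000000000000000 with hsm | hbig
  · refine prob_le_one.trans ?_
    rw [← ENNReal.ofReal_one]
    apply ENNReal.ofReal_le_ofReal
    have h1 : exp (-1) ≤ exp (-(0.0000000000000000000000000000000000001 * (K * t ^ (2 + α)))) := by
      apply Real.exp_le_exp.2; linarith
    have h2 := Real.exp_neg_one_gt_d9
    linarith
  have ht0 : 0 < t := by
    rcases ht.eq_or_lt with h | h
    · rw [← h, Real.zero_rpow (by linarith)] at hbig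
      norm_num at hbig
    · exact h
  have hscale : ∀ c : ℝ, 1 ≤ c → K * t ^ (2 + α) ≤ c ^ 4 * (K * (t / c) ^ (2 + α)) := by
    intro c hc
    have hc0 : 0 < c := by linarith
    rw [Real.div_rpow ht0.le hc0.le]
    have h1 : c ^ (2 + α) ≤ c ^ 4 := by
      rw [← Real.rpow_natCast c 4]
      apply Real.rpow_le_rpow_of_exponent_le hc
      push_cast; linarith
    have h2 : 0 < c ^ (2 + α) := by positivity
    have h3 : 0 < t ^ (2 + α) := by positivity
    calc K * t ^ (2 + α) = c ^ (2 + α) * (K * (t ^ (2 + α) / c ^ (2 + α))) := by field_simp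
      _ ≤ _ := by gcongr
  have s1 := hscale 1200000 (by norm_num)
  have s2 := hscale 6 (by norm_num)
  have hmed := median_claim S (t / 6) (by positivity) (by linarith) (by
    have : t / 6 / 200000 = t / 1200000 := by ring
    rw [this]
    norm_num at s1 hbig ⊢
    linarith)
  have h7 := meas_norm_gt S.second 7 (by norm_num)
  have hone := lemB_one S (t / 6) (by positivity) (by linarith) (by norm_num at s2 hbig ⊢; linarith)
    (√2 - t / 6 - t / 6)
  set μ := (volume.withDensity F)
  have hq : 1 / 4 ≤ μ {z | √2 - t / 6 - t / 6 + t / 6 ≤ Rr (T z) ∧ ‖T z‖ ≤ 7} := by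
    have hcov : (Set.univ : Set (EuclideanSpace ℝ (Fin n))) ⊆
        ({z | Rr (T z) ≤ √2 - t / 6} ∪ {z | 7 < ‖T z‖}) ∪
        {z | √2 - t / 6 - t / 6 + t / 6 ≤ Rr (T z) ∧ ‖T z‖ ≤ 7} := by
      intro z _
      by_cases h1 : Rr (T z) ≤ √2 - t / 6
      · exact Or.inl (Or.inl h1)
      by_cases h2 : 7 < ‖T z‖
      · exact Or.inl (Or.inr h2)
      · exact Or.inr ⟨by linarith [not_le.1 h1], not_lt.1 h2⟩
    have hm := (measure_mono hcov (μ := μ)).trans ((measure_union_le _ _).trans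
      (add_le_add_left ((measure_union_le _ _).trans (add_le_add hmed h7)) _))
    rw [measure_univ] at hm
    by_contra hlt
    have hlt := not_le.1 hlt
    have h3 : (1/4 : ℝ≥0∞) + ENNReal.ofReal (1 / 7 ^ 2) + 1 / 4 ≤ ENNReal.ofReal (3 / 4) := by
      have e4 : (1/4 : ℝ≥0∞) = ENNReal.ofReal (1/4) := by
        rw [ENNReal.ofReal_div_of_pos (by norm_num)]; simp
      rw [e4, ← ENNReal.ofReal_add (by norm_num) (by norm_num), ← ENNReal.ofReal_add (by norm_num) (by norm_num)]
      apply ENNReal.ofReal_le_ofReal; norm_num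
    have h5 := hm.trans ((add_le_add_right hlt.le _).trans h3)
    rw [← ENNReal.ofReal_one, ENNReal.ofReal_le_ofReal_iff (by norm_num)] at h5
    norm_num at h5
  refine (measure_mono ?_).trans ((hone hq).trans (ENNReal.ofReal_le_ofReal ?_))
  · intro z hz
    simp only [Set.mem_ofPred_eq] at hz ⊢
    unfold Rr
    have hsq : √2 ^ 2 = (2:ℝ) := Real.sq_sqrt (by norm_num)
    have hsq1 : 1.41 ≤ √2 := Real.le_sqrt_of_sq_le (by norm_num)
    have hsq2 : √2 ≤ 1.42 := Real.sqrt_le_iff.2 (by norm_num)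
    apply Real.sqrt_le_iff.2
    constructor
    · linarith
    · have h1 : ‖T z‖ ^ 2 ≤ (1 - t) ^ 2 := by gcongr
      have h2 : t * t ≤ t * 1 := by gcongr
      have h3 : t * 1.41 ≤ t * √2 := by gcongr
      nlinarith
  · refine mul_le_mul_of_nonneg_left (Real.exp_le_exp.2 (neg_le_neg ?_)) (by norm_num)
    have : 0 ≤ K * (t / 6) ^ (2 + α) := by positivity
    norm_num at s2 ⊢
    linarith

lemma quad_step1 {V : Type*} [NormedAddCommGroup V] [InnerProductSpace ℝ V] (a b : ℝ) (ha : 0 < a) (hb : 0 < b)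
    (p q p' q' : V) (h : p + q = p' + q') :
    ((a + b) / 2 * ‖(1/2:ℝ) • (p + p') - (1/2:ℝ) • (q + q')‖ ^ 2 +
      2 * a * b / (a + b) * ‖(1/2:ℝ) • (p + p') + (1/2:ℝ) • (q + q')‖ ^ 2) / 4 * 2 ≤
    (a * ‖p‖ ^ 2 / 2 + b * ‖q‖ ^ 2 / 2) + (b * ‖p'‖ ^ 2 / 2 + a * ‖q'‖ ^ 2 / 2) := by
  have hq : q' = p + q - p' := by rw [h]; abel
  subst hq
  have hs : 0 < a + b := by linarith
  have h0 := sq_nonneg ‖(a + b) • (p - p') + (a - b) • (p + q)‖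
  have key : (a * ‖p‖ ^ 2 / 2 + b * ‖q‖ ^ 2 / 2) + (b * ‖p'‖ ^ 2 / 2 + a * ‖p + q - p'‖ ^ 2 / 2) -
      ((a + b) / 2 * ‖(1/2:ℝ) • (p + p') - (1/2:ℝ) • (q + (p + q - p'))‖ ^ 2 +
      2 * a * b / (a + b) * ‖(1/2:ℝ) • (p + p') + (1/2:ℝ) • (q + (p + q - p'))‖ ^ 2) / 4 * 2 =
      ‖(a + b) • (p - p') + (a - b) • (p + q)‖ ^ 2 / (4 * (a + b)) := by
    simp only [← real_inner_self_eq_norm_sq, inner_add_left, inner_add_right, inner_sub_left, inner_sub_right,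
      real_inner_smul_left, real_inner_smul_right]
    rw [real_inner_comm p q, real_inner_comm p p', real_inner_comm q p']
    field_simp
    ring
  have : 0 ≤ ‖(a + b) • (p - p') + (a - b) • (p + q)‖ ^ 2 / (4 * (a + b)) := by positivity
  linarith

lemma quad_step2 {V : Type*} [NormedAddCommGroup V] [InnerProductSpace ℝ V] (a b : ℝ) (ha : 0 < a) (hb : 0 < b)
    (p p' q : V) :
    ((a + b) / 2 * ‖(1/2:ℝ) • (p + p')‖ ^ 2 / 2 + 2 * a * b / (a + b) * ‖q‖ ^ 2 / 2) * 2 ≤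
    (a * ‖p - q‖ ^ 2 + b * ‖p + q‖ ^ 2) / 4 + (b * ‖p' - q‖ ^ 2 + a * ‖p' + q‖ ^ 2) / 4 := by
  have hs : 0 < a + b := by linarith
  have key : (a * ‖p - q‖ ^ 2 + b * ‖p + q‖ ^ 2) / 4 + (b * ‖p' - q‖ ^ 2 + a * ‖p' + q‖ ^ 2) / 4 -
      ((a + b) / 2 * ‖(1/2:ℝ) • (p + p')‖ ^ 2 / 2 + 2 * a * b / (a + b) * ‖q‖ ^ 2 / 2) * 2 =
      ‖(a + b) • (p - p') - (2 * (a - b)) • q‖ ^ 2 / (8 * (a + b)) := by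
    simp only [← real_inner_self_eq_norm_sq, inner_add_left, inner_add_right, inner_sub_left, inner_sub_right,
      real_inner_smul_left, real_inner_smul_right]
    rw [real_inner_comm p q, real_inner_comm p p', real_inner_comm q p']
    field_simp
    ring
  have : 0 ≤ ‖(a + b) • (p - p') - (2 * (a - b)) • q‖ ^ 2 / (8 * (a + b)) := by positivity
  linarith

def phi {n : ℕ} (F : EuclideanSpace ℝ (Fin n) → ℝ≥0∞)
    (T : EuclideanSpace ℝ (Fin n) →L[ℝ] EuclideanSpace ℝ (Fin n)) (s : ℝ) : ℝ≥0∞ :=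
  ∫⁻ z, ENNReal.ofReal (exp (-(s * ‖T z‖ ^ 2 / 2))) ∂(volume.withDensity F)

lemma phi_eq {n : ℕ} {F : EuclideanSpace ℝ (Fin n) → ℝ≥0∞} (hF : Measurable F)
    (T : EuclideanSpace ℝ (Fin n) →L[ℝ] EuclideanSpace ℝ (Fin n)) (s : ℝ) :
    phi F T s = ∫⁻ z, F z * ENNReal.ofReal (exp (-(s * ‖T z‖ ^ 2 / 2))) := by
  unfold phi
  rw [lintegral_withDensity_eq_lintegral_mul _ hF (by fun_prop)]
  rfl

lemma exp_mul_le {x y z : ℝ} (h : z * 2 ≤ x + y) :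
    ENNReal.ofReal (exp (-x)) * ENNReal.ofReal (exp (-y)) ≤ ENNReal.ofReal (exp (-z)) ^ 2 := by
  rw [← ENNReal.ofReal_mul (by positivity), ← ENNReal.ofReal_pow (by positivity), ← Real.exp_add, ← Real.exp_nat_mul]
  apply ENNReal.ofReal_le_ofReal
  apply Real.exp_le_exp.2
  push_cast; linarith

def JJ {n : ℕ} (F : EuclideanSpace ℝ (Fin n) → ℝ≥0∞)
    (T : EuclideanSpace ℝ (Fin n) →L[ℝ] EuclideanSpace ℝ (Fin n)) (a b : ℝ) : ℝ≥0∞ :=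
  ∫⁻ y, ∫⁻ x, F x * F y * ENNReal.ofReal (exp (-((a * ‖T x - T y‖ ^ 2 + b * ‖T x + T y‖ ^ 2) / 4)))

lemma shear {n : ℕ} (k : EuclideanSpace ℝ (Fin n) → EuclideanSpace ℝ (Fin n) → ℝ≥0∞)
    (hk : Measurable (Function.uncurry k)) :
    ∫⁻ y, ∫⁻ x, k x y = ∫⁻ c, ∫⁻ y, k (c - y) y := by
  have h1 : ∀ y, ∫⁻ x, k x y = ∫⁻ c, k (c - y) y := fun y =>
    (lintegral_sub_right_eq_self (μ := volume) (fun x => k x y) y).symm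
  rw [lintegral_congr h1, lintegral_lintegral_swap]
  refine Measurable.aemeasurable ?_
  have : Measurable (fun z : EuclideanSpace ℝ (Fin n) × EuclideanSpace ℝ (Fin n) => (z.2 - z.1, z.1)) := by fun_prop
  exact hk.comp this

lemma step1 {n : ℕ} {F : EuclideanSpace ℝ (Fin n) → ℝ≥0∞} (hF : LCD F)
    (T : EuclideanSpace ℝ (Fin n) →L[ℝ] EuclideanSpace ℝ (Fin n)) (a b : ℝ) (ha : 0 < a) (hb : 0 < b) :
    phi F T a * phi F T b ≤ JJ F T ((a + b) / 2) (2 * a * b / (a + b)) := by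
  have hm := hF.meas
  let k : ℝ → ℝ → EuclideanSpace ℝ (Fin n) → EuclideanSpace ℝ (Fin n) → ℝ≥0∞ := fun a b x y =>
    F x * F y * (ENNReal.ofReal (exp (-(a * ‖T x‖ ^ 2 / 2 + b * ‖T y‖ ^ 2 / 2))))
  let l : EuclideanSpace ℝ (Fin n) → EuclideanSpace ℝ (Fin n) → ℝ≥0∞ := fun x y =>
    F x * F y * ENNReal.ofReal (exp (-(((a + b) / 2 * ‖T x - T y‖ ^ 2 + (2 * a * b / (a + b)) * ‖T x + T y‖ ^ 2) / 4)))
  have hkm : ∀ a b, Measurable (Function.uncurry (k a b)) := by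
    intro a b; simp only [k, Function.uncurry_def]; fun_prop
  have hlm : Measurable (Function.uncurry l) := by
    simp only [l, Function.uncurry_def]; fun_prop
  have e1 : phi F T a * phi F T b = ∫⁻ y, ∫⁻ x, k a b x y := by
    rw [phi_eq hm, phi_eq hm, ← lintegral_const_mul _ (by fun_prop)]
    refine lintegral_congr fun y => ?_
    rw [← lintegral_mul_const _ (by fun_prop)]
    refine lintegral_congr fun x => ?_
    simp only [k]
    rw [neg_add, Real.exp_add, ENNReal.ofReal_mul (by positivity)]
    ring
  have hkm2 : ∀ a b c, Measurable fun y => k a b (c - y) y := by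
    intro a b c; simp only [k]; fun_prop
  have hlm2 : ∀ c, Measurable fun y => l (c - y) y := by
    intro c; simp only [l]; fun_prop
  have e2 : JJ F T ((a + b) / 2) (2 * a * b / (a + b)) = ∫⁻ c, ∫⁻ y, l (c - y) y := by
    rw [← shear l hlm]; rfl
  rw [e1, shear _ (hkm a b), e2]
  apply lintegral_mono
  intro c
  have hpl := pl_euclid n (fun y => k a b (c - y) y) (fun y => k b a (c - y) y) (fun y => l (c - y) y)
    (hkm2 _ _ _) (hkm2 _ _ _) (hlm2 _) ?_
  swap
  · intro y y'
    have em : c - (1/2:ℝ) • (y + y') = (1/2:ℝ) • ((c - y) + (c - y')) := by module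
    have h1 := hF.mid (c - y) (c - y')
    have h2 := hF.mid y y'
    have h3 := exp_mul_le (quad_step1 a b ha hb (T (c - y)) (T y) (T (c - y')) (T y')
      (by rw [← map_add, ← map_add]; simp))
    simp only [k, l]
    rw [em, map_smul T, map_add T (c - y), map_smul T, map_add T y]
    calc _ = (F (c - y) * F (c - y')) * (F y * F y') * (ENNReal.ofReal (rexp (-(a * ‖T (c - y)‖ ^ 2 / 2 + b * ‖T y‖ ^ 2 / 2))) *
        ENNReal.ofReal (rexp (-(b * ‖T (c - y')‖ ^ 2 / 2 + a * ‖T y'‖ ^ 2 / 2)))) := by ring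
      _ ≤ _ := mul_le_mul' (mul_le_mul' h1 h2) h3
      _ = _ := by ring
  have hsym : ∫⁻ y, k b a (c - y) y = ∫⁻ y, k a b (c - y) y := by
    rw [← lintegral_sub_left_eq_self (fun y => k a b (c - y) y) c]
    refine lintegral_congr fun y => ?_
    simp only [k, sub_sub_cancel]
    rw [mul_comm (F y), add_comm (b * _ / 2)]
  rw [hsym, ← sq] at hpl
  exact (ENNReal.pow_le_pow_left_iff two_ne_zero).1 hpl

lemma step2 {n : ℕ} {F : EuclideanSpace ℝ (Fin n) → ℝ≥0∞} (hF : LCD F) (hev : ∀ x, F (-x) = F x)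
    (T : EuclideanSpace ℝ (Fin n) →L[ℝ] EuclideanSpace ℝ (Fin n)) (a b : ℝ) (ha : 0 < a) (hb : 0 < b) :
    JJ F T a b ≤ phi F T ((a + b) / 2) * phi F T (2 * a * b / (a + b)) := by
  have hm := hF.meas
  let k : ℝ → ℝ → EuclideanSpace ℝ (Fin n) → EuclideanSpace ℝ (Fin n) → ℝ≥0∞ := fun a b x y =>
    F x * F y * (ENNReal.ofReal (exp (-(a * ‖T x‖ ^ 2 / 2 + b * ‖T y‖ ^ 2 / 2))))
  let l : ℝ → ℝ → EuclideanSpace ℝ (Fin n) → EuclideanSpace ℝ (Fin n) → ℝ≥0∞ := fun a b x y =>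
    F x * F y * ENNReal.ofReal (exp (-((a * ‖T x - T y‖ ^ 2 + b * ‖T x + T y‖ ^ 2) / 4)))
  have e1 : phi F T ((a + b) / 2) * phi F T (2 * a * b / (a + b)) = ∫⁻ y, ∫⁻ x, k ((a + b) / 2) (2 * a * b / (a + b)) x y := by
    rw [phi_eq hm, phi_eq hm, ← lintegral_const_mul _ (by fun_prop)]
    refine lintegral_congr fun y => ?_
    rw [← lintegral_mul_const _ (by fun_prop)]
    refine lintegral_congr fun x => ?_
    simp only [k]
    rw [neg_add, Real.exp_add, ENNReal.ofReal_mul (by positivity)]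
    ring
  rw [e1]
  unfold JJ
  apply lintegral_mono
  intro y
  have hpl := pl_euclid n (fun x => l a b x y) (fun x => l b a x y) (fun x => k ((a + b) / 2) (2 * a * b / (a + b)) x y)
    (by simp only [l]; fun_prop) (by simp only [l]; fun_prop) (by simp only [k]; fun_prop) ?_
  swap
  · intro x x'
    have h1 := hF.mid x x'
    have h3 := exp_mul_le (quad_step2 a b ha hb (T x) (T x') (T y))
    simp only [k, l]
    rw [map_smul T, map_add T x]
    calc _ = (F x * F x') * (F y * F y) * (ENNReal.ofReal (rexp (-((a * ‖T x - T y‖ ^ 2 + b * ‖T x + T y‖ ^ 2) / 4))) *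
        ENNReal.ofReal (rexp (-((b * ‖T x' - T y‖ ^ 2 + a * ‖T x' + T y‖ ^ 2) / 4)))) := by ring
      _ ≤ _ := mul_le_mul' (mul_le_mul' h1 le_rfl) h3
      _ = _ := by ring
  have hsym : ∫⁻ x, l b a x y = ∫⁻ x, l a b x y := by
    rw [← lintegral_neg_eq_self (fun x => l a b x y)]
    refine lintegral_congr fun x => ?_
    simp only [l, hev, map_neg]
    have e2 : ‖-T x - T y‖ = ‖T x + T y‖ := by rw [← norm_neg]; congr 1; abel
    have e3 : ‖-T x + T y‖ = ‖T x - T y‖ := by rw [← norm_neg]; congr 1; abel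
    rw [e2, e3, add_comm (b * _)]
  rw [hsym, ← sq] at hpl
  exact (ENNReal.pow_le_pow_left_iff two_ne_zero).1 hpl

/-- Babylonian iteration. -/
def bab (a r : ℝ) : ℕ → ℝ
  | 0 => a
  | k + 1 => (bab a r k + r ^ 2 / bab a r k) / 2

lemma bab_pos (a r : ℝ) (ha : 0 < a) (k : ℕ) : 0 < bab a r k := by
  induction k with
  | zero => exact ha
  | succ k ih => rw [bab]; positivity

lemma bab_ge (a r : ℝ) (ha : 0 < a) (k : ℕ) : r ≤ bab a r (k + 1) := by
  have := bab_pos a r ha k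
  rw [bab, le_div_iff₀ (by norm_num), ← sub_nonneg]
  have : bab a r k + r ^ 2 / bab a r k - r * 2 = (bab a r k - r) ^ 2 / bab a r k := by
    field_simp; ring
  rw [this]; positivity

lemma bab_le (a r : ℝ) (ha : 0 < a) (hr : 0 < r) (k : ℕ) : bab a r (k + 1) - r ≤ (bab a r 1 - r) * (1/2) ^ k := by
  induction k with
  | zero => simp
  | succ k ih =>
    have h1 := bab_ge a r ha k
    have h2 := bab_pos a r ha (k + 1)
    have : bab a r (k + 1 + 1) - r ≤ (bab a r (k + 1) - r) / 2 := by
      rw [bab]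
      have : r ^ 2 / bab a r (k + 1) ≤ r := by
        rw [div_le_iff₀ h2]; nlinarith
      linarith
    rw [pow_succ]; linarith

lemma bab_tendsto (a r : ℝ) (ha : 0 < a) (hr : 0 < r) : Filter.Tendsto (bab a r) Filter.atTop (nhds r) := by
  rw [← Filter.tendsto_add_atTop_iff_nat 1]
  have h : Filter.Tendsto (fun k : ℕ => r + (bab a r 1 - r) * (1/2) ^ k) Filter.atTop (nhds (r + (bab a r 1 - r) * 0)) := by
    apply Filter.Tendsto.const_add
    apply Filter.Tendsto.const_mul
    exact tendsto_pow_atTop_nhds_zero_of_lt_one (by norm_num) (by norm_num)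
  rw [mul_zero, add_zero] at h
  refine tendsto_of_tendsto_of_tendsto_of_le_of_le tendsto_const_nhds h ?_ ?_
  · intro k; exact bab_ge a r ha k
  · intro k; have := bab_le a r ha hr k; simp only at *; linarith

lemma phi_cont {n : ℕ} {F : EuclideanSpace ℝ (Fin n) → ℝ≥0∞} (hF : LCD F)
    (T : EuclideanSpace ℝ (Fin n) →L[ℝ] EuclideanSpace ℝ (Fin n)) (u : ℕ → ℝ) (r : ℝ) (hu : ∀ k, 0 ≤ u k)
    (h : Filter.Tendsto u Filter.atTop (nhds r)) :
    Filter.Tendsto (fun k => phi F T (u k)) Filter.atTop (nhds (phi F T r)) := by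
  have := hF.isProb
  unfold phi
  refine tendsto_lintegral_of_dominated_convergence (fun _ => 1) (fun k => by fun_prop) ?_ (by simp) ?_
  · intro k
    refine Filter.Eventually.of_forall fun z => ?_
    simp only
    rw [ENNReal.ofReal_le_one, Real.exp_le_one_iff]
    have := hu k
    have : 0 ≤ u k * ‖T z‖ ^ 2 / 2 := by positivity
    linarith
  · refine Filter.Eventually.of_forall fun z => ?_
    refine (ENNReal.continuous_ofReal.tendsto _).comp ?_
    refine (Real.continuous_exp.tendsto _).comp ?_
    exact ((h.mul_const _).div_const _).neg

/-- The B-theorem. -/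
theorem phi_B {n : ℕ} {F : EuclideanSpace ℝ (Fin n) → ℝ≥0∞} (hF : LCD F) (hev : ∀ x, F (-x) = F x)
    (T : EuclideanSpace ℝ (Fin n) →L[ℝ] EuclideanSpace ℝ (Fin n)) (a b r : ℝ) (ha : 0 < a) (hr : 0 < r)
    (hb : a * b = r ^ 2) :
    phi F T a * phi F T b ≤ phi F T r ^ 2 := by
  have hpr := hF.isProb
  have hab : b = r ^ 2 / a := by field_simp; linarith
  have h1 : ∀ k, phi F T a * phi F T b ≤ phi F T (bab a r (2 * k)) * phi F T (r ^ 2 / bab a r (2 * k)) := by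
    intro k
    induction k with
    | zero => simp [bab, hab]
    | succ k ih =>
      refine ih.trans ?_
      have h0 := bab_pos a r ha (2 * k)
      have h1 := bab_pos a r ha (2 * k + 1)
      have h2 := bab_pos a r ha (2 * k + 1 + 1)
      have s1 := step1 hF T (bab a r (2 * k)) (r ^ 2 / bab a r (2 * k)) h0 (by positivity)
      have e1 : (bab a r (2 * k) + r ^ 2 / bab a r (2 * k)) / 2 = bab a r (2 * k + 1) := rfl
      have f1 : 2 * bab a r (2 * k) * (r ^ 2 / bab a r (2 * k)) / (bab a r (2 * k) + r ^ 2 / bab a r (2 * k)) = r ^ 2 / bab a r (2 * k + 1) := by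
        rw [← e1]; field_simp
      rw [e1, f1] at s1
      have s2 := step2 hF hev T (bab a r (2 * k + 1)) (r ^ 2 / bab a r (2 * k + 1)) h1 (by positivity)
      have e2 : (bab a r (2 * k + 1) + r ^ 2 / bab a r (2 * k + 1)) / 2 = bab a r (2 * k + 1 + 1) := rfl
      have f2 : 2 * bab a r (2 * k + 1) * (r ^ 2 / bab a r (2 * k + 1)) / (bab a r (2 * k + 1) + r ^ 2 / bab a r (2 * k + 1)) = r ^ 2 / bab a r (2 * k + 1 + 1) := by
        rw [← e2]; field_simp
      rw [e2, f2] at s2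
      exact s1.trans s2
  have ht := (bab_tendsto a r ha hr).comp (Filter.tendsto_id.const_mul_atTop' (r := 2) (by norm_num))
  have t1 := phi_cont hF T (fun k => bab a r (2 * k)) r (fun k => (bab_pos a r ha _).le) ht
  have t2 := phi_cont hF T (fun k => r ^ 2 / bab a r (2 * k)) r (fun k => by have := bab_pos a r ha (2 * k); positivity) (by
    have := (tendsto_const_nhds (x := r ^ 2)).div ht hr.ne'
    have e : r ^ 2 / r = r := by field_simp
    rw [e] at this
    exact this)
  have hfin : phi F T r ≠ ∞ := by
    unfold phi
    refine ne_of_lt (lt_of_le_of_lt (lintegral_mono (g := fun _ => 1) ?_) (by simp))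
    intro z
    rw [ENNReal.ofReal_le_one, Real.exp_le_one_iff]
    have : 0 ≤ r * ‖T z‖ ^ 2 / 2 := by positivity
    linarith
  have t3 := ENNReal.Tendsto.mul t1 (Or.inr hfin) t2 (Or.inr hfin)
  rw [sq]
  exact ge_of_tendsto' t3 h1

lemma mom_double {n : ℕ} {F : EuclideanSpace ℝ (Fin n) → ℝ≥0∞} (hF : LCD F)
    {T : EuclideanSpace ℝ (Fin n) →L[ℝ] EuclideanSpace ℝ (Fin n)}
    (h2 : ∫⁻ z, ENNReal.ofReal (‖T z‖ ^ 2) ∂(volume.withDensity F) = 1) (q : ℕ) :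
    ENNReal.ofReal (1/2) * ∫⁻ z, ENNReal.ofReal (‖T z‖ ^ (2 * q)) ∂(volume.withDensity F) ≤
      (∫⁻ z, ENNReal.ofReal ((2 * ‖T z‖ + 3 / 2) ^ q) ∂(volume.withDensity F)) ^ 2 := by
  have m1 : MeasurableSet {z | ‖T z‖ ≤ 3 / 2} := (isClosed_le (by fun_prop) (by fun_prop)).measurableSet
  have hpl := hF.pl ({z | ‖T z‖ ≤ 3 / 2}.indicator (fun _ => 1))
    (fun z => ENNReal.ofReal (‖T z‖ ^ (2 * q)))
    (fun z => ENNReal.ofReal ((2 * ‖T z‖ + 3 / 2) ^ q)) (Measurable.indicator (by fun_prop) m1)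
    (by fun_prop) (by fun_prop) ?_
  swap
  · intro x y
    by_cases hx : x ∈ {z | ‖T z‖ ≤ 3 / 2}
    swap
    · rw [Set.indicator_of_notMem hx]; simp
    have hmid : ‖T y‖ ≤ 2 * ‖T ((1/2:ℝ) • (x + y))‖ + ‖T x‖ := by
      have e1 : T y = (2:ℝ) • T ((1/2:ℝ) • (x + y)) - T x := by
        rw [map_smul, map_add, smul_smul]; norm_num
      calc ‖T y‖ = ‖(2:ℝ) • T ((1/2:ℝ) • (x + y)) - T x‖ := by rw [← e1]
        _ ≤ ‖(2:ℝ) • T ((1/2:ℝ) • (x + y))‖ + ‖T x‖ := norm_sub_le _ _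
        _ = _ := by rw [norm_smul]; norm_num
    rw [Set.indicator_of_mem hx, one_mul, ← ENNReal.ofReal_pow (by positivity), ← pow_mul, mul_comm q 2]
    simp only [Set.mem_ofPred_eq] at hx
    apply ENNReal.ofReal_le_ofReal
    gcongr
    linarith
  rw [lintegral_indicator_const m1, one_mul] at hpl
  refine le_trans ?_ hpl
  gcongr
  exact half_mass hF h2

lemma fourth {n : ℕ} {F : EuclideanSpace ℝ (Fin n) → ℝ≥0∞} (hF : LCD F)
    {T : EuclideanSpace ℝ (Fin n) →L[ℝ] EuclideanSpace ℝ (Fin n)}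
    (h2 : ∫⁻ z, ENNReal.ofReal (‖T z‖ ^ 2) ∂(volume.withDensity F) = 1) :
    ∫⁻ z, ENNReal.ofReal (‖T z‖ ^ 4) ∂(volume.withDensity F) ≤ ENNReal.ofReal 313 := by
  have := hF.isProb
  have h := mom_double hF h2 2
  have h3 : ∫⁻ z, ENNReal.ofReal ((2 * ‖T z‖ + 3 / 2) ^ 2) ∂(volume.withDensity F) ≤ ENNReal.ofReal (25/2) := by
    calc _ ≤ ∫⁻ z, (ENNReal.ofReal 8 * ENNReal.ofReal (‖T z‖ ^ 2) + ENNReal.ofReal (9/2)) ∂(volume.withDensity F) := by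
          apply lintegral_mono; intro z; beta_reduce
          rw [← ENNReal.ofReal_mul (by norm_num), ← ENNReal.ofReal_add (by positivity) (by positivity)]
          apply ENNReal.ofReal_le_ofReal
          nlinarith [sq_nonneg (2 * ‖T z‖ - 3 / 2)]
      _ = ENNReal.ofReal 8 * 1 + ENNReal.ofReal (9/2) := by
          rw [lintegral_add_left (by fun_prop), lintegral_const_mul' _ _ (by simp), h2]; simp
      _ = _ := by rw [mul_one, ← ENNReal.ofReal_add (by norm_num) (by norm_num)]; norm_num
  have h4 : ENNReal.ofReal (1/2) * ∫⁻ z, ENNReal.ofReal (‖T z‖ ^ 4) ∂(volume.withDensity F) ≤ ENNReal.ofReal (625/4) := by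
    refine h.trans ?_
    calc _ ≤ (ENNReal.ofReal (25/2)) ^ 2 := by gcongr
      _ = _ := by rw [← ENNReal.ofReal_pow (by norm_num)]; norm_num
  calc ∫⁻ z, ENNReal.ofReal (‖T z‖ ^ 4) ∂(volume.withDensity F) =
      ENNReal.ofReal 2 * (ENNReal.ofReal (1/2) * ∫⁻ z, ENNReal.ofReal (‖T z‖ ^ 4) ∂(volume.withDensity F)) := by
        rw [← mul_assoc, ← ENNReal.ofReal_mul (by norm_num)]; norm_num
    _ ≤ ENNReal.ofReal 2 * ENNReal.ofReal (625/4) := by gcongr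
    _ ≤ _ := by rw [← ENNReal.ofReal_mul (by norm_num)]; apply ENNReal.ofReal_le_ofReal; norm_num

lemma fin_mom {n : ℕ} {F : EuclideanSpace ℝ (Fin n) → ℝ≥0∞} (hF : LCD F)
    {T : EuclideanSpace ℝ (Fin n) →L[ℝ] EuclideanSpace ℝ (Fin n)}
    (h2 : ∫⁻ z, ENNReal.ofReal (‖T z‖ ^ 2) ∂(volume.withDensity F) = 1) (k : ℕ) :
    ∫⁻ z, ENNReal.ofReal (‖T z‖ ^ (2 ^ (k + 1))) ∂(volume.withDensity F) ≠ ∞ := by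
  have := hF.isProb
  induction k with
  | zero => rw [show 2 ^ (0 + 1) = 2 by norm_num, h2]; exact ENNReal.one_ne_top
  | succ k ih =>
    have h := mom_double hF h2 (2 ^ (k + 1))
    have h3 : ∫⁻ z, ENNReal.ofReal ((2 * ‖T z‖ + 3 / 2) ^ (2 ^ (k + 1))) ∂(volume.withDensity F) ≠ ∞ := by
      set q := 2 ^ (k + 1)
      refine ne_top_of_le_ne_top (b := ∫⁻ z, (ENNReal.ofReal (2 ^ (q - 1) * 2 ^ q) * ENNReal.ofReal (‖T z‖ ^ q) + ENNReal.ofReal (2 ^ (q - 1) * (3/2) ^ q)) ∂(volume.withDensity F)) ?_ ?_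
      · rw [lintegral_add_left (by fun_prop), lintegral_const_mul' _ _ ENNReal.ofReal_ne_top, lintegral_const, measure_univ, mul_one]
        exact ENNReal.add_ne_top.2 ⟨ENNReal.mul_ne_top ENNReal.ofReal_ne_top ih, ENNReal.ofReal_ne_top⟩
      · apply lintegral_mono; intro z; beta_reduce
        rw [← ENNReal.ofReal_mul (by positivity), ← ENNReal.ofReal_add (by positivity) (by positivity)]
        apply ENNReal.ofReal_le_ofReal
        refine (add_pow_le (by positivity) (by positivity) q).trans_eq ?_
        rw [mul_pow]; ring
    intro htop
    rw [show 2 * 2 ^ (k + 1) = 2 ^ (k + 1 + 1) by ring, htop, ENNReal.mul_top (by simp)] at h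
    exact (ENNReal.pow_ne_top h3) (top_le_iff.1 h)

lemma phi_le_one {n : ℕ} {F : EuclideanSpace ℝ (Fin n) → ℝ≥0∞} (hF : LCD F)
    (T : EuclideanSpace ℝ (Fin n) →L[ℝ] EuclideanSpace ℝ (Fin n)) (s : ℝ) (hs : 0 ≤ s) : phi F T s ≤ 1 := by
  have := hF.isProb
  unfold phi
  refine (lintegral_mono (g := fun _ => 1) ?_).trans (by simp)
  intro z
  rw [ENNReal.ofReal_le_one, Real.exp_le_one_iff]
  have : 0 ≤ s * ‖T z‖ ^ 2 / 2 := by positivity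
  linarith

lemma phi_lower {n : ℕ} {F : EuclideanSpace ℝ (Fin n) → ℝ≥0∞} (hF : LCD F)
    {T : EuclideanSpace ℝ (Fin n) →L[ℝ] EuclideanSpace ℝ (Fin n)}
    (h2 : ∫⁻ z, ENNReal.ofReal (‖T z‖ ^ 2) ∂(volume.withDensity F) = 1) (s : ℝ) (hs : 0 ≤ s) :
    ENNReal.ofReal (exp (-(s / 2))) ≤ phi F T s := by
  have := hF.isProb
  have h : ENNReal.ofReal (exp (-(s / 2)) * (1 + s / 2)) ≤ phi F T s + ENNReal.ofReal (exp (-(s / 2)) * (s / 2)) := by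
    calc _ = ∫⁻ z, ENNReal.ofReal (exp (-(s / 2)) * (1 + s / 2)) ∂(volume.withDensity F) := by simp
      _ ≤ ∫⁻ z, (ENNReal.ofReal (exp (-(s * ‖T z‖ ^ 2 / 2))) + ENNReal.ofReal (exp (-(s / 2)) * (s / 2)) * ENNReal.ofReal (‖T z‖ ^ 2)) ∂(volume.withDensity F) := by
          apply lintegral_mono; intro z; beta_reduce
          rw [← ENNReal.ofReal_mul (by positivity), ← ENNReal.ofReal_add (by positivity) (by positivity)]
          apply ENNReal.ofReal_le_ofReal
          have e : exp (-(s * ‖T z‖ ^ 2 / 2)) = exp (-(s/2)) * exp (s / 2 - s * ‖T z‖ ^ 2 / 2) := by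
            rw [← Real.exp_add]; congr 1; ring
          have h1 := Real.add_one_le_exp (s / 2 - s * ‖T z‖ ^ 2 / 2)
          have h0 := Real.exp_pos (-(s/2))
          rw [e]
          nlinarith
      _ = _ := by
          rw [lintegral_add_left (by fun_prop), lintegral_const_mul' _ _ (by simp), h2, mul_one]; rfl
  have hfin : phi F T s ≠ ∞ := ((phi_le_one hF T s hs).trans_lt (by simp)).ne
  obtain ⟨p, hp, hpe⟩ : ∃ p : ℝ, 0 ≤ p ∧ phi F T s = ENNReal.ofReal p := ⟨_, by positivity, (ENNReal.ofReal_toReal hfin).symm⟩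
  rw [hpe, ← ENNReal.ofReal_add (by positivity) (by positivity), ENNReal.ofReal_le_ofReal_iff (by positivity)] at h
  rw [hpe]
  apply ENNReal.ofReal_le_ofReal
  linarith

lemma phi_small {n : ℕ} {F : EuclideanSpace ℝ (Fin n) → ℝ≥0∞} (hF : LCD F)
    {T : EuclideanSpace ℝ (Fin n) →L[ℝ] EuclideanSpace ℝ (Fin n)}
    (h2 : ∫⁻ z, ENNReal.ofReal (‖T z‖ ^ 2) ∂(volume.withDensity F) = 1) :
    phi F T (1/200) ≤ ENNReal.ofReal (1 - 0.0015) := by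
  have := hF.isProb
  have h4 := fourth hF h2
  have hfin : phi F T (1/200) ≠ ∞ := ((phi_le_one hF T (1/200) (by norm_num)).trans_lt (by simp)).ne
  have h : phi F T (1/200) + ENNReal.ofReal (1/400) ≤ ENNReal.ofReal 1 + ENNReal.ofReal (1/320000 * 313) := by
    calc _ = ∫⁻ z, (ENNReal.ofReal (exp (-(1/200 * ‖T z‖ ^ 2 / 2))) + ENNReal.ofReal (1/400) * ENNReal.ofReal (‖T z‖ ^ 2)) ∂(volume.withDensity F) := by
          rw [lintegral_add_left (by fun_prop), lintegral_const_mul' _ _ (by simp), h2, mul_one]; rfl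
      _ ≤ ∫⁻ z, (ENNReal.ofReal 1 + ENNReal.ofReal (1/320000) * ENNReal.ofReal (‖T z‖ ^ 4)) ∂(volume.withDensity F) := by
          apply lintegral_mono; intro z; beta_reduce
          rw [← ENNReal.ofReal_mul (by positivity), ← ENNReal.ofReal_add (by positivity) (by positivity),
            ← ENNReal.ofReal_mul (by positivity), ← ENNReal.ofReal_add (by positivity) (by positivity)]
          apply ENNReal.ofReal_le_ofReal
          have key : ∀ x : ℝ, 0 ≤ x → exp (-x) ≤ 1 - x + x ^ 2 / 2 := by
            intro x hx
            have h1 := Real.quadratic_le_exp_of_nonneg hx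
            have h3 : 0 < 1 - x + x ^ 2 / 2 := by nlinarith [sq_nonneg (x - 1)]
            rw [Real.exp_neg, inv_le_comm₀ (Real.exp_pos _) h3]
            refine le_trans ?_ h1
            rw [inv_le_iff_one_le_mul₀ h3]
            nlinarith [pow_nonneg hx 4]
          have := key (1/200 * ‖T z‖ ^ 2 / 2) (by positivity)
          have e : (1/200 * ‖T z‖ ^ 2 / 2) ^ 2 / 2 = 1/320000 * ‖T z‖ ^ 4 := by ring
          rw [e] at this
          linarith
      _ = ENNReal.ofReal 1 + ENNReal.ofReal (1/320000) * ∫⁻ z, ENNReal.ofReal (‖T z‖ ^ 4) ∂(volume.withDensity F) := by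
          rw [lintegral_add_left (by fun_prop), lintegral_const_mul' _ _ (by simp)]; simp
      _ ≤ _ := by
          rw [ENNReal.ofReal_mul (p := 1/320000) (by positivity)]
          gcongr
  obtain ⟨p, hp, hpe⟩ : ∃ p : ℝ, 0 ≤ p ∧ phi F T (1/200) = ENNReal.ofReal p := ⟨_, by positivity, (ENNReal.ofReal_toReal hfin).symm⟩
  rw [hpe, ← ENNReal.ofReal_add (by positivity) (by positivity), ← ENNReal.ofReal_add (by positivity) (by positivity),
    ENNReal.ofReal_le_ofReal_iff (by positivity)] at h
  rw [hpe]
  apply ENNReal.ofReal_le_ofReal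
  norm_num at h ⊢
  linarith

lemma phi_large {n : ℕ} {F : EuclideanSpace ℝ (Fin n) → ℝ≥0∞} (hF : LCD F)
    {T : EuclideanSpace ℝ (Fin n) →L[ℝ] EuclideanSpace ℝ (Fin n)} (s : ℝ) (hs : 0 ≤ s) :
    phi F T s ≤ (volume.withDensity F) {z | ‖T z‖ ≤ 1 / 2} + ENNReal.ofReal (exp (-(s / 8))) := by
  have := hF.isProb
  have m1 : MeasurableSet {z | ‖T z‖ ≤ 1 / 2} := (isClosed_le (by fun_prop) (by fun_prop)).measurableSet
  calc phi F T s ≤ ∫⁻ z, ({z | ‖T z‖ ≤ 1 / 2}.indicator (fun _ => 1) z + ENNReal.ofReal (exp (-(s / 8)))) ∂(volume.withDensity F) := by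
        unfold phi
        apply lintegral_mono; intro z; beta_reduce
        by_cases hz : ‖T z‖ ≤ 1 / 2
        · rw [Set.indicator_of_mem (by exact hz)]
          refine le_trans ?_ le_self_add
          rw [ENNReal.ofReal_le_one, Real.exp_le_one_iff]
          have : 0 ≤ s * ‖T z‖ ^ 2 / 2 := by positivity
          linarith
        · rw [Set.indicator_of_notMem (by exact hz), zero_add]
          apply ENNReal.ofReal_le_ofReal
          apply Real.exp_le_exp.2
          push Not at hz
          have : (1/2:ℝ) ^ 2 ≤ ‖T z‖ ^ 2 := by gcongr
          nlinarith
    _ = _ := by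
        rw [lintegral_add_right _ (by fun_prop), lintegral_indicator_const m1]; simp

lemma ball_phi {n : ℕ} {F : EuclideanSpace ℝ (Fin n) → ℝ≥0∞}
    (T : EuclideanSpace ℝ (Fin n) →L[ℝ] EuclideanSpace ℝ (Fin n)) (s e : ℝ) (hs : 0 ≤ s) :
    (volume.withDensity F) {z | ‖T z‖ ≤ e} ≤ ENNReal.ofReal (exp (s * e ^ 2 / 2)) * phi F T s := by
  have m1 : MeasurableSet {z | ‖T z‖ ≤ e} := (isClosed_le (by fun_prop) (by fun_prop)).measurableSet
  unfold phi
  rw [← lintegral_const_mul' _ _ (by simp), ← lintegral_indicator_one m1]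
  apply lintegral_mono; intro z; beta_reduce
  by_cases hz : ‖T z‖ ≤ e
  · rw [Set.indicator_of_mem (by exact hz), ← ENNReal.ofReal_mul (by positivity), ← Real.exp_add]
    simp only [Pi.one_apply]
    rw [ENNReal.one_le_ofReal, Real.one_le_exp_iff]
    have : ‖T z‖ ^ 2 ≤ e ^ 2 := by gcongr
    nlinarith
  · rw [Set.indicator_of_notMem (by exact hz)]; simp

lemma geo_real (p : ℕ → ℝ) (hp : ∀ k, 0 < p k) (h : ∀ k, p k * p (k + 2) ≤ p (k + 1) ^ 2) (q : ℝ)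
    (h0 : p 1 ≤ q * p 0) (k : ℕ) : p (k + 1) ≤ q * p k := by
  induction k with
  | zero => exact h0
  | succ k ih =>
    have h1 := h k
    have h2 : p k * p (k + 2) ≤ p k * (q * p (k + 1)) := by nlinarith [hp (k + 1)]
    exact le_of_mul_le_mul_left h2 (hp k)

lemma phi_geo {n : ℕ} {F : EuclideanSpace ℝ (Fin n) → ℝ≥0∞} (hF : LCD F) (hev : ∀ x, F (-x) = F x)
    {T : EuclideanSpace ℝ (Fin n) →L[ℝ] EuclideanSpace ℝ (Fin n)}
    (h2 : ∫⁻ z, ENNReal.ofReal (‖T z‖ ^ 2) ∂(volume.withDensity F) = 1) (s q : ℝ) (hs : 0 < s) (hq : 0 < q)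
    (h : phi F T s ≤ ENNReal.ofReal q * phi F T (s / 16)) (k : ℕ) :
    phi F T (s * 16 ^ k) ≤ ENNReal.ofReal (q ^ k) := by
  have hfin : ∀ s, 0 ≤ s → phi F T s ≠ ∞ := fun s hs => ((phi_le_one hF T s hs).trans_lt (by simp)).ne
  let p : ℕ → ℝ := fun k => (phi F T (s / 16 * 16 ^ k)).toReal
  have hpe : ∀ k, phi F T (s / 16 * 16 ^ k) = ENNReal.ofReal (p k) := fun k =>
    (ENNReal.ofReal_toReal (hfin _ (by positivity))).symm
  have hp0 : ∀ k, 0 < p k := by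
    intro k
    apply ENNReal.toReal_pos _ (hfin _ (by positivity))
    have := phi_lower hF h2 (s / 16 * 16 ^ k) (by positivity)
    exact ne_of_gt (lt_of_lt_of_le (by simpa using Real.exp_pos _) this)
  have hg := geo_real p hp0 ?_ q ?_
  · have hk : ∀ k, p k ≤ q ^ k := by
      intro k
      induction k with
      | zero =>
        have := phi_le_one hF T (s / 16 * 16 ^ 0) (by positivity)
        rw [hpe, ENNReal.ofReal_le_one] at this
        simpa using this
      | succ k ih =>
        refine (hg k).trans ?_
        rw [pow_succ, mul_comm]; gcongr
    have hk1 : p (k + 1) ≤ q ^ k := by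
      have h1 : ∀ k, p (k + 1) ≤ q ^ k := by
        intro k
        induction k with
        | zero =>
          have := phi_le_one hF T (s / 16 * 16 ^ 1) (by positivity)
          rw [hpe, ENNReal.ofReal_le_one] at this
          simpa using this
        | succ k ih =>
          refine (hg (k + 1)).trans ?_
          rw [pow_succ, mul_comm]; gcongr
      exact h1 k
    rw [show s * 16 ^ k = s / 16 * 16 ^ (k + 1) by ring, hpe]
    exact ENNReal.ofReal_le_ofReal hk1
  · intro k
    have := phi_B hF hev T (s / 16 * 16 ^ k) (s / 16 * 16 ^ (k + 2)) (s / 16 * 16 ^ (k + 1)) (by positivity) (by positivity) (by ring)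
    rw [hpe, hpe, hpe, ← ENNReal.ofReal_mul (hp0 _).le, ← ENNReal.ofReal_pow (hp0 _).le,
      ENNReal.ofReal_le_ofReal_iff (by positivity)] at this
    exact this
  · have e0 : phi F T (s / 16) = ENNReal.ofReal (p 0) := by rw [← hpe]; congr 1; ring
    have e1 : phi F T s = ENNReal.ofReal (p 1) := by rw [← hpe]; congr 1; ring
    rw [e0, e1, ← ENNReal.ofReal_mul hq.le, ENNReal.ofReal_le_ofReal_iff (by have := hp0 0; positivity)] at h
    exact h

/-- Small ball from one step of decay. -/
lemma small_ball_gen {n : ℕ} {F : EuclideanSpace ℝ (Fin n) → ℝ≥0∞} (hF : LCD F) (hev : ∀ x, F (-x) = F x)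
    {T : EuclideanSpace ℝ (Fin n) →L[ℝ] EuclideanSpace ℝ (Fin n)}
    (h2 : ∫⁻ z, ENNReal.ofReal (‖T z‖ ^ 2) ∂(volume.withDensity F) = 1) (s η : ℝ) (hs : 0 < s) (hη : 0 < η)
    (h : phi F T s ≤ ENNReal.ofReal (exp (-η)) * phi F T (s / 16)) (e : ℝ) (he : 0 < e) (he1 : e ≤ 1) :
    (volume.withDensity F) {z | ‖T z‖ ≤ e} ≤ ENNReal.ofReal (exp (s / 2 + η - η * (2 * log (1 / e) / log 16))) := by
  have hl : 0 < log 16 := Real.log_pos (by norm_num)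
  have hle : 0 ≤ log (1 / e) := Real.log_nonneg (by rw [le_div_iff₀ he]; linarith)
  set u := 2 * log (1 / e) / log 16 with hu
  have hu0 : 0 ≤ u := by positivity
  have hk1 := Nat.floor_le hu0
  have hk2 := Nat.lt_floor_add_one u
  set k := ⌊u⌋₊
  have h1 := ball_phi (F := F) T (s * 16 ^ k) e (by positivity)
  have h3 := phi_geo hF hev h2 s (exp (-η)) hs (Real.exp_pos _) h k
  have h16 : (16:ℝ) ^ k * e ^ 2 ≤ 1 := by
    have : log ((16:ℝ) ^ k) ≤ log (1 / e ^ 2) := by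
      rw [Real.log_pow, show 1 / e ^ 2 = (1 / e) ^ 2 by ring, Real.log_pow]
      push_cast
      rw [hu, le_div_iff₀ hl] at hk1
      exact hk1
    have := (Real.log_le_log_iff (by positivity) (by positivity)).1 this
    rwa [le_div_iff₀ (by positivity)] at this
  calc _ ≤ _ := h1
    _ ≤ ENNReal.ofReal (exp (s * 16 ^ k * e ^ 2 / 2)) * ENNReal.ofReal (exp (-η) ^ k) := by gcongr
    _ = ENNReal.ofReal (exp (s * 16 ^ k * e ^ 2 / 2 + -(k * η))) := by
        rw [← ENNReal.ofReal_mul (by positivity), ← Real.exp_nat_mul, ← Real.exp_add]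
        congr 3; ring
    _ ≤ _ := by
        apply ENNReal.ofReal_le_ofReal
        apply Real.exp_le_exp.2
        nlinarith

lemma log16_eq : log 16 = 4 * log 2 := by
  rw [show (16:ℝ) = 2 ^ 4 by norm_num, Real.log_pow]; norm_num

theorem small_ball_even {n : ℕ} {F : EuclideanSpace ℝ (Fin n) → ℝ≥0∞}
    {T : EuclideanSpace ℝ (Fin n) →L[ℝ] EuclideanSpace ℝ (Fin n)} {K α : ℝ} (S : SU F T K α)
    (hev : ∀ x, F (-x) = F x) (e : ℝ) (he : 0 < e) (he1 : e ≤ (1/2) ^ 18) :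
    (volume.withDensity F) {z | ‖T z‖ ≤ e} ≤ ENNReal.ofReal (2 * exp (-(0.0000000000000000000000000000000000000000001 * K * log ((1/2) ^ 18 / e)))) := by
  have hF := S.lcd
  have h2 := S.second
  have hK := S.hK
  have he2 : e ≤ 1 := he1.trans (by norm_num)
  have l1 := Real.log_two_gt_d9
  have l2 := Real.log_two_lt_d9
  have hL : log ((1/2) ^ 18 / e) = log (1 / e) - 18 * log 2 := by
    rw [show ((1:ℝ)/2) ^ 18 / e = (1 / e) / 2 ^ 18 by field_simp, Real.log_div (by positivity) (by positivity), Real.log_pow]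
    norm_num
  have hL0 : 0 ≤ log ((1/2) ^ 18 / e) := Real.log_nonneg (by rw [le_div_iff₀ he]; linarith)
  set L := log ((1/2) ^ 18 / e)
  have hLe : log (1 / e) = L + 18 * log 2 := by linarith
  by_cases hbig : 24 ≤ 0.00000000000000000000000000000000000000625 * K
  · set κ := 0.00000000000000000000000000000000000000625 * K with hκ
    have hdev := deviation S (1/2) (by norm_num) (by norm_num)
    have hpow : (1/16:ℝ) ≤ (1/2) ^ (2 + α) := by
      have : ((1:ℝ)/2) ^ (4:ℝ) ≤ (1/2) ^ (2 + α) :=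
        Real.rpow_le_rpow_of_exponent_ge (by norm_num) (by norm_num) (by linarith [S.hα2])
      norm_num at this ⊢
      linarith
    have hd2 : (volume.withDensity F) {z | ‖T z‖ ≤ 1 / 2} ≤ ENNReal.ofReal (192 * exp (-κ)) := by
      have e1 : (1:ℝ) - 1/2 = 1/2 := by norm_num
      rw [e1] at hdev
      refine hdev.trans ?_
      apply ENNReal.ofReal_le_ofReal
      apply mul_le_mul_of_nonneg_left _ (by norm_num)
      apply Real.exp_le_exp.2
      have : K * (1/16) ≤ K * (1/2) ^ (2 + α) := by gcongr
      rw [hκ]; norm_num at this ⊢; linarith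
    have h193 : 193 * exp (-κ) ≤ exp (-(3 * κ / 4)) := by
      have : (193:ℝ) ≤ exp (κ / 4) := by
        have h6 : exp 6 ≤ exp (κ / 4) := Real.exp_le_exp.2 (by linarith)
        have e6 : exp 6 = exp 1 ^ 6 := by rw [← Real.exp_nat_mul]; norm_num
        have : (2.5:ℝ) ^ 6 ≤ exp 1 ^ 6 := by
          have := Real.exp_one_gt_d9
          gcongr; linarith
        norm_num at this
        linarith
      calc 193 * exp (-κ) ≤ exp (κ / 4) * exp (-κ) := by gcongr
        _ = _ := by rw [← Real.exp_add]; congr 1; ring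
    have hphi : phi F T (8 * κ) ≤ ENNReal.ofReal (exp (-(κ/2))) * phi F T (8 * κ / 16) := by
      have hl := phi_lower hF h2 (8 * κ / 16) (by positivity)
      calc _ ≤ _ := phi_large hF (8 * κ) (by positivity)
        _ ≤ ENNReal.ofReal (192 * exp (-κ)) + ENNReal.ofReal (exp (-(8 * κ / 8))) := by gcongr
        _ = ENNReal.ofReal (193 * exp (-κ)) := by
            rw [← ENNReal.ofReal_add (by positivity) (by positivity), show 8 * κ / 8 = κ by ring]
            congr 1; ring
        _ ≤ ENNReal.ofReal (exp (-(3 * κ / 4))) := ENNReal.ofReal_le_ofReal h193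
        _ = ENNReal.ofReal (exp (-(κ/2))) * ENNReal.ofReal (exp (-(8 * κ / 16 / 2))) := by
            rw [← ENNReal.ofReal_mul (by positivity), ← Real.exp_add]; congr 2; ring
        _ ≤ _ := by gcongr
    refine (small_ball_gen hF hev h2 (8 * κ) (κ / 2) (by positivity) (by positivity) hphi e he he2).trans ?_
    apply ENNReal.ofReal_le_ofReal
    have e1 : 8 * κ / 2 + κ / 2 - κ / 2 * (2 * log (1 / e) / log 16) = -(κ / (4 * log 2) * L) := by
      rw [hLe, log16_eq]; field_simp; ring
    rw [e1]
    have e2 : 0.0000000000000000000000000000000000000000001 * K * L ≤ κ / (4 * log 2) * L := by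
      apply mul_le_mul_of_nonneg_right _ hL0
      rw [le_div_iff₀ (by linarith), hκ]
      norm_num
      nlinarith
    have := Real.exp_le_exp.2 (neg_le_neg e2)
    linarith [Real.exp_pos (-(0.0000000000000000000000000000000000000000001 * K * L))]
  · push Not at hbig
    have hphi : phi F T (1/200) ≤ ENNReal.ofReal (exp (-0.001)) * phi F T (1/200/16) := by
      have hl := phi_lower hF h2 (1/200/16) (by positivity)
      refine (phi_small hF h2).trans ?_
      calc _ ≤ ENNReal.ofReal (exp (-0.001)) * ENNReal.ofReal (exp (-(1/200/16/2))) := by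
            rw [← ENNReal.ofReal_mul (by positivity), ← Real.exp_add]
            apply ENNReal.ofReal_le_ofReal
            refine le_trans ?_ (Real.add_one_le_exp _)
            norm_num
        _ ≤ _ := by gcongr
    refine (small_ball_gen hF hev h2 (1/200) 0.001 (by positivity) (by norm_num) hphi e he he2).trans ?_
    apply ENNReal.ofReal_le_ofReal
    have h2e : 2 * exp (-(0.0000000000000000000000000000000000000000001 * K * L)) = exp (log 2 + -(0.0000000000000000000000000000000000000000001 * K * L)) := by
      rw [Real.exp_add, Real.exp_log]; norm_num
    rw [h2e]
    apply Real.exp_le_exp.2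
    have e1 : 2 * log (1 / e) / log 16 ≥ L / 2 := by
      rw [hLe, log16_eq, ge_iff_le, le_div_iff₀ (by linarith)]
      nlinarith
    have e2 : 0.0000000000000000000000000000000000000000001 * K * L ≤ 0.0005 * L := by
      apply mul_le_mul_of_nonneg_right _ hL0
      norm_num at hbig ⊢
      linarith
    norm_num at e1 e2 ⊢
    linarith

/-- density of the difference of two independent copies. -/
def symD {n : ℕ} (F : EuclideanSpace ℝ (Fin n) → ℝ≥0∞) (x : EuclideanSpace ℝ (Fin n)) : ℝ≥0∞ :=
  ∫⁻ y, F (x + y) * F y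

lemma symD_meas {n : ℕ} {F : EuclideanSpace ℝ (Fin n) → ℝ≥0∞} (hF : Measurable F) : Measurable (symD F) := by
  unfold symD
  exact Measurable.lintegral_prod_right' (f := fun z : EuclideanSpace ℝ (Fin n) × EuclideanSpace ℝ (Fin n) => F (z.1 + z.2) * F z.2) (by fun_prop)

lemma symD_law {n : ℕ} {F : EuclideanSpace ℝ (Fin n) → ℝ≥0∞} (hF : Measurable F)
    (ψ : EuclideanSpace ℝ (Fin n) → ℝ≥0∞) (hψ : Measurable ψ) :
    ∫⁻ z, ψ z ∂(volume.withDensity (symD F)) = ∫⁻ y, ∫⁻ x, ψ (x - y) ∂(volume.withDensity F) ∂(volume.withDensity F) := by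
  rw [lintegral_withDensity_eq_lintegral_mul _ (symD_meas hF) hψ]
  have e1 : ∀ y, ∫⁻ x, ψ (x - y) ∂(volume.withDensity F) = ∫⁻ x, F (x + y) * ψ x := by
    intro y
    rw [lintegral_withDensity_eq_lintegral_mul _ hF (by fun_prop)]
    rw [← lintegral_add_right_eq_self _ y]
    refine lintegral_congr fun x => ?_
    simp
  simp_rw [e1]
  have hm : Measurable fun y => ∫⁻ x, F (x + y) * ψ x :=
    Measurable.lintegral_prod_right' (f := fun z : EuclideanSpace ℝ (Fin n) × EuclideanSpace ℝ (Fin n) => F (z.2 + z.1) * ψ z.2) (by fun_prop)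
  rw [lintegral_withDensity_eq_lintegral_mul _ hF hm]
  have e2 : ∀ x, (symD F * ψ) x = ∫⁻ y, F y * (F (x + y) * ψ x) := by
    intro x
    simp only [Pi.mul_apply, symD]
    rw [← lintegral_mul_const _ (by fun_prop)]
    refine lintegral_congr fun y => ?_
    ring
  have e3 : ∀ y, (F * fun y => ∫⁻ x, F (x + y) * ψ x) y = ∫⁻ x, F y * (F (x + y) * ψ x) := by
    intro y
    simp only [Pi.mul_apply]
    rw [← lintegral_const_mul _ (by fun_prop)]
  rw [lintegral_congr e2, lintegral_congr e3, lintegral_lintegral_swap]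
  refine Measurable.aemeasurable ?_
  simp only [Function.uncurry_def]
  fun_prop

lemma symD_lcd {n : ℕ} {F : EuclideanSpace ℝ (Fin n) → ℝ≥0∞} (hF : LCD F) : LCD (symD F) := by
  have hm := hF.meas
  have hp := hF.isProb
  refine ⟨symD_meas hm, ?_, ?_⟩
  · intro x x'
    refine pl_euclid n _ _ _ (by fun_prop) (by fun_prop) (by fun_prop) ?_
    intro y y'
    have h1 := hF.mid (x + y) (x' + y')
    have h2 := hF.mid y y'
    have e : (1/2:ℝ) • (x + y + (x' + y')) = (1/2:ℝ) • (x + x') + (1/2:ℝ) • (y + y') := by module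
    rw [e] at h1
    calc _ = (F (x + y) * F (x' + y')) * (F y * F y') := by ring
      _ ≤ _ := mul_le_mul' h1 h2
      _ = _ := by ring
  · have := symD_law hm (fun _ => 1) (by fun_prop)
    simpa using this

lemma symD_even {n : ℕ} (F : EuclideanSpace ℝ (Fin n) → ℝ≥0∞) (x : EuclideanSpace ℝ (Fin n)) :
    symD F (-x) = symD F x := by
  unfold symD
  rw [← lintegral_add_left_eq_self _ x]
  refine lintegral_congr fun y => ?_
  rw [neg_add_cancel_left, mul_comm]

lemma symD_SU {n : ℕ} {F : EuclideanSpace ℝ (Fin n) → ℝ≥0∞}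
    {T : EuclideanSpace ℝ (Fin n) →L[ℝ] EuclideanSpace ℝ (Fin n)} {K α : ℝ} (S : SU F T K α)
    (hintT : Integrable (fun z => T z) (volume.withDensity F))
    (hint2 : Integrable (fun z => ‖T z‖ ^ 2) (volume.withDensity F))
    (hc : ∫ z, T z ∂(volume.withDensity F) = 0) : SU (symD F) ((1 / √2) • T) (K / 2) α := by
  have hF := S.lcd
  have hm := hF.meas
  have hp := hF.isProb
  have hα1 := S.hα1
  have hα2 := S.hα2
  have hK := S.hK
  have hsq : (1 / √2) ^ 2 = (1/2:ℝ) := by rw [div_pow, Real.sq_sqrt (by norm_num)]; norm_num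
  refine ⟨symD_lcd hF, ?_, ?_, hα1, hα2, by positivity⟩
  · rw [symD_law hm _ (by fun_prop)]
    have hb : ∫ z, ‖T z‖ ^ 2 ∂(volume.withDensity F) = 1 := by
      rw [integral_eq_lintegral_of_nonneg_ae (Filter.Eventually.of_forall fun z => by positivity) hint2.1, S.second]; simp
    have e : ∀ y, ∫⁻ x, ENNReal.ofReal (‖((1 / √2) • T) (x - y)‖ ^ 2) ∂(volume.withDensity F) =
        ENNReal.ofReal (1/2) + ENNReal.ofReal (1/2) * ENNReal.ofReal (‖T y‖ ^ 2) := by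
      intro y
      have e1 : ∀ x, ‖((1 / √2) • T) (x - y)‖ ^ 2 = (1/2) * ‖T x‖ ^ 2 + (1/2) * ‖T y‖ ^ 2 - ⟪T y, T x⟫ := by
        intro x
        rw [_root_.smul_apply, norm_smul, mul_pow, Real.norm_eq_abs, sq_abs, hsq, map_sub,
          norm_sub_sq_real, real_inner_comm]
        ring
      have hin : Integrable (fun x => ⟪T y, T x⟫) (volume.withDensity F) := hintT.const_inner (T y)
      rw [← ofReal_integral_eq_lintegral_ofReal]
      · simp_rw [e1]
        have hin2 : Integrable (fun x => (1/2) * ‖T x‖ ^ 2 + (1/2) * ‖T y‖ ^ 2) (volume.withDensity F) :=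
          (hint2.const_mul _).add (integrable_const _)
        rw [integral_sub hin2 hin, integral_add (hint2.const_mul _) (integrable_const _),
          integral_const_mul, hb, integral_inner hintT, hc, ← ENNReal.ofReal_mul (by norm_num),
          ← ENNReal.ofReal_add (by positivity) (by positivity)]
        simp
      · simp_rw [e1]
        exact ((hint2.const_mul _).add (integrable_const _)).sub hin
      · exact Filter.Eventually.of_forall fun z => by positivity
    rw [lintegral_congr e, lintegral_add_left (by fun_prop), lintegral_const_mul' _ _ (by simp), S.second,
      lintegral_const, measure_univ, mul_one, ← ENNReal.ofReal_add (by norm_num) (by norm_num)]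
    norm_num
  · intro j hj y hy
    have hM := S.mom j hj y hy
    set M := (((2 * j : ℕ) : ℝ) / K) ^ (1 / α) with hMd
    have hM0 : 0 ≤ M := by positivity
    rw [symD_law hm _ (by fun_prop)]
    have hpt : ∀ x z, ENNReal.ofReal (⟪((1 / √2) • T) (x - z), y⟫ ^ (2 * j)) ≤
        ENNReal.ofReal (2 ^ j / 2) * ENNReal.ofReal (⟪T x, y⟫ ^ (2 * j)) + ENNReal.ofReal (2 ^ j / 2) * ENNReal.ofReal (⟪T z, y⟫ ^ (2 * j)) := by
      intro x z
      have hev : ∀ a : ℝ, 0 ≤ a ^ (2 * j) := fun a => by rw [pow_mul]; positivity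
      rw [← ENNReal.ofReal_mul (by positivity), ← ENNReal.ofReal_mul (by positivity),
        ← ENNReal.ofReal_add (mul_nonneg (by positivity) (hev _)) (mul_nonneg (by positivity) (hev _))]
      apply ENNReal.ofReal_le_ofReal
      rw [_root_.smul_apply, map_sub, real_inner_smul_left, inner_sub_left, mul_pow]
      set a := ⟪T x, y⟫
      set b := ⟪T z, y⟫
      have h1 : (a - b) ^ (2 * j) ≤ 2 ^ (2 * j - 1) * (a ^ (2 * j) + b ^ (2 * j)) := by
        have h := add_pow_le (abs_nonneg a) (abs_nonneg b) (2 * j)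
        have ev : ∀ x : ℝ, |x| ^ (2 * j) = x ^ (2 * j) := fun x => (even_two_mul j).pow_abs x
        rw [ev, ev] at h
        refine le_trans ?_ h
        rw [← ev]
        gcongr
        exact abs_sub a b
      have h2 : (1 / √2) ^ (2 * j) = (1/2:ℝ) ^ j := by rw [pow_mul, hsq]
      have h3 : (1/2:ℝ) ^ j * 2 ^ (2 * j - 1) = 2 ^ j / 2 := by
        have : (2:ℝ) ^ (2 * j) = 2 ^ (2 * j - 1) * 2 := by rw [← pow_succ]; congr 1; omega
        have h4 : (2:ℝ) ^ (2 * j) = 2 ^ j * 2 ^ j := by rw [← pow_add]; congr 1; omega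
        rw [one_div, inv_pow]
        field_simp
        linarith
      rw [h2]
      calc (1/2:ℝ) ^ j * (a - b) ^ (2 * j) ≤ (1/2:ℝ) ^ j * (2 ^ (2 * j - 1) * (a ^ (2 * j) + b ^ (2 * j))) := by gcongr
        _ = (1/2:ℝ) ^ j * 2 ^ (2 * j - 1) * (a ^ (2 * j) + b ^ (2 * j)) := by ring
        _ = _ := by rw [h3]; ring
    have hbig : ∫⁻ z, ∫⁻ x, ENNReal.ofReal (⟪((1 / √2) • T) (x - z), y⟫ ^ (2 * j)) ∂(volume.withDensity F) ∂(volume.withDensity F) ≤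
        ENNReal.ofReal (2 ^ j / 2) * ENNReal.ofReal M ^ (2 * j) + ENNReal.ofReal (2 ^ j / 2) * ENNReal.ofReal M ^ (2 * j) := by
      calc _ ≤ ∫⁻ z, ∫⁻ x, (ENNReal.ofReal (2 ^ j / 2) * ENNReal.ofReal (⟪T x, y⟫ ^ (2 * j)) + ENNReal.ofReal (2 ^ j / 2) * ENNReal.ofReal (⟪T z, y⟫ ^ (2 * j))) ∂(volume.withDensity F) ∂(volume.withDensity F) :=
            lintegral_mono fun z => lintegral_mono fun x => hpt x z
        _ = ∫⁻ z, (ENNReal.ofReal (2 ^ j / 2) * (∫⁻ x, ENNReal.ofReal (⟪T x, y⟫ ^ (2 * j)) ∂(volume.withDensity F)) + ENNReal.ofReal (2 ^ j / 2) * ENNReal.ofReal (⟪T z, y⟫ ^ (2 * j))) ∂(volume.withDensity F) := by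
            refine lintegral_congr fun z => ?_
            rw [lintegral_add_left (by fun_prop), lintegral_const_mul' _ _ ENNReal.ofReal_ne_top, lintegral_const, measure_univ, mul_one]
        _ = ENNReal.ofReal (2 ^ j / 2) * (∫⁻ x, ENNReal.ofReal (⟪T x, y⟫ ^ (2 * j)) ∂(volume.withDensity F)) + ENNReal.ofReal (2 ^ j / 2) * ∫⁻ z, ENNReal.ofReal (⟪T z, y⟫ ^ (2 * j)) ∂(volume.withDensity F) := by
            rw [lintegral_add_left (by fun_prop), lintegral_const, measure_univ, mul_one, lintegral_const_mul' _ _ ENNReal.ofReal_ne_top]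
        _ ≤ _ := by gcongr
    refine hbig.trans ?_
    rw [← ENNReal.ofReal_pow hM0, ← ENNReal.ofReal_mul (by positivity), ← ENNReal.ofReal_add (by positivity) (by positivity),
      ← ENNReal.ofReal_pow (by positivity)]
    apply ENNReal.ofReal_le_ofReal
    have e1 : (((2 * j : ℕ) : ℝ) / (K / 2)) ^ (1 / α) = 2 ^ (1 / α) * M := by
      rw [hMd, ← Real.mul_rpow (by norm_num) (by positivity)]
      congr 1; field_simp
    rw [e1, mul_pow]
    have e2 : (2:ℝ) ^ j ≤ ((2:ℝ) ^ (1 / α)) ^ (2 * j) := by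
      rw [pow_mul]
      have : (2:ℝ) ≤ ((2:ℝ) ^ (1 / α)) ^ 2 := by
        rw [← Real.rpow_natCast, ← Real.rpow_mul (by norm_num)]
        nth_rw 1 [← Real.rpow_one 2]
        apply Real.rpow_le_rpow_of_exponent_le (by norm_num)
        push_cast
        rw [one_div, inv_mul_eq_div, le_div_iff₀ (by linarith)]; linarith
      gcongr
    have : 0 ≤ M ^ (2 * j) := by positivity
    nlinarith

theorem small_ball {n : ℕ} {F : EuclideanSpace ℝ (Fin n) → ℝ≥0∞}
    {T : EuclideanSpace ℝ (Fin n) →L[ℝ] EuclideanSpace ℝ (Fin n)} {K α : ℝ} (S : SU F T K α)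
    (hintT : Integrable (fun z => T z) (volume.withDensity F))
    (hint2 : Integrable (fun z => ‖T z‖ ^ 2) (volume.withDensity F))
    (hc : ∫ z, T z ∂(volume.withDensity F) = 0) (e : ℝ) (he : 0 < e) (he1 : e ≤ (1/2) ^ 19) :
    (volume.withDensity F) {z | ‖T z‖ ≤ e} ≤ ENNReal.ofReal (2 * exp (-(0.00000000000000000000000000000000000000000001 * K * log ((1/2) ^ 19 / e)))) := by
  have hF := S.lcd
  have hm := hF.meas
  have hp := hF.isProb
  have hK := S.hK
  have S' := symD_SU S hintT hint2 hc
  have hb := small_ball_even S' (symD_even F) (2 * e) (by positivity) (by norm_num at he1 ⊢; linarith)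
  have m1 : MeasurableSet {z | ‖T z‖ ≤ e} := (isClosed_le (by fun_prop) (by fun_prop)).measurableSet
  have m2 : MeasurableSet {z | ‖((1 / √2) • T) z‖ ≤ 2 * e} := (isClosed_le (by fun_prop) (by fun_prop)).measurableSet
  have hsq : ((volume.withDensity F) {z | ‖T z‖ ≤ e}) ^ 2 ≤ (volume.withDensity (symD F)) {z | ‖((1 / √2) • T) z‖ ≤ 2 * e} := by
    rw [← lintegral_indicator_one m2, symD_law hm _ (Measurable.indicator (by fun_prop) m2), sq]
    set μ := volume.withDensity F
    calc _ = ∫⁻ y, {z | ‖T z‖ ≤ e}.indicator (fun _ => μ {z | ‖T z‖ ≤ e}) y ∂μ := by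
          rw [lintegral_indicator_const m1]
      _ ≤ _ := by
          apply lintegral_mono; intro y; beta_reduce
          by_cases hy : y ∈ {z | ‖T z‖ ≤ e}
          swap
          · rw [Set.indicator_of_notMem hy]; simp
          rw [Set.indicator_of_mem hy, ← lintegral_indicator_one m1]
          apply lintegral_mono; intro x; beta_reduce
          by_cases hx : x ∈ {z | ‖T z‖ ≤ e}
          swap
          · rw [Set.indicator_of_notMem hx]; simp
          have hxy : x - y ∈ {z | ‖((1 / √2) • T) z‖ ≤ 2 * e} := ?_
          · rw [Set.indicator_of_mem hx, Set.indicator_of_mem hxy]; exact le_rfl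
          simp only [Set.mem_ofPred_eq] at hx hy ⊢
          rw [_root_.smul_apply, norm_smul, map_sub]
          have h1 : ‖(1 / √2 : ℝ)‖ ≤ 1 := by
            rw [Real.norm_eq_abs, abs_of_pos (by positivity), div_le_one (by positivity)]
            rw [Real.one_le_sqrt]; norm_num
          calc _ ≤ 1 * ‖T x - T y‖ := by gcongr
            _ ≤ 1 * (‖T x‖ + ‖T y‖) := by gcongr; exact norm_sub_le _ _
            _ ≤ _ := by linarith
  have hL : (1/2:ℝ) ^ 18 / (2 * e) = (1/2) ^ 19 / e := by field_simp
  rw [hL] at hb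
  have hL0 : 0 ≤ log ((1/2) ^ 19 / e) := Real.log_nonneg (by rw [le_div_iff₀ he]; linarith)
  set L := log ((1/2:ℝ) ^ 19 / e)
  have h3 := hsq.trans hb
  rw [← ENNReal.pow_le_pow_left_iff two_ne_zero]
  refine h3.trans ?_
  rw [← ENNReal.ofReal_pow (by positivity)]
  apply ENNReal.ofReal_le_ofReal
  rw [mul_pow, ← Real.exp_nat_mul]
  have : exp (-(0.0000000000000000000000000000000000000000001 * (K / 2) * L)) ≤ exp (((2:ℕ):ℝ) * -(0.00000000000000000000000000000000000000000001 * K * L)) := by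
    apply Real.exp_le_exp.2
    push_cast
    have : 0 ≤ K * L := by positivity
    norm_num
    nlinarith
  linarith [Real.exp_pos (((2:ℕ):ℝ) * -(0.00000000000000000000000000000000000000000001 * K * L))]

lemma iso_int {n : ℕ} {μ : Measure (EuclideanSpace ℝ (Fin n))} (hI : Isotropic μ id) (θ : EuclideanSpace ℝ (Fin n)) :
    Integrable (fun z => ⟪z, θ⟫ ^ 2) μ := by
  by_cases h : θ = 0
  · simp [h]
  by_contra hc
  have h1 := hI.2 θ θ
  simp only [id, ← sq] at h1
  rw [integral_undef hc] at h1
  exact h (inner_self_eq_zero.1 h1.symm)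

lemma iso_val {n : ℕ} {μ : Measure (EuclideanSpace ℝ (Fin n))} (hI : Isotropic μ id) (θ : EuclideanSpace ℝ (Fin n)) :
    ∫ z, ⟪z, θ⟫ ^ 2 ∂μ = ‖θ‖ ^ 2 := by
  have h1 := hI.2 θ θ
  simp only [id, ← sq] at h1
  rw [h1, real_inner_self_eq_norm_sq]

lemma norm_sq_sum {n : ℕ} (v : EuclideanSpace ℝ (Fin n)) :
    ‖v‖ ^ 2 = ∑ i, ⟪v, EuclideanSpace.single i (1:ℝ)⟫ ^ 2 := by
  rw [EuclideanSpace.norm_sq_eq]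
  refine Finset.sum_congr rfl fun i _ => ?_
  simp [EuclideanSpace.inner_single_right]

lemma T_expand {n : ℕ} (B : EuclideanSpace ℝ (Fin n) →L[ℝ] EuclideanSpace ℝ (Fin n)) (z : EuclideanSpace ℝ (Fin n)) :
    ‖B z‖ ^ 2 = ∑ i, ⟪z, (ContinuousLinearMap.adjoint B) (EuclideanSpace.single i (1:ℝ))⟫ ^ 2 := by
  rw [norm_sq_sum]
  refine Finset.sum_congr rfl fun i _ => ?_
  rw [ContinuousLinearMap.adjoint_inner_right]

lemma T_int {n : ℕ} {μ : Measure (EuclideanSpace ℝ (Fin n))} (hI : Isotropic μ id)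
    (B : EuclideanSpace ℝ (Fin n) →L[ℝ] EuclideanSpace ℝ (Fin n)) : Integrable (fun z => ‖B z‖ ^ 2) μ := by
  simp_rw [T_expand B]
  exact integrable_finsetSum _ fun i _ => iso_int hI _

lemma T_val {n : ℕ} {μ : Measure (EuclideanSpace ℝ (Fin n))} (hI : Isotropic μ id)
    (B : EuclideanSpace ℝ (Fin n) →L[ℝ] EuclideanSpace ℝ (Fin n)) :
    ∫ z, ‖B z‖ ^ 2 ∂μ = ∑ i, ‖(ContinuousLinearMap.adjoint B) (EuclideanSpace.single i (1:ℝ))‖ ^ 2 := by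
  simp_rw [T_expand B]
  rw [integral_finsetSum _ fun i _ => iso_int hI _]
  exact Finset.sum_congr rfl fun i _ => iso_val hI _

def mB {n : ℕ} (A : Matrix (Fin n) (Fin n) ℝ) : EuclideanSpace ℝ (Fin n) →L[ℝ] EuclideanSpace ℝ (Fin n) :=
  LinearMap.toContinuousLinearMap (Matrix.toEuclideanLin A)

lemma hs_sum {n : ℕ} (A : Matrix (Fin n) (Fin n) ℝ) :
    ∑ i, ‖(ContinuousLinearMap.adjoint (mB A)) (EuclideanSpace.single i (1:ℝ))‖ ^ 2 = hsNorm A ^ 2 := by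
  unfold hsNorm
  rw [Real.sq_sqrt (by positivity)]
  refine Finset.sum_congr rfl fun i _ => ?_
  rw [EuclideanSpace.norm_sq_eq]
  refine Finset.sum_congr rfl fun j _ => ?_
  rw [Real.norm_eq_abs, sq_abs]
  congr 1
  have h1 : ((ContinuousLinearMap.adjoint (mB A)) (EuclideanSpace.single i (1:ℝ))) j =
      ⟪EuclideanSpace.single j (1:ℝ), (ContinuousLinearMap.adjoint (mB A)) (EuclideanSpace.single i (1:ℝ))⟫ := by
    simp [EuclideanSpace.inner_single_left]
  rw [h1, ContinuousLinearMap.adjoint_inner_right]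
  simp [mB, EuclideanSpace.inner_single_right, Matrix.toLpLin_apply]

lemma id_second {n : ℕ} (hn : 1 ≤ n) {μ : Measure (EuclideanSpace ℝ (Fin n))} (hI : Isotropic μ id) 
    (B : EuclideanSpace ℝ (Fin n) →L[ℝ] EuclideanSpace ℝ (Fin n))
    (hB : ∑ i, ‖(ContinuousLinearMap.adjoint B) (EuclideanSpace.single i (1:ℝ))‖ ^ 2 = n) :
    ∫⁻ z, ENNReal.ofReal (‖((1 / √(n:ℝ)) • B) z‖ ^ 2) ∂μ = 1 := by
  have hn0 : (0:ℝ) < n := by exact_mod_cast hn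
  rw [← ofReal_integral_eq_lintegral_ofReal (T_int hI _) (Filter.Eventually.of_forall fun z => by positivity)]
  have e : ∀ z, ‖((1 / √(n:ℝ)) • B) z‖ ^ 2 = (1 / n) * ‖B z‖ ^ 2 := by
    intro z
    rw [_root_.smul_apply, norm_smul, mul_pow, Real.norm_eq_abs, sq_abs, div_pow, Real.sq_sqrt hn0.le, one_pow]
  simp_rw [e]
  rw [integral_const_mul, T_val hI, hB]
  field_simp
  simp

lemma mom_fin {n : ℕ} (hn : 1 ≤ n) {F : EuclideanSpace ℝ (Fin n) → ℝ≥0∞} (hF : LCD F)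
    (hI : Isotropic (volume.withDensity F) id) (j : ℕ) (w : EuclideanSpace ℝ (Fin n)) :
    Integrable (fun z => ⟪z, w⟫ ^ (2 * j)) (volume.withDensity F) := by
  have hp := hF.isProb
  have hn0 : (0:ℝ) < n := by exact_mod_cast hn
  have h2 := id_second hn hI (ContinuousLinearMap.id ℝ _) (by
    have : ContinuousLinearMap.adjoint (ContinuousLinearMap.id ℝ (EuclideanSpace ℝ (Fin n))) = ContinuousLinearMap.id ℝ _ :=
      ContinuousLinearMap.adjoint_id
    rw [this]
    simp)
  have hk := fin_mom hF h2 j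
  set N : EuclideanSpace ℝ (Fin n) → ℝ := fun z => ‖((1 / √(n:ℝ)) • ContinuousLinearMap.id ℝ (EuclideanSpace ℝ (Fin n))) z‖
  have hN : ∀ z, ‖z‖ = √n * N z := by
    intro z
    simp only [N]
    rw [_root_.smul_apply, norm_smul, Real.norm_eq_abs, abs_of_pos (by positivity)]
    simp only [ContinuousLinearMap.id_apply]
    field_simp
  have hNm : Continuous N := by simp only [N]; fun_prop
  have hNi : Integrable (fun z => N z ^ (2 ^ (j + 1))) (volume.withDensity F) := by
    refine ⟨by fun_prop, ?_⟩
    rw [hasFiniteIntegral_iff_ofReal (Filter.Eventually.of_forall fun z => by simp only [N]; positivity)]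
    exact lt_top_iff_ne_top.2 hk
  refine Integrable.mono' (((integrable_const (1:ℝ)).add hNi).const_mul ((√n * ‖w‖) ^ (2 * j))) (by fun_prop) ?_
  refine Filter.Eventually.of_forall fun z => ?_
  have hN0 : 0 ≤ N z := norm_nonneg _
  rw [norm_pow]
  have h1 : ‖⟪z, w⟫‖ ≤ (√n * ‖w‖) * N z := by
    refine (norm_inner_le_norm z w).trans_eq ?_
    rw [hN z]; ring
  calc ‖⟪z, w⟫‖ ^ (2 * j) ≤ ((√n * ‖w‖) * N z) ^ (2 * j) := by gcongr
    _ = (√n * ‖w‖) ^ (2 * j) * N z ^ (2 * j) := by rw [mul_pow]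
    _ ≤ (√n * ‖w‖) ^ (2 * j) * (1 + N z ^ (2 ^ (j + 1))) := by
        gcongr
        rcases le_total (N z) 1 with h | h
        · have := pow_le_one₀ (n := 2 * j) hN0 h
          have : 0 ≤ N z ^ (2 ^ (j + 1)) := by positivity
          linarith
        · have : N z ^ (2 * j) ≤ N z ^ (2 ^ (j + 1)) := by
            apply pow_le_pow_right₀ h
            have := Nat.lt_two_pow_self (n := j)
            rw [pow_succ]; omega
          linarith

lemma core_SU {n : ℕ} (hn : 1 ≤ n) {F : EuclideanSpace ℝ (Fin n) → ℝ≥0∞} (hF : LCD F)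
    (hI : Isotropic (volume.withDensity F) id) (α b : ℝ) (hα1 : 1 ≤ α) (hα2 : α ≤ 2)
    (hψ : IsPsiAlpha (volume.withDensity F) id α b) (A : Matrix (Fin n) (Fin n) ℝ) (hA : hsNorm A ^ 2 = n) :
    SU F ((1 / √(n:ℝ)) • mB A) (((n : ℝ) / (opNorm A ^ 2 * b ^ 2)) ^ (α/2)) α := by
  have hp := hF.isProb
  have hn0 : (0:ℝ) < n := by exact_mod_cast hn
  have hb : 0 < b := by
    have h := hψ 2 le_rfl (EuclideanSpace.single ⟨0, hn⟩ (1:ℝ))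
    have e : ∀ z : EuclideanSpace ℝ (Fin n), |⟪id z, EuclideanSpace.single ⟨0, hn⟩ (1:ℝ)⟫| ^ (2:ℝ) = ⟪z, EuclideanSpace.single ⟨0, hn⟩ (1:ℝ)⟫ ^ 2 := by
      intro z
      rw [Real.rpow_two, sq_abs]; rfl
    simp_rw [e] at h
    simp only [id] at h
    rw [iso_val hI] at h
    simp at h
    by_contra hb
    push Not at hb
    have : b * 2 ^ α⁻¹ ≤ 0 := mul_nonpos_of_nonpos_of_nonneg hb (by positivity)
    linarith
  have hop : 0 < opNorm A := by
    rcases (norm_nonneg (mB A)).eq_or_lt with h | h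
    · exfalso
      have h0 : mB A = 0 := norm_eq_zero.1 h.symm
      have := hs_sum A
      rw [h0, hA] at this
      simp at this
      linarith
    · exact h
  have hQ : 0 < (n : ℝ) / (opNorm A ^ 2 * b ^ 2) := by positivity
  refine ⟨hF, id_second hn hI (mB A) (by rw [hs_sum, hA]), ?_, hα1, hα2, by positivity⟩
  intro j hj y hy
  set w := (1 / √(n:ℝ)) • (ContinuousLinearMap.adjoint (mB A)) y with hw
  have hTw : ∀ z, ⟪((1 / √(n:ℝ)) • mB A) z, y⟫ = ⟪z, w⟫ := by
    intro z
    rw [_root_.smul_apply, real_inner_smul_left, hw, real_inner_smul_right, ContinuousLinearMap.adjoint_inner_right]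
  have hwn : ‖w‖ ≤ opNorm A / √n := by
    rw [hw, norm_smul, Real.norm_eq_abs, abs_of_pos (by positivity)]
    have h1 : ‖(ContinuousLinearMap.adjoint (mB A)) y‖ ≤ opNorm A * 1 := by
      refine (ContinuousLinearMap.le_opNorm _ _).trans ?_
      have : ‖ContinuousLinearMap.adjoint (mB A)‖ = opNorm A := LinearIsometryEquiv.norm_map _ _
      rw [this]
      gcongr
    calc _ ≤ 1 / √n * (opNorm A * 1) := by gcongr
      _ = _ := by ring
  have hev : ∀ a : ℝ, 0 ≤ a ^ (2 * j) := fun a => by rw [pow_mul]; positivity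
  simp_rw [hTw]
  rw [← ofReal_integral_eq_lintegral_ofReal (mom_fin hn hF hI j w) (Filter.Eventually.of_forall fun z => hev _),
    ← ENNReal.ofReal_pow (by positivity)]
  apply ENNReal.ofReal_le_ofReal
  have hj1 : (1:ℝ) ≤ j := by exact_mod_cast hj
  have h := hψ ((2 * j : ℕ) : ℝ) (by push_cast; linarith) w
  have e : ∀ z : EuclideanSpace ℝ (Fin n), |⟪id z, w⟫| ^ ((2 * j : ℕ) : ℝ) = ⟪z, w⟫ ^ (2 * j) := by
    intro z
    rw [Real.rpow_natCast, (even_two_mul j).pow_abs]; rfl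
  simp_rw [e] at h
  simp only [id] at h
  have hww : (∫ z, ⟪z, w⟫ ^ 2 ∂(volume.withDensity F)) ^ ((1:ℝ)/2) = ‖w‖ := by
    rw [iso_val hI, ← Real.sqrt_eq_rpow, Real.sqrt_sq (norm_nonneg _)]
  rw [hww] at h
  set I := ∫ z, ⟪z, w⟫ ^ (2 * j) ∂(volume.withDensity F) with hId
  have hI0 : 0 ≤ I := integral_nonneg fun z => hev _
  have hKK : ((((n : ℝ) / (opNorm A ^ 2 * b ^ 2)) ^ (α/2))) ^ (1 / α) = √n / (opNorm A * b) := by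
    rw [← Real.rpow_mul hQ.le, show α / 2 * (1 / α) = 1 / 2 by field_simp, ← Real.sqrt_eq_rpow,
      Real.sqrt_div hn0.le, ← mul_pow, Real.sqrt_sq (by positivity)]
  have hM : (((2 * j : ℕ) : ℝ) / (((n : ℝ) / (opNorm A ^ 2 * b ^ 2)) ^ (α/2))) ^ (1 / α) =
      b * ((2 * j : ℕ) : ℝ) ^ (1 / α) * (opNorm A / √n) := by
    rw [Real.div_rpow (by positivity) (by positivity), hKK]
    field_simp
  rw [hM]
  have h3 : I ^ (1 / ((2 * j : ℕ) : ℝ)) ≤ b * ((2 * j : ℕ) : ℝ) ^ (1 / α) * (opNorm A / √n) := by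
    refine h.trans ?_
    gcongr
  have h4 : I = (I ^ (1 / ((2 * j : ℕ) : ℝ))) ^ (2 * j) := by
    rw [one_div, Real.rpow_inv_natCast_pow hI0 (by omega)]
  rw [h4]
  gcongr

theorem core {n : ℕ} (hn : 1 ≤ n) {F : EuclideanSpace ℝ (Fin n) → ℝ≥0∞} (hF : LCD F)
    (hI : Isotropic (volume.withDensity F) id) (α b : ℝ) (hα1 : 1 ≤ α) (hα2 : α ≤ 2)
    (hψ : IsPsiAlpha (volume.withDensity F) id α b) (A : Matrix (Fin n) (Fin n) ℝ) (hA : hsNorm A ^ 2 = n)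
    (t : ℝ) (ht : 0 ≤ t) (ht1 : t < 1) :
    (volume.withDensity F) {z | ‖mApp A z‖ ≤ (1 - t) * Real.sqrt n} ≤
      ENNReal.ofReal (192 * Real.exp
        (-(0.00000000000000000000000000000000000000000001 * ((n : ℝ) / (opNorm A ^ 2 * b ^ 2)) ^ (α/2) *
          max (t ^ (2 + α)) (Real.log ((1/2) ^ 19 / (1 - t)))))) := by
  have hp := hF.isProb
  have hn0 : (0:ℝ) < n := by exact_mod_cast hn
  have S := core_SU hn hF hI α b hα1 hα2 hψ A hA
  set K := ((n : ℝ) / (opNorm A ^ 2 * b ^ 2)) ^ (α/2)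
  have hK := S.hK
  have hset : {z : EuclideanSpace ℝ (Fin n) | ‖mApp A z‖ ≤ (1 - t) * Real.sqrt n} = {z | ‖((1 / √(n:ℝ)) • mB A) z‖ ≤ 1 - t} := by
    ext z
    simp only [Set.mem_ofPred_eq]
    rw [_root_.smul_apply, norm_smul, Real.norm_eq_abs, abs_of_pos (by positivity), one_div, inv_mul_eq_div,
      div_le_iff₀ (by positivity)]
    rfl
  rw [hset]
  rcases le_total (Real.log ((1/2) ^ 19 / (1 - t))) (t ^ (2 + α)) with h | h
  · rw [max_eq_left h]
    refine (deviation S t ht ht1.le).trans ?_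
    apply ENNReal.ofReal_le_ofReal
    apply mul_le_mul_of_nonneg_left _ (by norm_num)
    apply Real.exp_le_exp.2
    have : 0 ≤ K * t ^ (2 + α) := by positivity
    norm_num
    nlinarith
  · rw [max_eq_right h]
    have ht0 : 0 ≤ t ^ (2 + α) := by positivity
    have h1t : 0 < 1 - t := by linarith
    have hle : 1 - t ≤ (1/2) ^ 19 := by
      by_contra hcon
      push Not at hcon
      have := Real.log_neg (x := (1/2) ^ 19 / (1 - t)) (by positivity) (by rw [div_lt_one h1t]; exact hcon)
      linarith
    have hint2 := T_int hI ((1 / √(n:ℝ)) • mB A)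
    have hidint2 := T_int hI (ContinuousLinearMap.id ℝ _)
    have hidint : Integrable (fun z : EuclideanSpace ℝ (Fin n) => z) (volume.withDensity F) := by
      refine Integrable.mono' ((integrable_const (1:ℝ)).add hidint2) (by fun_prop) (Filter.Eventually.of_forall fun z => ?_)
      simp only [ContinuousLinearMap.id_apply, Pi.add_apply]
      nlinarith [sq_nonneg (‖z‖ - 1)]
    have hintT := ((1 / √(n:ℝ)) • mB A).integrable_comp hidint
    have hc : ∫ z, ((1 / √(n:ℝ)) • mB A) z ∂(volume.withDensity F) = 0 := by
      rw [ContinuousLinearMap.integral_comp_comm _ hidint]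
      have := hI.1
      simp only [id] at this
      rw [this, map_zero]
    refine (small_ball S hintT hint2 hc (1 - t) h1t hle).trans ?_
    apply ENNReal.ofReal_le_ofReal
    gcongr
    norm_num

lemma law_lcd {n : ℕ} {f : EuclideanSpace ℝ (Fin n) → ℝ} (hf : IsLogConcaveFn f)
    (h1 : (volume.withDensity fun x => ENNReal.ofReal (f x)) Set.univ = 1) : LCD (lscReg f) := by
  refine ⟨lscReg_measurable f, lscReg_mid hf, ?_⟩
  rw [← withDensity_congr_ae (lscReg_ae hf), withDensity_apply _ MeasurableSet.univ] at h1
  simpa using h1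

/-- negative deviation (small-ball) estimate for `|AX|`. -/
theorem statement4 :
    ∃ c C c₂ : ℝ, 0 < c ∧ 0 < C ∧ 0 < c₂ ∧ c₂ < 1 ∧
      ∀ (n : ℕ) (Ω : Type) (_mΩ : MeasurableSpace Ω) (P : Measure Ω),
        IsProbabilityMeasure P →
        ∀ (X : Ω → EuclideanSpace ℝ (Fin n)) (f : EuclideanSpace ℝ (Fin n) → ℝ)
          (α b : ℝ) (A : Matrix (Fin n) (Fin n) ℝ),
          HasDensityFn P X f → IsLogConcaveFn f → Isotropic P X →
          1 ≤ α → α ≤ 2 → IsPsiAlpha P X α b →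
          hsNorm A ^ 2 = n →
          ∀ t : ℝ, 0 ≤ t → t < 1 →
            P {ω | ‖mApp A (X ω)‖ ≤ (1 - t) * Real.sqrt n} ≤
              ENNReal.ofReal (C * Real.exp
                (-(c * ((n : ℝ) / (opNorm A ^ 2 * b ^ 2)) ^ (α/2) *
                  max (t ^ (2 + α)) (Real.log (c₂ / (1 - t)))))) := by
  refine ⟨0.00000000000000000000000000000000000000000001, 192, (1/2) ^ 19, by norm_num, by norm_num, by norm_num, by norm_num, ?_⟩
  intro n Ω _ P hP X f α b A hX hf hI hα1 hα2 hψ hA t ht ht1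
  rcases Nat.eq_zero_or_pos n with hn | hn
  · subst hn
    have e : (((0:ℕ) : ℝ) / (opNorm A ^ 2 * b ^ 2)) ^ (α/2) = 0 := by
      rw [Nat.cast_zero, zero_div, Real.zero_rpow (by linarith)]
    rw [e]
    refine prob_le_one.trans ?_
    rw [ENNReal.one_le_ofReal]
    norm_num
  obtain ⟨hXm, hXl⟩ := hX
  have hmapP : IsProbabilityMeasure (Measure.map X P) := Measure.isProbabilityMeasure_map hXm.aemeasurable
  have hF : LCD (lscReg f) := law_lcd hf (by rw [← hXl]; exact measure_univ)
  have hlaw : Measure.map X P = volume.withDensity (lscReg f) := by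
    rw [hXl, withDensity_congr_ae (lscReg_ae hf)]
  have hI' : Isotropic (volume.withDensity (lscReg f)) id := by
    rw [← hlaw]
    constructor
    · rw [integral_map hXm.aemeasurable (by fun_prop)]
      exact hI.1
    · intro θ η
      rw [integral_map hXm.aemeasurable (by fun_prop)]
      exact hI.2 θ η
  have hψ' : IsPsiAlpha (volume.withDensity (lscReg f)) id α b := by
    rw [← hlaw]
    intro p hp y
    have hpm : Measurable fun z : EuclideanSpace ℝ (Fin n) => |⟪id z, y⟫| ^ p := by
      simp only [id]; fun_prop
    rw [integral_map hXm.aemeasurable hpm.aestronglyMeasurable, integral_map hXm.aemeasurable (by fun_prop)]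
    exact hψ p hp y
  have h := core hn hF hI' α b hα1 hα2 hψ' A hA t ht ht1
  rw [← hlaw] at h
  refine le_trans ?_ h
  exact Measure.le_map_apply hXm.aemeasurable {z | ‖mApp A z‖ ≤ (1 - t) * Real.sqrt n}
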